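/- arXiv:solv-int/9909002 — 5 statements merged into one kernel-verified Lean document; each statement's English description precedes it below -/
import Mathlib

section
/- Let 0 < γ < 2 and 0 < α < π, and let f : ℤ≥0 × ℤ≥0 → ℂ satisfy the cross-ratio equation (q) and the constraint (c) with parameter γ at every (n,m) (all denominators occurring being nonzero), with initial data f_{0,0} = 0, f_{1,0} = 1, f_{0,1} = e^{iα}. Then f is an immersion (interiors of convex hulls of adjacent elementary quadrilaterals are disjoint) if and only if there exists a sequence of angles α_n ∈ (0, π/2), n ≥ 0, with α_0 = α/2, such that f_{n,n+1} − f_{n,n} = e^{2iα_n}(f_{n+1,n} − f_{n,n}) for all n ≥ 0 and the sequence x_n = e^{iα_n} satisfies the discrete Painlevé equation (P) with parameter γ for all n ≥ 0. -/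
open Complex

noncomputable section

/-- Vertex set of the elementary quadrilateral at `(n,m)`. -/
def quadVerts (f : ℕ → ℕ → ℂ) (n m : ℕ) : Set ℂ :=
  {f n m, f (n+1) m, f (n+1) (m+1), f n (m+1)}

/-- Interior of the convex hull of the elementary quadrilateral at `(n,m)`. -/
def quadInt (f : ℕ → ℕ → ℂ) (n m : ℕ) : Set ℂ :=
  interior (convexHull ℝ (quadVerts f n m))

/-- `f` is an immersion: interiors of (convex hulls of) adjacent elementary
quadrilaterals are disjoint. -/
def IsImmersion (f : ℕ → ℕ → ℂ) : Prop :=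
  ∀ n m : ℕ,
    Disjoint (quadInt f n m) (quadInt f (n+1) m) ∧
    Disjoint (quadInt f n m) (quadInt f n (m+1))

/-- The cross-ratio equation (q). -/
def CrossRatioEq (f : ℕ → ℕ → ℂ) : Prop :=
  ∀ n m : ℕ,
    (f n m - f (n+1) m) * (f (n+1) (m+1) - f n (m+1)) =
      -((f (n+1) m - f (n+1) (m+1)) * (f n (m+1) - f n m))

/-- Nonvanishing of the denominators occurring in (q). -/
def QDenomNonzero (f : ℕ → ℕ → ℂ) : Prop :=
  ∀ n m : ℕ, f (n+1) m - f (n+1) (m+1) ≠ 0 ∧ f n (m+1) - f n m ≠ 0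

/-- Nonvanishing of the denominators occurring in (c). -/
def CDenomNonzero (f : ℕ → ℕ → ℂ) : Prop :=
  ∀ n m : ℕ, (n ≠ 0 → f (n+1) m - f (n-1) m ≠ 0) ∧ (m ≠ 0 → f n (m+1) - f n (m-1) ≠ 0)

/-- The constraint (c) with parameter `γ`; for `n = 0` (resp. `m = 0`) the
corresponding term is absent. -/
def ConstraintC (γ : ℂ) (f : ℕ → ℕ → ℂ) : Prop :=
  ∀ n m : ℕ,
    γ * f n m =
      (if n = 0 then 0 else
        2 * (n : ℂ) * ((f (n+1) m - f n m) * (f n m - f (n-1) m)) / (f (n+1) m - f (n-1) m)) +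
      (if m = 0 then 0 else
        2 * (m : ℂ) * ((f n (m+1) - f n m) * (f n m - f n (m-1))) / (f n (m+1) - f n (m-1)))

/-- The discrete Painlevé equation (P) with parameter `γ`: for `n = 0` the second
term on the left-hand side is absent (its coefficient `n` vanishes); all occurring
denominators are required to be nonzero. -/
def PainleveP (γ : ℂ) (x : ℕ → ℂ) : Prop :=
  ∀ n : ℕ,
    (Complex.I + x n * x (n+1) ≠ 0) ∧
    (n ≠ 0 → Complex.I + x (n-1) * x n ≠ 0) ∧
    ((n : ℂ) + 1) * (x n ^ 2 - 1) * ((x (n+1) - Complex.I * x n) / (Complex.I + x n * x (n+1))) -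
      (n : ℂ) * (x n ^ 2 + 1) * ((x (n-1) + Complex.I * x n) / (Complex.I + x (n-1) * x n)) =
    γ * x n

/-!
Writing the edges of `f` as `f (n + 1) m - f n m = g n m * g (n + 1) m` and
`f n (m + 1) - f n m = I * g n m * g n (m + 1)` turns (q) into the discrete Hirota equation for
`g`, whose solutions are determined by their values on the axes. Comparing these values with those
of the conjugated and transposed solutions shows that `g` is real where `n + m` is even and
unimodular where it is odd: the quadrilaterals are kites, right-angled at the odd vertices, and the
even values are signed radii of circles. Two adjacent kites share a leg at an odd vertex and are
disjoint iff their other legs there point in opposite directions, that is, iff the radii at the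
ends of these legs have the same sign; so `f` is an immersion iff all radii are positive.
Eliminating `f` from (c) gives `(n + 1) (r - l) / (r + l) + m (u - d) / (u + d) = γ - 1` for the
radii to the right, left, above and below of an odd vertex `(n + 1, m)`. Along the diagonal this
is (P), and since `|γ - 1| < 1` it propagates positivity from the diagonal to the whole quadrant.
-/

section

open scoped ComplexConjugate

variable {f g : ℕ → ℕ → ℂ}

/-! ### The Hirota equation -/

/-- The discrete Hirota equation, which expresses that the edges `g n m * g (n + 1) m` and
`I * g n m * g n (m + 1)` close up around every elementary square. -/
def IsHirota (g : ℕ → ℕ → ℂ) : Prop :=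
  ∀ n m, g (n + 1) m * (g n m + I * g (n + 1) (m + 1)) =
    g n (m + 1) * (g (n + 1) (m + 1) + I * g n m)

lemma hirota_corner_unique {a b c c' d : ℂ} (ha : a ≠ 0) (hb : b ≠ 0)
    (h : b * (a + I * c) = d * (c + I * a)) (h' : b * (a + I * c') = d * (c' + I * a)) :
    c = c' := by
  have hd : I * b - d ≠ 0 := by
    intro hd
    have : 2 * (a * b) = 0 := by linear_combination h - (c + I * a) * hd + a * b * I_sq
    simp [ha, hb] at this
  exact sub_eq_zero.mp ((mul_eq_zero.mp (by linear_combination h - h' :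
    (I * b - d) * (c - c') = 0)).resolve_left hd)

lemma IsHirota.eq_of_axes {g' : ℕ → ℕ → ℂ} (hg : IsHirota g) (hg' : IsHirota g')
    (h0 : ∀ n m, g n m ≠ 0) (hrow : ∀ n, g n 0 = g' n 0) (hcol : ∀ m, g 0 m = g' 0 m)
    (n m : ℕ) : g n m = g' n m := by
  induction m generalizing n with
  | zero => exact hrow n
  | succ m ihm =>
    induction n with
    | zero => exact hcol (m + 1)
    | succ n ihn =>
      have h' := hg' n m
      rw [← ihm, ← ihm, ← ihn] at h'
      exact hirota_corner_unique (h0 n m) (h0 (n + 1) m) (hg n m) h'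

lemma IsHirota.conj_swap (hg : IsHirota g) : IsHirota fun n m ↦ conj (g m n) := by
  intro n m
  have h := congrArg conj (hg m n)
  simp only [map_mul, map_add, conj_I] at h
  linear_combination -I * h + (conj (g m (n + 1)) * conj (g m n)
    - conj (g (m + 1) n) * conj (g (m + 1) (n + 1))) * I_sq

/-- The involution `w ↦ β / w` applied to the values of `g` at the odd vertices. -/
def oddInv (β : ℂ) (g : ℕ → ℕ → ℂ) (n m : ℕ) : ℂ :=
  if Even (n + m) then g n m else β / g n m

lemma oddInv_of_even (β : ℂ) {n m : ℕ} (h : Even (n + m)) : oddInv β g n m = g n m :=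
  if_pos h

lemma oddInv_of_odd (β : ℂ) {n m : ℕ} (h : Odd (n + m)) : oddInv β g n m = β / g n m :=
  if_neg (Nat.not_even_iff_odd.mpr h)

lemma IsHirota.oddInv_swap (hg : IsHirota g) (h0 : ∀ n m, g n m ≠ 0) (β : ℂ) :
    IsHirota fun n m ↦ oddInv β g m n := by
  intro n m
  have hb := h0 (m + 1) n
  have hd := h0 m (n + 1)
  beta_reduce
  rcases Nat.even_or_odd (m + n) with h | h
  · rw [oddInv_of_even β h, oddInv_of_even β (by grind : Even (m + 1 + (n + 1))),
      oddInv_of_odd β (by grind : Odd (m + (n + 1))),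
      oddInv_of_odd β (by grind : Odd (m + 1 + n))]
    field_simp
    linear_combination β * hg m n
  · have ha := h0 m n
    have hc := h0 (m + 1) (n + 1)
    rw [oddInv_of_odd β h, oddInv_of_odd β (by grind : Odd (m + 1 + (n + 1))),
      oddInv_of_even β (by grind : Even (m + (n + 1))),
      oddInv_of_even β (by grind : Even (m + 1 + n))]
    field_simp
    linear_combination -β * hg m n

/-! ### Factorization of the edges -/

/-- `g` factorizes the edges of `f`. The factor `I` on the vertical edges turns the cross-ratio
equation for `f` into the mere existence of `g`. -/
structure IsEdgeFactor (f g : ℕ → ℕ → ℂ) : Prop where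
  horiz : ∀ n m, f (n + 1) m - f n m = g n m * g (n + 1) m
  vert : ∀ n m, f n (m + 1) - f n m = I * g n m * g n (m + 1)
  ne_zero : ∀ n m, g n m ≠ 0

/-- The edge factor of `f` with value `1` at the origin, read off first along the horizontal axis
and then along the vertical lines. -/
def edgeFactor (f : ℕ → ℕ → ℂ) : ℕ → ℕ → ℂ
  | 0, 0 => 1
  | n + 1, 0 => (f (n + 1) 0 - f n 0) / edgeFactor f n 0
  | n, m + 1 => (f n (m + 1) - f n m) / (I * edgeFactor f n m)

lemma CrossRatioEq.horiz_ne_zero (hq : CrossRatioEq f) (hqd : QDenomNonzero f) (n m : ℕ) :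
    f (n + 1) m - f n m ≠ 0 := by
  intro h
  have hprod := hq n m
  rw [← neg_sub (f (n + 1) m), h, neg_zero, zero_mul, zero_eq_neg] at hprod
  exact mul_ne_zero (hqd n m).1 (hqd n m).2 hprod

lemma edgeFactor_ne_zero (hq : CrossRatioEq f) (hqd : QDenomNonzero f) (n m : ℕ) :
    edgeFactor f n m ≠ 0 := by
  induction m with
  | zero =>
    induction n with
    | zero => simp [edgeFactor]
    | succ n ih => simpa [edgeFactor, ih] using hq.horiz_ne_zero hqd n 0
  | succ m ih => simpa [edgeFactor, ih] using (hqd n m).2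

lemma isEdgeFactor_edgeFactor (hq : CrossRatioEq f) (hqd : QDenomNonzero f) :
    IsEdgeFactor f (edgeFactor f) := by
  have hne := edgeFactor_ne_zero hq hqd
  have vert : ∀ n m, f n (m + 1) - f n m = I * edgeFactor f n m * edgeFactor f n (m + 1) := by
    intro n m
    rw [edgeFactor, mul_div_cancel₀ _ (mul_ne_zero I_ne_zero (hne n m))]
  refine ⟨fun n m ↦ ?_, vert, hne⟩
  induction m with
  | zero => rw [edgeFactor, mul_div_cancel₀ _ (hne n 0)]
  | succ m ih =>
    have hcross := hq n m
    apply mul_left_cancel₀ (mul_ne_zero (hne n m) (hne (n + 1) m))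
    linear_combination -hcross
      - (f (n + 1) (m + 1) - f n (m + 1)) * ih
      - (f n (m + 1) - f n m) * vert (n + 1) m
      - I * edgeFactor f (n + 1) m * edgeFactor f (n + 1) (m + 1) * vert n m
      - edgeFactor f n m * edgeFactor f (n + 1) m * edgeFactor f n (m + 1)
        * edgeFactor f (n + 1) (m + 1) * I_sq

namespace IsEdgeFactor

lemma isHirota (F : IsEdgeFactor f g) : IsHirota g := by
  intro n m
  linear_combination F.vert n m + F.horiz n (m + 1) - F.horiz n m - F.vert (n + 1) m

lemma horiz_add_ne_zero (F : IsEdgeFactor f g) (hcd : CDenomNonzero f) (n m : ℕ) :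
    g (n + 2) m + g n m ≠ 0 := by
  intro h
  refine (hcd (n + 1) m).1 n.succ_ne_zero ?_
  rw [Nat.add_sub_cancel]
  linear_combination F.horiz (n + 1) m + F.horiz n m + g (n + 1) m * h

lemma vert_add_ne_zero (F : IsEdgeFactor f g) (hcd : CDenomNonzero f) (n m : ℕ) :
    g n (m + 2) + g n m ≠ 0 := by
  intro h
  refine (hcd n (m + 1)).2 m.succ_ne_zero ?_
  rw [Nat.add_sub_cancel]
  linear_combination F.vert n (m + 1) + F.vert n m + I * g n (m + 1) * h

end IsEdgeFactor

/-- Half the harmonic mean of `x` and `y`, in which the terms of the constraint (c) are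
expressed. -/
def parallelSum (x y : ℂ) : ℂ := x * y / (x + y)

lemma mul_mul_div_eq_parallelSum {t : ℂ} (ht : t ≠ 0) (x y : ℂ) :
    t * x * (t * y) / (t * x + t * y) = t * parallelSum x y := by
  rw [parallelSum, ← mul_add, mul_assoc, mul_div_mul_left _ _ ht, mul_left_comm, mul_div_assoc]

/-- On the axes the truncated predecessor `0 - 1` is harmless, as its coefficient vanishes. -/
lemma IsEdgeFactor.constraint {γ : ℂ} (F : IsEdgeFactor f g) (hc : ConstraintC γ f) (n m : ℕ) :
    γ * f n m = g n m * (2 * n * parallelSum (g (n + 1) m) (g (n - 1) m) +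
      I * (2 * m * parallelSum (g n (m + 1)) (g n (m - 1)))) := by
  rw [hc n m, mul_add]
  congr 1
  · rcases n with _ | n
    · simp
    · rw [if_neg n.succ_ne_zero, Nat.add_sub_cancel,
        show f (n + 1 + 1) m - f n m = f (n + 1 + 1) m - f (n + 1) m + (f (n + 1) m - f n m) by
          ring, F.horiz, F.horiz, mul_comm (g n m), mul_div_assoc,
        mul_mul_div_eq_parallelSum (F.ne_zero _ _)]
      ring
  · rcases m with _ | m
    · simp
    · rw [if_neg m.succ_ne_zero, Nat.add_sub_cancel,
        show f n (m + 1 + 1) - f n m = f n (m + 1 + 1) - f n (m + 1) + (f n (m + 1) - f n m) by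
          ring, F.vert, F.vert, mul_right_comm I (g n m), mul_div_assoc,
        mul_mul_div_eq_parallelSum (mul_ne_zero I_ne_zero (F.ne_zero _ _))]
      ring

/-! ### Values on the axes -/

/-- The values of the edge factor at the even vertices of an axis, relative to the value at the
origin: the solution of `(2k + 2 - γ) r (k + 1) = (2k + γ) r k` with `r 0 = 1`. -/
def axisRadius (γ : ℝ) (k : ℕ) : ℝ := ∏ i ∈ Finset.range k, (2 * i + γ) / (2 * i + 2 - γ)

lemma axisRadius_succ (γ : ℝ) (k : ℕ) :
    axisRadius γ (k + 1) = axisRadius γ k * ((2 * k + γ) / (2 * k + 2 - γ)) :=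
  Finset.prod_range_succ _ _

/-- Two consecutive instances of the constraint along an axis, whose edges are
`c * s n * s (n + 1)`; the invariant `γ * F n = n * c * s n * s (n + 1)` at even `n` decouples
them. -/
lemma axis_step {γ c : ℂ} (hc : c ≠ 0) {F s : ℕ → ℂ} (hs : ∀ n, s n ≠ 0)
    (hF : ∀ n, F (n + 1) - F n = c * s n * s (n + 1))
    (hcon : ∀ n, γ * F (n + 1) * (s (n + 2) + s n) =
      2 * (n + 1) * c * s n * s (n + 1) * s (n + 2))
    {n : ℕ} (hn : γ * F n = n * c * s n * s (n + 1)) :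
    (n + 2 - γ) * s (n + 2) = (n + γ) * s n ∧ s (n + 3) = s (n + 1) ∧
      γ * F (n + 2) = (n + 2) * c * s (n + 2) * s (n + 3) := by
  have hF1 : γ * F (n + 1) = (n + γ) * c * s n * s (n + 1) := by
    linear_combination γ * hF n + hn
  have even_step : (n + 2 - γ) * s (n + 2) = (n + γ) * s n := by
    apply mul_left_cancel₀ (mul_ne_zero (mul_ne_zero hc (hs n)) (hs (n + 1)))
    linear_combination (s (n + 2) + s n) * hF1 - hcon n
  have hF2 : γ * F (n + 2) = (n + 2) * c * s (n + 1) * s (n + 2) := by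
    linear_combination γ * hF (n + 1) + hF1 - c * s (n + 1) * even_step
  have odd_step : s (n + 3) = s (n + 1) := by
    have h := hcon (n + 1)
    push_cast at h
    apply mul_left_cancel₀ (mul_ne_zero (mul_ne_zero (mul_ne_zero hc (hs (n + 1)))
      (hs (n + 2))) (by exact_mod_cast (n + 1).succ_ne_zero : ((n : ℂ) + 2) ≠ 0))
    linear_combination (s (n + 3) + s (n + 1)) * hF2 - h
  exact ⟨even_step, odd_step, by rw [hF2, odd_step]; ring⟩

lemma axis_values {γ : ℝ} (hγ : γ < 2) {c : ℂ} (hc : c ≠ 0) {F s : ℕ → ℂ}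
    (h0 : F 0 = 0) (hs : ∀ n, s n ≠ 0) (hF : ∀ n, F (n + 1) - F n = c * s n * s (n + 1))
    (hcon : ∀ n, γ * F (n + 1) * (s (n + 2) + s n) =
      2 * (n + 1) * c * s n * s (n + 1) * s (n + 2)) (k : ℕ) :
    s (2 * k) = axisRadius γ k * s 0 ∧ s (2 * k + 1) = s 1 := by
  suffices h : γ * F (2 * k) = (2 * k : ℕ) * c * s (2 * k) * s (2 * k + 1) ∧
      s (2 * k) = axisRadius γ k * s 0 ∧ s (2 * k + 1) = s 1 from h.2
  induction k with
  | zero => simp [h0, axisRadius]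
  | succ k ih =>
    obtain ⟨hfirst, heven, hodd⟩ := ih
    obtain ⟨even_step, odd_step, hnext⟩ := axis_step hc hs hF hcon hfirst
    have hkγ : (2 * k + 2 - γ : ℂ) ≠ 0 := by
      have : (2 * k + 2 - γ : ℝ) ≠ 0 := by have := k.cast_nonneg (α := ℝ); linarith
      exact_mod_cast this
    refine ⟨by rw [mul_add]; exact_mod_cast hnext, ?_, odd_step.trans hodd⟩
    push_cast [axisRadius_succ, mul_add, heven] at even_step ⊢
    rw [← mul_div_assoc, div_mul_eq_mul_div, eq_div_iff hkγ]
    linear_combination even_step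

section Axes

variable {γ : ℝ} (F : IsEdgeFactor f g) (hc : ConstraintC γ f) (hcd : CDenomNonzero f)
include F hc hcd

lemma IsEdgeFactor.horiz_axis_values (hγ : γ < 2) (h0 : f 0 0 = 0) (k : ℕ) :
    g (2 * k) 0 = axisRadius γ k * g 0 0 ∧ g (2 * k + 1) 0 = g 1 0 := by
  refine axis_values hγ one_ne_zero (F := (f · 0)) (s := (g · 0)) h0 (F.ne_zero · 0)
    (fun n ↦ by rw [F.horiz, one_mul]) (fun n ↦ ?_) k
  have h := F.constraint hc (n + 1) 0
  have hne := F.horiz_add_ne_zero hcd n 0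
  rw [parallelSum, Nat.add_sub_cancel] at h
  rw [h]
  field_simp
  push_cast
  ring

lemma IsEdgeFactor.vert_axis_values (hγ : γ < 2) (h0 : f 0 0 = 0) (k : ℕ) :
    g 0 (2 * k) = axisRadius γ k * g 0 0 ∧ g 0 (2 * k + 1) = g 0 1 := by
  refine axis_values hγ I_ne_zero (F := f 0) (s := g 0) h0 (F.ne_zero 0)
    (fun n ↦ F.vert 0 n) (fun n ↦ ?_) k
  have h := F.constraint hc 0 (n + 1)
  have hne := F.vert_add_ne_zero hcd 0 n
  rw [parallelSum, parallelSum, Nat.add_sub_cancel] at h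
  rw [h]
  field_simp
  push_cast
  ring

end Axes

/-! ### Circle packings -/

/-- An edge factor `g` of `f` that makes the elementary quadrilaterals kites with right angles at
the odd vertices: `g n m` is the signed radius of a circle centred at `f n m` if `n + m` is even,
and the unit direction of a tangent at the intersection point `f n m` if `n + m` is odd. -/
structure IsCircleFactor (f g : ℕ → ℕ → ℂ) : Prop extends IsEdgeFactor f g where
  real : ∀ {n m}, Even (n + m) → ((g n m).re : ℂ) = g n m
  unit : ∀ {n m}, Odd (n + m) → ‖g n m‖ = 1

section CircleFactor

variable {γ : ℝ} (F : IsEdgeFactor f g) (hγ : γ < 2) (hc : ConstraintC γ f)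
  (hcd : CDenomNonzero f) (h0 : f 0 0 = 0)
include F hγ hc hcd h0

lemma IsEdgeFactor.isCircleFactor (hg0 : g 0 0 = 1) (hg1 : ‖g 1 0‖ = 1) (hg2 : ‖g 0 1‖ = 1) :
    IsCircleFactor f g := by
  have hconj : ∀ n m, g n m = oddInv 1 (fun n m ↦ conj (g m n)) m n := by
    have hinv {z : ℂ} (hz : ‖z‖ = 1) : z = 1 / conj z := by
      rw [eq_div_iff (by simp [← norm_ne_zero_iff, hz]), mul_conj']
      simp [hz]
    refine F.isHirota.eq_of_axes
      (F.isHirota.conj_swap.oddInv_swap (fun n m ↦ by simpa using F.ne_zero m n) 1)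
      F.ne_zero (fun n ↦ ?_) (fun n ↦ ?_)
    · have hax := F.horiz_axis_values hc hcd hγ h0
      rcases n.even_or_odd' with ⟨k, rfl | rfl⟩
      · rw [oddInv_of_even _ (by simp), (hax k).1, hg0]
        simp
      · rw [oddInv_of_odd _ (by simp), (hax k).2]
        exact hinv hg1
    · have hax := F.vert_axis_values hc hcd hγ h0
      rcases n.even_or_odd' with ⟨k, rfl | rfl⟩
      · rw [oddInv_of_even _ (by simp), (hax k).1, hg0]
        simp
      · rw [oddInv_of_odd _ (by simp), (hax k).2]
        exact hinv hg2
  refine ⟨F, fun {n m} h ↦ ?_, fun {n m} h ↦ ?_⟩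
  · have := hconj n m
    rw [oddInv_of_even _ (add_comm n m ▸ h)] at this
    exact conj_eq_iff_re.mp this.symm
  · have := hconj n m
    rw [oddInv_of_odd _ (add_comm n m ▸ h), eq_div_iff (by simpa using F.ne_zero n m),
      mul_conj'] at this
    exact (pow_eq_one_iff_of_nonneg (norm_nonneg _) two_ne_zero).mp (by exact_mod_cast this)

lemma IsEdgeFactor.eq_oddInv_swap (n m : ℕ) :
    g n m = oddInv (g 1 0 * g 0 1) g m n := by
  have hrow := F.horiz_axis_values hc hcd hγ h0
  have hcol := F.vert_axis_values hc hcd hγ h0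
  refine F.isHirota.eq_of_axes (F.isHirota.oddInv_swap F.ne_zero _) F.ne_zero
    (fun n ↦ ?_) (fun n ↦ ?_) n m
  all_goals rcases n.even_or_odd' with ⟨k, rfl | rfl⟩
  · rw [oddInv_of_even _ (by simp), (hrow k).1, (hcol k).1]
  · rw [oddInv_of_odd _ (by simp), (hrow k).2, (hcol k).2, mul_div_cancel_right₀ _ (F.ne_zero 0 1)]
  · rw [oddInv_of_even _ (by simp), (hrow k).1, (hcol k).1]
  · rw [oddInv_of_odd _ (by simp), (hrow k).2, (hcol k).2, mul_div_cancel_left₀ _ (F.ne_zero 1 0)]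

lemma IsEdgeFactor.mul_swap_of_odd {n m : ℕ} (h : Odd (n + m)) :
    g n m * g m n = g 1 0 * g 0 1 := by
  rw [F.eq_oddInv_swap hγ hc hcd h0 n, oddInv_of_odd _ (by rwa [add_comm]),
    div_mul_cancel₀ _ (F.ne_zero m n)]

end CircleFactor

/-! ### Kites sharing a leg -/

lemma disjoint_interior_convexHull_of_separated {E : Type*} [NormedAddCommGroup E]
    [NormedSpace ℝ E] {φ : E →L[ℝ] ℝ} (hφ : φ ≠ 0) {A B : Set E} {c : ℝ}
    (hA : ∀ z ∈ A, c ≤ φ z) (hB : ∀ z ∈ B, φ z ≤ c) :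
    Disjoint (interior (convexHull ℝ A)) (interior (convexHull ℝ B)) := by
  have strict {S : Set E} {t : Set ℝ} (ht : Convex ℝ t) (hS : S ⊆ φ ⁻¹' t) :
      interior (convexHull ℝ S) ⊆ φ ⁻¹' interior t :=
    (interior_mono (convexHull_min hS (ht.linear_preimage φ.toLinearMap))).trans
      (φ.isOpenMap_of_ne_zero hφ).interior_preimage_subset_preimage_interior
  refine Set.disjoint_left.mpr fun z hzA hzB ↦ ?_
  have hlt := strict (convex_Ici c) hA hzA
  have hgt := strict (convex_Iic c) hB hzB
  rw [Set.mem_preimage, interior_Ici, Set.mem_Ioi] at hlt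
  rw [Set.mem_preimage, interior_Iic, Set.mem_Iio] at hgt
  exact lt_asymm hlt hgt

lemma interior_convexHull_triangle_nonempty {p e : ℂ} (he : e ≠ 0) {a b : ℝ} (ha : a ≠ 0)
    (hb : b ≠ 0) : (interior (convexHull ℝ {p, p + a * e, p + b * (I * e)})).Nonempty := by
  rw [interior_convexHull_nonempty_iff_affineSpan_eq_top, eq_top_iff]
  rintro z -
  set T : AffineSubspace ℝ ℂ := affineSpan ℝ {p, p + a * e, p + b * (I * e)}
  have hp : p ∈ T := subset_affineSpan ℝ _ (by simp)
  have fst_mem : a * e ∈ T.direction := by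
    simpa using T.vsub_mem_direction (subset_affineSpan ℝ _ (by simp) : p + a * e ∈ T) hp
  have snd_mem : b * (I * e) ∈ T.direction := by
    simpa using T.vsub_mem_direction (subset_affineSpan ℝ _ (by simp) : p + b * (I * e) ∈ T) hp
  have hz : z =
      (((z - p) / e).re / a) • (a * e) + (((z - p) / e).im / b) • (b * (I * e)) + p := by
    have ha' : (a : ℂ) ≠ 0 := mod_cast ha
    have hb' : (b : ℂ) ≠ 0 := mod_cast hb
    have hre := re_add_im ((z - p) / e)
    rw [eq_div_iff he] at hre
    simp only [real_smul, ofReal_div]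
    field_simp
    linear_combination -hre
  rw [hz]
  exact T.vadd_mem_of_mem_direction
    (add_mem (T.direction.smul_mem _ fst_mem) (T.direction.smul_mem _ snd_mem)) hp

/-- The points of `S` lie in the right-angled corner at `p` whose legs `a * e` and `b * (I * e)`
end at points of `S`. -/
structure IsRightCorner (S : Set ℂ) (p e : ℂ) (a b : ℝ) : Prop where
  vertex_mem : p ∈ S
  fst_mem : p + a * e ∈ S
  snd_mem : p + b * (I * e) ∈ S
  fst_nonneg : ∀ z ∈ S, 0 ≤ a * ((z - p) * conj e).re
  snd_nonneg : ∀ z ∈ S, 0 ≤ b * ((z - p) * conj e).im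

namespace IsRightCorner

variable {A B : Set ℂ} {p e : ℂ} {a a' b : ℝ}

lemma rotate (h : IsRightCorner A p e a b) : IsRightCorner A p (I * e) b (-a) where
  vertex_mem := h.vertex_mem
  fst_mem := h.snd_mem
  snd_mem := by
    convert h.fst_mem using 2
    push_cast
    linear_combination -a * e * I_sq
  fst_nonneg z hz := by
    convert h.snd_nonneg z hz using 2
    simp
    ring
  snd_nonneg z hz := by
    convert h.fst_nonneg z hz using 1
    simp
    ring

lemma disjoint_of_neg (hA : IsRightCorner A p e a b) (hB : IsRightCorner B p e a' b) (he : e ≠ 0)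
    (h : a * a' < 0) : Disjoint (interior (convexHull ℝ A)) (interior (convexHull ℝ B)) := by
  let φ : ℂ →L[ℝ] ℝ := a • reCLM.comp (ContinuousLinearMap.mul ℝ ℂ (conj e))
  have hφ (z : ℂ) : φ z - φ p = a * ((z - p) * conj e).re := by
    simp [φ]
    ring
  have hφ0 : φ ≠ 0 := by
    intro h0
    have h1 : a * normSq e = 0 := by
      have := hφ (p + e)
      simpa [h0, mul_conj] using this.symm
    exact (mul_ne_zero (left_ne_zero_of_mul h.ne) (normSq_pos.mpr he).ne') h1
  refine disjoint_interior_convexHull_of_separated hφ0 (c := φ p) (fun z hz ↦ ?_) (fun z hz ↦ ?_)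
  · linarith [hA.fst_nonneg z hz, hφ z]
  · have hle : (φ z - φ p) * a' ^ 2 ≤ 0 := by
      rw [hφ, show a * ((z - p) * conj e).re * a' ^ 2 = a * a' * (a' * ((z - p) * conj e).re) by
        ring]
      exact mul_nonpos_of_nonpos_of_nonneg h.le (hB.fst_nonneg z hz)
    exact sub_nonpos.mp (nonpos_of_mul_nonpos_left hle
      (sq_pos_iff.mpr (right_ne_zero_of_mul h.ne)))

lemma not_disjoint_of_pos (hA : IsRightCorner A p e a b) (hB : IsRightCorner B p e a' b)
    (he : e ≠ 0) (hb : b ≠ 0) (h : 0 < a * a') :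
    ¬ Disjoint (interior (convexHull ℝ A)) (interior (convexHull ℝ B)) := by
  have triangle_subset {S : Set ℂ} {s t : ℝ} (hS : IsRightCorner S p e s b)
      (ht : t ∈ Set.Icc (0 : ℝ) 1) : interior (convexHull ℝ {p, p + (t * s : ℝ) * e,
        p + b * (I * e)}) ⊆ interior (convexHull ℝ S) := by
    refine interior_mono (convexHull_min ?_ (convex_convexHull ℝ S))
    have hp := subset_convexHull ℝ S hS.vertex_mem
    rintro z (rfl | rfl | rfl)
    · exact hp
    · convert (convex_convexHull ℝ S).add_smul_mem hp (subset_convexHull ℝ S hS.fst_mem) ht using 2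
      simp [mul_assoc]
    · exact subset_convexHull ℝ S hS.snd_mem
  have ha : a ≠ 0 := left_ne_zero_of_mul h.ne'
  have hD : 0 < a ^ 2 + a' ^ 2 := by positivity
  have hs : a * a' / (a ^ 2 + a' ^ 2) ∈ Set.Icc (0 : ℝ) 1 :=
    ⟨by positivity, (div_le_one hD).mpr (by nlinarith)⟩
  have ht : a ^ 2 / (a ^ 2 + a' ^ 2) ∈ Set.Icc (0 : ℝ) 1 :=
    ⟨by positivity, (div_le_one hD).mpr (by nlinarith)⟩
  have hst : a * a' / (a ^ 2 + a' ^ 2) * a = a ^ 2 / (a ^ 2 + a' ^ 2) * a' := by ring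
  have hne : a * a' / (a ^ 2 + a' ^ 2) * a ≠ 0 := by positivity
  obtain ⟨z, hz⟩ := interior_convexHull_triangle_nonempty (p := p) he hne hb
  exact Set.not_disjoint_iff.mpr ⟨z, triangle_subset hA hs hz, triangle_subset hB ht (hst ▸ hz)⟩

lemma disjoint_iff (hA : IsRightCorner A p e a b) (hB : IsRightCorner B p e a' b) (he : e ≠ 0)
    (ha : a ≠ 0) (ha' : a' ≠ 0) (hb : b ≠ 0) :
    Disjoint (interior (convexHull ℝ A)) (interior (convexHull ℝ B)) ↔ a * a' < 0 := by
  refine ⟨fun h ↦ ?_, hA.disjoint_of_neg hB he⟩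
  contrapose! h
  exact hA.not_disjoint_of_pos hB he hb (h.lt_of_ne' (mul_ne_zero ha ha'))

end IsRightCorner

lemma isRightCorner_of_kite {p q w q' e e' : ℂ} {a b : ℝ} (he : ‖e‖ = 1) (he' : ‖e'‖ = 1)
    (hq : q = p + a * e) (hq' : q' = p + b * (I * e)) (hw : w = q + a * (I * e'))
    (hw' : w = q' + b * e') : IsRightCorner {p, q, w, q'} p e a b := by
  have hee : e * conj e = 1 := by simp [mul_conj', he]
  have him : |(e' * conj e).im| ≤ 1 := by simpa [he, he'] using abs_im_le_norm (e' * conj e)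
  obtain ⟨hlow, hup⟩ := abs_le.mp him
  have q_fst : (q - p) * conj e = a := by rw [hq]; linear_combination a * hee
  have q_snd : (q' - p) * conj e = b * I := by rw [hq']; linear_combination b * I * hee
  have w_fst : (w - p) * conj e = a * (1 + I * (e' * conj e)) := by
    rw [hw, hq]; linear_combination a * hee
  have w_snd : (w - p) * conj e = b * (I + e' * conj e) := by
    rw [hw', hq']; linear_combination b * I * hee
  refine ⟨by simp, by simp [hq], by simp [hq'], ?_, ?_⟩
  · rintro z (rfl | rfl | rfl | rfl)
    · simp
    · simp [q_fst, mul_self_nonneg]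
    · rw [w_fst, re_ofReal_mul, ← mul_assoc, add_re, one_re, I_mul_re]
      exact mul_nonneg (mul_self_nonneg a) (by linarith)
    · simp [q_snd]
  · rintro z (rfl | rfl | rfl | rfl)
    · simp
    · simp [q_fst]
    · rw [w_snd, im_ofReal_mul, ← mul_assoc, add_im, I_im]
      exact mul_nonneg (mul_self_nonneg b) (by linarith)
    · simp [q_snd, mul_self_nonneg]

namespace IsCircleFactor

lemma re_ne_zero (C : IsCircleFactor f g) {n m : ℕ} (h : Even (n + m)) : (g n m).re ≠ 0 := by
  have := C.ne_zero n m
  rw [← C.real h] at this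
  exact mod_cast this

lemma isRightCorner_lower_left (C : IsCircleFactor f g) {n m : ℕ} (h : Odd (n + m)) :
    IsRightCorner (quadVerts f n m) (f n m) (g n m) (g (n + 1) m).re (g n (m + 1)).re := by
  have hright := C.real (by grind : Even (n + 1 + m))
  have hup := C.real (by grind : Even (n + (m + 1)))
  refine isRightCorner_of_kite (C.unit h) (C.unit (by grind : Odd (n + 1 + (m + 1)))) ?_ ?_ ?_ ?_
  all_goals simp only [hright, hup]
  · linear_combination C.horiz n m
  · linear_combination C.vert n m
  · linear_combination C.vert (n + 1) m
  · linear_combination C.horiz n (m + 1)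

lemma isRightCorner_lower_right (C : IsCircleFactor f g) {n m : ℕ} (h : Even (n + m)) :
    IsRightCorner (quadVerts f n m) (f (n + 1) m) (g (n + 1) m) (-(g n m).re)
      (g (n + 1) (m + 1)).re := by
  have hset : quadVerts f n m = {f (n + 1) m, f n m, f n (m + 1), f (n + 1) (m + 1)} := by
    grind [quadVerts]
  rw [hset]
  have hdiag := C.real (by grind : Even (n + 1 + (m + 1)))
  refine isRightCorner_of_kite (e' := -g n (m + 1)) (C.unit (by grind))
    (by rw [norm_neg, C.unit (by grind)]) ?_ ?_ ?_ ?_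
  all_goals simp only [ofReal_neg, C.real h, hdiag]
  · linear_combination -C.horiz n m
  · linear_combination C.vert (n + 1) m
  · linear_combination C.vert n m
  · linear_combination -C.horiz n (m + 1)

lemma isRightCorner_upper_right (C : IsCircleFactor f g) {n m : ℕ} (h : Odd (n + m)) :
    IsRightCorner (quadVerts f n m) (f (n + 1) (m + 1)) (g (n + 1) (m + 1))
      (-(g n (m + 1)).re) (-(g (n + 1) m).re) := by
  have hset : quadVerts f n m = {f (n + 1) (m + 1), f n (m + 1), f n m, f (n + 1) m} := by
    grind [quadVerts]
  rw [hset]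
  have hright := C.real (by grind : Even (n + 1 + m))
  have hup := C.real (by grind : Even (n + (m + 1)))
  refine isRightCorner_of_kite (e' := g n m) (C.unit (by grind)) (C.unit h) ?_ ?_ ?_ ?_
  all_goals simp only [ofReal_neg, hright, hup]
  · linear_combination -C.horiz n (m + 1)
  · linear_combination -C.vert (n + 1) m
  · linear_combination -C.vert n m
  · linear_combination -C.horiz n m

lemma isRightCorner_upper_left (C : IsCircleFactor f g) {n m : ℕ} (h : Even (n + m)) :
    IsRightCorner (quadVerts f n m) (f n (m + 1)) (g n (m + 1)) (g (n + 1) (m + 1)).re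
      (-(g n m).re) := by
  have hset : quadVerts f n m = {f n (m + 1), f (n + 1) (m + 1), f (n + 1) m, f n m} := by
    grind [quadVerts]
  rw [hset]
  have hdiag := C.real (by grind : Even (n + 1 + (m + 1)))
  refine isRightCorner_of_kite (e' := -g (n + 1) m) (C.unit (by grind))
    (by rw [norm_neg, C.unit (by grind)]) ?_ ?_ ?_ ?_
  all_goals simp only [ofReal_neg, C.real h, hdiag]
  · linear_combination C.horiz n (m + 1)
  · linear_combination -C.vert n m
  · linear_combination -C.vert (n + 1) m
  · linear_combination C.horiz n m

lemma disjoint_right_iff_of_even (C : IsCircleFactor f g) {n m : ℕ} (h : Even (n + m)) :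
    Disjoint (quadInt f n m) (quadInt f (n + 1) m) ↔ 0 < (g n m).re * (g (n + 2) m).re := by
  rw [← neg_lt_zero, ← neg_mul]
  exact (C.isRightCorner_lower_right h).disjoint_iff (C.isRightCorner_lower_left (by grind))
    (C.ne_zero _ _) (neg_ne_zero.mpr (C.re_ne_zero h)) (C.re_ne_zero (by grind))
    (C.re_ne_zero (by grind))

lemma disjoint_up_iff_of_even (C : IsCircleFactor f g) {n m : ℕ} (h : Even (n + m)) :
    Disjoint (quadInt f n m) (quadInt f n (m + 1)) ↔ 0 < (g n m).re * (g n (m + 2)).re := by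
  rw [← neg_lt_zero, ← neg_mul]
  exact (C.isRightCorner_upper_left h).rotate.disjoint_iff
    (C.isRightCorner_lower_left (by grind)).rotate (mul_ne_zero I_ne_zero (C.ne_zero _ _))
    (neg_ne_zero.mpr (C.re_ne_zero h)) (C.re_ne_zero (by grind))
    (neg_ne_zero.mpr (C.re_ne_zero (by grind)))

lemma disjoint_right_iff_of_odd (C : IsCircleFactor f g) {n m : ℕ} (h : Odd (n + m)) :
    Disjoint (quadInt f n m) (quadInt f (n + 1) m) ↔
      0 < (g n (m + 1)).re * (g (n + 2) (m + 1)).re := by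
  rw [← neg_lt_zero, ← neg_mul]
  exact (C.isRightCorner_upper_right h).disjoint_iff (C.isRightCorner_upper_left (by grind))
    (C.ne_zero _ _) (neg_ne_zero.mpr (C.re_ne_zero (by grind))) (C.re_ne_zero (by grind))
    (neg_ne_zero.mpr (C.re_ne_zero (by grind)))

lemma disjoint_up_iff_of_odd (C : IsCircleFactor f g) {n m : ℕ} (h : Odd (n + m)) :
    Disjoint (quadInt f n m) (quadInt f n (m + 1)) ↔
      0 < (g (n + 1) m).re * (g (n + 1) (m + 2)).re := by
  rw [← neg_lt_zero, ← neg_mul]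
  have hA := (C.isRightCorner_upper_right h).rotate
  rw [neg_neg] at hA
  have hB := (C.isRightCorner_lower_right (by grind : Even (n + (m + 1)))).rotate
  rw [neg_neg] at hB
  exact hA.disjoint_iff hB (mul_ne_zero I_ne_zero (C.ne_zero _ _))
    (neg_ne_zero.mpr (C.re_ne_zero (by grind))) (C.re_ne_zero (by grind))
    (C.re_ne_zero (by grind))

lemma isImmersion_iff (C : IsCircleFactor f g) :
    IsImmersion f ↔ ∀ n m, Even (n + m) →
      0 < (g n m).re * (g (n + 2) m).re ∧ 0 < (g n m).re * (g n (m + 2)).re := by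
  refine ⟨fun h n m hnm ↦ ⟨(C.disjoint_right_iff_of_even hnm).mp (h n m).1,
    (C.disjoint_up_iff_of_even hnm).mp (h n m).2⟩, fun h n m ↦ ?_⟩
  rcases Nat.even_or_odd (n + m) with hnm | hnm
  · exact ⟨(C.disjoint_right_iff_of_even hnm).mpr (h n m hnm).1,
      (C.disjoint_up_iff_of_even hnm).mpr (h n m hnm).2⟩
  · exact ⟨(C.disjoint_right_iff_of_odd hnm).mpr (h n (m + 1) (by grind)).1,
      (C.disjoint_up_iff_of_odd hnm).mpr (h (n + 1) m (by grind)).2⟩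

lemma isImmersion_iff_re_pos (C : IsCircleFactor f g) (h0 : 0 < (g 0 0).re)
    (h1 : 0 < (g 1 1).re) : IsImmersion f ↔ ∀ n m, Even (n + m) → 0 < (g n m).re := by
  refine C.isImmersion_iff.trans ⟨fun h ↦ ?_, fun h n m hnm ↦
    ⟨mul_pos (h n m hnm) (h (n + 2) m (by grind)), mul_pos (h n m hnm) (h n (m + 2) (by grind))⟩⟩
  have right {n m} (hnm : Even (n + m)) (hpos : 0 < (g n m).re) : 0 < (g (n + 2) m).re :=
    (pos_iff_pos_of_mul_pos (h n m hnm).1).mp hpos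
  have up {n m} (hnm : Even (n + m)) (hpos : 0 < (g n m).re) : 0 < (g n (m + 2)).re :=
    (pos_iff_pos_of_mul_pos (h n m hnm).2).mp hpos
  intro n
  induction n using Nat.twoStepInduction with
  | zero =>
    intro m
    induction m using Nat.twoStepInduction with
    | zero => exact fun _ ↦ h0
    | one => grind
    | more m ih _ => exact fun hm ↦ up (by grind) (ih (by grind))
  | one =>
    intro m
    induction m using Nat.twoStepInduction with
    | zero => grind
    | one => exact fun _ ↦ h1
    | more m ih _ => exact fun hm ↦ up (by grind) (ih (by grind))
  | more n ih _ => exact fun m hm ↦ right (by grind) (ih m (by grind))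

end IsCircleFactor

/-! ### The four radii around an odd vertex -/

lemma re_parallelSum_mul_conj {e e' : ℂ} (he : ‖e‖ = 1) (he' : ‖e'‖ = 1) (hs : e + e' ≠ 0) :
    (parallelSum e e' * conj e).re = 1 / 2 := by
  have hee : e * conj e = 1 := by simp [mul_conj', he]
  have hee' : e' * conj e' = 1 := by simp [mul_conj', he']
  have hs' : conj e + conj e' ≠ 0 := by rwa [← map_add, Ne, map_eq_zero]
  have hadd : parallelSum e e' * conj e + conj (parallelSum e e' * conj e) = 1 := by
    simp only [parallelSum, map_mul, map_div₀, map_add, conj_conj]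
    field_simp
    linear_combination (e' * conj e + 2 * e' * conj e' + e * conj e' - 1) * hee + hee'
  rw [add_conj, ofReal_eq_one] at hadd
  linarith

/-- By the Hirota equation the directions `e₁`, `e₂` at the other two vertices are obtained from
`e` by reflection in the axes of the two kites, which have legs `l`, `u` and `l`, `d`. -/
lemma im_parallelSum_mul_conj {e e₁ e₂ : ℂ} {l u d : ℝ} (he : ‖e‖ = 1) (hl : l ≠ 0)
    (hud : u + d ≠ 0) (hs : e₁ + e₂ ≠ 0) (h₁ : e * (l + I * u) = e₁ * (u + I * l))
    (h₂ : d * (e₂ + I * e) = l * (e + I * e₂)) :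
    (parallelSum e₁ e₂ * conj e).im = (u - d) / (u + d) / 2 := by
  have hee : e * conj e = 1 := by simp [mul_conj', he]
  have hlc : (l : ℂ) ≠ 0 := mod_cast hl
  have hudc : (u + d : ℂ) ≠ 0 := mod_cast hud
  have hsum : parallelSum e₁ e₂ = e * ((l + I * u) * (l - I * d)) / (2 * l * (u + d)) := by
    rw [parallelSum, div_eq_div_iff hs (by simp [hlc, hudc])]
    linear_combination -(l - I * d) * e₂ * h₁ + (l + I * u) * e₁ * h₂
      + e₁ * e₂ * l * (u + d) * I_sq
  have hsplit : parallelSum e₁ e₂ * conj e =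
      ((l * l + u * d) / (2 * l * (u + d)) : ℝ) + ((u - d) / (u + d) / 2 : ℝ) * I := by
    rw [hsum]
    push_cast
    field_simp
    linear_combination (l + I * u) * (l - I * d) * hee - u * d * I_sq
  rw [hsplit, add_im, ofReal_im, zero_add, im_ofReal_mul, I_im, mul_one]

namespace IsCircleFactor

section FourPoint

variable {n m : ℕ} (C : IsCircleFactor f g) (hcd : CDenomNonzero f)
include C

lemma im_vert_eq_zero (h : Odd (n + m)) :
    (2 * m * parallelSum (g n (m + 1)) (g n (m - 1))).im = 0 := by
  rcases m with _ | m
  · simp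
  · rw [Nat.add_sub_cancel, ← C.real (by grind : Even (n + (m + 1 + 1))),
      ← C.real (by grind : Even (n + m)), parallelSum]
    norm_cast

include hcd

lemma re_add_ne_zero_horiz (h : Even (n + m)) : (g (n + 2) m).re + (g n m).re ≠ 0 := by
  have := C.horiz_add_ne_zero hcd n m
  rw [← C.real h, ← C.real (by grind : Even (n + 2 + m))] at this
  exact mod_cast this

lemma re_add_ne_zero_vert (h : Even (n + m)) : (g n (m + 2)).re + (g n m).re ≠ 0 := by
  have := C.vert_add_ne_zero hcd n m
  rw [← C.real h, ← C.real (by grind : Even (n + (m + 2)))] at this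
  exact mod_cast this

lemma re_horiz_parallelSum (h : Even (n + m)) :
    n * (parallelSum (g (n + 1) m) (g (n - 1) m) * conj (g (n + 1) m)).re = n / 2 := by
  rcases n with _ | n
  · simp
  · rw [Nat.add_sub_cancel, re_parallelSum_mul_conj (C.unit (by grind)) (C.unit (by grind))
      (C.horiz_add_ne_zero hcd n m), mul_one_div]

lemma im_vert_parallelSum (h : Even (n + m)) :
    m * (parallelSum (g n (m + 1)) (g n (m - 1)) * conj (g (n + 1) m)).im =
      m * (((g (n + 1) (m + 1)).re - (g (n + 1) (m - 1)).re) /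
        ((g (n + 1) (m + 1)).re + (g (n + 1) (m - 1)).re) / 2) := by
  rcases m with _ | m
  · simp
  · rw [Nat.add_sub_cancel]
    congr 1
    refine im_parallelSum_mul_conj (C.unit (by grind)) (C.re_ne_zero h)
      (C.re_add_ne_zero_vert hcd (by grind)) (C.vert_add_ne_zero hcd n m) ?_ ?_
    · rw [C.real h, C.real (by grind : Even (n + 1 + (m + 1 + 1)))]
      exact C.isHirota n (m + 1)
    · rw [C.real h, C.real (by grind : Even (n + 1 + m))]
      linear_combination C.isHirota n m

variable {γ : ℝ} (hc : ConstraintC γ f)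
include hc

lemma four_point (h : Even (n + m)) :
    (n + 1) * (((g (n + 2) m).re - (g n m).re) / ((g (n + 2) m).re + (g n m).re)) +
      m * (((g (n + 1) (m + 1)).re - (g (n + 1) (m - 1)).re) /
        ((g (n + 1) (m + 1)).re + (g (n + 1) (m - 1)).re)) = γ - 1 := by
  set e := g (n + 1) m
  set r := (g (n + 2) m).re
  set l := (g n m).re with hl
  set V := m * (((g (n + 1) (m + 1)).re - (g (n + 1) (m - 1)).re) /
        ((g (n + 1) (m + 1)).re + (g (n + 1) (m - 1)).re))
  have hee : e * conj e = 1 := by simp [mul_conj', C.unit (by grind : Odd (n + 1 + m)), e]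
  have hodd : γ * (f (n + 1) m * conj e).re = 2 * (n + 1) * (r * l / (r + l)) := by
    have hcon := C.constraint hc (n + 1) m
    rw [Nat.add_sub_cancel, ← C.real h, ← C.real (by grind : Even (n + 2 + m))] at hcon
    rw [← re_ofReal_mul, ← mul_assoc, hcon, mul_right_comm, hee, one_mul, add_re, I_mul_re,
      C.im_vert_eq_zero (by grind), neg_zero, add_zero, parallelSum]
    norm_cast
  have heven : γ * (f n m * conj e).re = l * (n - V) := by
    have hN := C.re_horiz_parallelSum hcd h
    have hM := C.im_vert_parallelSum hcd h
    have hprod : γ * f n m * conj e = l * ((2 * n : ℝ) * (parallelSum e (g (n - 1) m) * conj e) +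
        (2 * m : ℝ) * (I * (parallelSum (g n (m + 1)) (g n (m - 1)) * conj e))) := by
      rw [C.constraint hc n m, hl, C.real h]
      push_cast
      ring
    rw [← re_ofReal_mul, ← mul_assoc, hprod, re_ofReal_mul, add_re, re_ofReal_mul, re_ofReal_mul,
      I_mul_re]
    linear_combination 2 * l * hN - 2 * l * hM
  have hstep : (f (n + 1) m * conj e).re = (f n m * conj e).re + l := by
    rw [← ofReal_re l, ← add_re, hl, C.real h]
    congr 1
    linear_combination conj e * C.horiz n m + g n m * hee
  have hrl : r + l ≠ 0 := C.re_add_ne_zero_horiz hcd h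
  have hl0 : l ≠ 0 := C.re_ne_zero h
  apply mul_left_cancel₀ hl0
  rw [hstep, mul_add, heven] at hodd
  field_simp at hodd ⊢
  linear_combination -hodd

end FourPoint

end IsCircleFactor

/-! ### Propagation of positivity from the diagonal -/

lemma pos_of_four_point {γ N M r l u d : ℝ} (hγ0 : 0 < γ) (hγ2 : γ < 2) (hM : 0 ≤ M)
    (hMN : M + 1 ≤ N) (hl : 0 < l) (hrl : r + l ≠ 0)
    (hud : M ≠ 0 → 0 < u ∧ 0 < d)
    (h : N * ((r - l) / (r + l)) + M * ((u - d) / (u + d)) = γ - 1) : 0 < r := by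
  have vert_abs : |M * ((u - d) / (u + d))| ≤ M := by
    rcases eq_or_ne M 0 with rfl | hM0
    · simp
    · obtain ⟨hu, hd⟩ := hud hM0
      rw [abs_mul, abs_of_nonneg hM]
      refine mul_le_of_le_one_right hM ?_
      rw [abs_div, abs_of_pos (add_pos hu hd), div_le_one (add_pos hu hd)]
      exact abs_le.mpr ⟨by linarith, by linarith⟩
  have horiz_abs : N * |(r - l) / (r + l)| < N * 1 := by
    rw [← abs_of_nonneg (by linarith : 0 ≤ N), ← abs_mul, abs_of_nonneg (by linarith : 0 ≤ N)]
    rw [abs_le] at vert_abs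
    exact abs_lt.mpr ⟨by linarith, by linarith⟩
  have hquot := lt_of_mul_lt_mul_left horiz_abs (by linarith)
  rw [abs_div, div_lt_one (abs_pos.mpr hrl)] at hquot
  have := sq_lt_sq.mpr hquot
  nlinarith

namespace IsCircleFactor

variable {γ : ℝ} (C : IsCircleFactor f g) (hγ0 : 0 < γ) (hγ2 : γ < 2) (hc : ConstraintC γ f)
  (hcd : CDenomNonzero f)
include C hγ0 hγ2 hc hcd

lemma re_pos_right {n m : ℕ} (h : Even (n + m)) (hmn : m ≤ n) (hl : 0 < (g n m).re)
    (hud : m ≠ 0 → 0 < (g (n + 1) (m + 1)).re ∧ 0 < (g (n + 1) (m - 1)).re) :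
    0 < (g (n + 2) m).re :=
  pos_of_four_point hγ0 hγ2 m.cast_nonneg (by exact_mod_cast Nat.succ_le_succ hmn) hl
    (C.re_add_ne_zero_horiz hcd h) (fun hm ↦ hud (mod_cast hm)) (C.four_point hcd hc h)

lemma re_pos_below_diagonal (hdiag : ∀ n, 0 < (g n n).re) (k m : ℕ) :
    0 < (g (m + 2 * k) m).re := by
  induction k generalizing m with
  | zero => exact hdiag m
  | succ k ih =>
    have step (m : ℕ) := C.re_pos_right hγ0 hγ2 hc hcd (by grind : Even (m + 2 * k + m)) (by lia)
      (ih m)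
    induction m with
    | zero => exact step 0 fun h ↦ absurd rfl h
    | succ m ihm =>
      refine step (m + 1) fun _ ↦ ⟨?_, ?_⟩
      · convert ih (m + 2) using 3
        ring
      · rw [Nat.add_sub_cancel]
        convert ihm using 3
        ring

end IsCircleFactor

/-! ### Phases along the diagonal -/

lemma IsCircleFactor.sq_mul_of_diagonal (C : IsCircleFactor f g) {x : ℂ} {n : ℕ}
    (h : f n (n + 1) - f n n = x ^ 2 * (f (n + 1) n - f n n)) :
    x ^ 2 * ((g n n).re - I * (g (n + 1) (n + 1)).re) =
      (g n n).re + I * (g (n + 1) (n + 1)).re := by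
  rw [C.vert, C.horiz] at h
  have hg : I * g n (n + 1) = x ^ 2 * g (n + 1) n :=
    mul_left_cancel₀ (C.ne_zero n n) (by linear_combination h)
  rw [C.real (by simp), C.real (by simp)]
  apply mul_left_cancel₀ (C.ne_zero (n + 1) n)
  linear_combination (g n n - I * g (n + 1) (n + 1)) * (-hg) - C.isHirota n n
    - g n (n + 1) * g (n + 1) (n + 1) * I_sq

lemma mul_im_eq_mul_re_of_sq {x : ℂ} {l c : ℝ} (hx : ‖x‖ = 1)
    (h : x ^ 2 * (l - I * c) = l + I * c) : l * x.im = c * x.re := by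
  have hxx : x * conj x = 1 := by simp [mul_conj', hx]
  have h' : x * (l - I * c) = conj x * (l + I * c) := by
    linear_combination conj x * h - x * (l - I * c) * hxx
  have := congrArg im h'
  simp only [mul_im, mul_re, sub_im, sub_re, add_im, add_re, ofReal_im, ofReal_re, I_re, I_im,
    conj_re, conj_im] at this
  linarith

section PainleveTerms

variable {x y l c r d : ℂ}

lemma painleve_succ_term (hlr : l + r ≠ 0) (hxy : I + x * y ≠ 0)
    (hx : x ^ 2 * (l - I * c) = l + I * c) (hstep : r * (y + I * x) = c * (x + I * y)) :
    (x ^ 2 - 1) * ((y - I * x) / (I + x * y)) = 2 * r * x / (l + r) := by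
  rw [← mul_div_assoc, div_eq_div_iff hxy hlr]
  linear_combination (y - I * x) * hx - (x ^ 2 + 1) * hstep - c * x * (x ^ 2 + 1) * I_sq

lemma painleve_pred_term (hdc : d + c ≠ 0) (hyx : I + y * x ≠ 0)
    (hx : x ^ 2 * (l - I * c) = l + I * c) (hstep : d * (x + I * y) = l * (y + I * x)) :
    (x ^ 2 + 1) * ((y + I * x) / (I + y * x)) = 2 * d * x / (d + c) := by
  rw [← mul_div_assoc, div_eq_div_iff hyx hdc]
  have hx' : c * (x ^ 2 + 1) = -I * l * (x ^ 2 - 1) := by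
    linear_combination I * hx + c * (x ^ 2 + 1) * I_sq
  linear_combination (y + I * x) * hx' + I * (x ^ 2 - 1) * hstep - (x ^ 2 - 1) * d * y * I_sq

end PainleveTerms

lemma re_mul_conj_pos {x y : ℂ} {c r : ℝ} (hc : 0 < c) (hr : 0 < r) (hx : ‖x‖ = 1)
    (hstep : r * (y + I * x) = c * (x + I * y)) : 0 < (y * conj x).re := by
  have hxx : x * conj x = 1 := by simp [mul_conj', hx]
  have hyx : (r ^ 2 + c ^ 2 : ℝ) * (y * conj x) = (2 * r * c : ℝ) + (c ^ 2 - r ^ 2 : ℝ) * I := by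
    push_cast
    linear_combination (r + c * I) * conj x * hstep
      + ((2 * r * c : ℂ) + (c ^ 2 - r ^ 2 : ℂ) * I) * hxx
      + (c ^ 2 * y * conj x - r * c * x * conj x) * I_sq
  have hre := congrArg re hyx
  rw [re_ofReal_mul, add_re, ofReal_re, re_ofReal_mul, I_re, mul_zero, add_zero] at hre
  exact pos_of_mul_pos_right (by rw [hre]; positivity) (by positivity)

lemma exp_I_mul_re_im_pos {a : ℝ} (ha : a ∈ Set.Ioo 0 (Real.pi / 2)) :
    0 < (exp (I * a)).re ∧ 0 < (exp (I * a)).im := by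
  rw [mul_comm, exp_ofReal_mul_I_re, exp_ofReal_mul_I_im]
  exact ⟨Real.cos_pos_of_mem_Ioo ⟨by linarith [ha.1, Real.pi_pos], ha.2⟩,
    Real.sin_pos_of_pos_of_lt_pi ha.1 (by linarith [ha.2, Real.pi_pos])⟩

lemma arg_mem_Ioo_of_re_im_pos {x : ℂ} (hre : 0 < x.re) (him : 0 < x.im) :
    arg x ∈ Set.Ioo 0 (Real.pi / 2) :=
  ⟨(arg_nonneg_iff.mpr him.le).lt_of_ne' fun h ↦ him.ne' (arg_eq_zero_iff.mp h).2,
    arg_lt_pi_div_two_iff.mpr (.inl hre)⟩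

lemma I_add_mul_ne_zero {x y : ℂ} (hxre : 0 < x.re) (hxim : 0 < x.im) (hyre : 0 < y.re)
    (hyim : 0 < y.im) : I + x * y ≠ 0 := by
  intro h
  have him := congrArg im h
  rw [add_im, I_im, mul_im, zero_im] at him
  nlinarith [mul_pos hxre hyim, mul_pos hxim hyre]

lemma arg_exp_I_mul {a : ℝ} (ha : a ∈ Set.Ioc (-Real.pi) Real.pi) : arg (exp (I * a)) = a := by
  rw [mul_comm, exp_mul_I, arg_cos_add_sin_mul_I ha]

lemma exp_two_mul_I_mul (z : ℂ) : exp (2 * I * z) = exp (I * z) ^ 2 := by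
  rw [mul_assoc, ← Nat.cast_two, exp_nat_mul]

lemma exp_I_mul_arg {x : ℂ} (hx : ‖x‖ = 1) : exp (I * arg x) = x := by
  simpa [hx, mul_comm] using norm_mul_exp_arg_mul_I x

namespace IsCircleFactor

lemma re_succ_diagonal_pos (C : IsCircleFactor f g) {x : ℂ} {n : ℕ} (hx : ‖x‖ = 1)
    (hre : 0 < x.re) (him : 0 < x.im)
    (h : f n (n + 1) - f n n = x ^ 2 * (f (n + 1) n - f n n)) (hn : 0 < (g n n).re) :
    0 < (g (n + 1) (n + 1)).re := by
  have := mul_im_eq_mul_re_of_sq hx (C.sq_mul_of_diagonal h)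
  exact pos_of_mul_pos_left (this ▸ mul_pos hn him) hre.le

end IsCircleFactor

/-- The unit complex number whose argument is half the angle at `f n n` of the kite at `(n, n)`,
where `w` is the one at `n = 0` and `g 1 0 = 1`. -/
def diagPhase (w : ℂ) (g : ℕ → ℕ → ℂ) (n : ℕ) : ℂ := w / g (n + 1) n

namespace IsCircleFactor

section DiagPhase

variable {w : ℂ} (C : IsCircleFactor f g)
include C

lemma norm_diagPhase (hw : ‖w‖ = 1) (n : ℕ) : ‖diagPhase w g n‖ = 1 := by
  rw [diagPhase, norm_div, hw, C.unit (by grind), div_one]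

lemma diagonal_eq_diagPhase_sq_mul (hw : ∀ n, w ^ 2 = I * (g n (n + 1) * g (n + 1) n)) (n : ℕ) :
    f n (n + 1) - f n n = diagPhase w g n ^ 2 * (f (n + 1) n - f n n) := by
  have := C.ne_zero (n + 1) n
  rw [C.vert, C.horiz, diagPhase, div_pow, hw n]
  field_simp

lemma diagPhase_step (n : ℕ) :
    (g (n + 2) n).re * (diagPhase w g (n + 1) + I * diagPhase w g n) =
      (g (n + 1) (n + 1)).re * (diagPhase w g n + I * diagPhase w g (n + 1)) := by
  have hp := C.ne_zero (n + 1) n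
  have hq := C.ne_zero (n + 2) (n + 1)
  rw [C.real (by grind), C.real (by simp), diagPhase, diagPhase]
  field_simp
  linear_combination w * C.isHirota (n + 1) n

end DiagPhase

lemma diagonal_four_point {γ : ℝ} (C : IsCircleFactor f g) (hc : ConstraintC γ f)
    (hcd : CDenomNonzero f) (n : ℕ) :
    (n + 1) * (2 * (g (n + 2) n).re / ((g n n).re + (g (n + 2) n).re)) -
      n * (2 * (g (n + 1) (n - 1)).re / ((g (n + 1) (n - 1)).re + (g (n + 1) (n + 1)).re)) = γ := by
  have hrl := C.re_add_ne_zero_horiz hcd (by simp : Even (n + n))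
  have hfour := C.four_point hcd hc (by simp : Even (n + n))
  rw [add_comm (g n n).re]
  rcases n with _ | n
  · simp only [Nat.cast_zero, zero_add, zero_mul, add_zero, sub_zero, one_mul] at hfour ⊢
    field_simp at hfour ⊢
    linarith
  · have hud := C.re_add_ne_zero_vert hcd (by grind : Even (n + 2 + n))
    rw [Nat.add_sub_cancel] at hfour ⊢
    rw [add_comm (g (n + 2) n).re]
    field_simp at hfour ⊢
    linarith

section Phases

variable {x : ℕ → ℂ} (C : IsCircleFactor f g)
  (hdiag : ∀ n, f n (n + 1) - f n n = x n ^ 2 * (f (n + 1) n - f n n))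
  (hstep : ∀ n, (g (n + 2) n).re * (x (n + 1) + I * x n) =
    (g (n + 1) (n + 1)).re * (x n + I * x (n + 1)))
include C hdiag hstep

lemma phase_re_im_pos (hpos : ∀ n m, Even (n + m) → 0 < (g n m).re) (hx : ∀ n, ‖x n‖ = 1)
    (hre : 0 < (x 0).re) (him : 0 < (x 0).im) (n : ℕ) : 0 < (x n).re ∧ 0 < (x n).im := by
  induction n with
  | zero => exact ⟨hre, him⟩
  | succ n ih =>
    have hl := hpos (n + 1) (n + 1) (by simp)
    have hc := hpos (n + 2) (n + 2) (by simp)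
    have hdot := re_mul_conj_pos hl (hpos (n + 2) n (by grind)) (hx n) (hstep n)
    have hline := mul_im_eq_mul_re_of_sq (hx (n + 1)) (C.sq_mul_of_diagonal (hdiag (n + 1)))
    rw [mul_re, conj_re, conj_im, mul_neg, sub_neg_eq_add] at hdot
    have hre' : 0 < (x (n + 1)).re := by
      by_contra! hneg
      have him' : (x (n + 1)).im ≤ 0 := by
        by_contra! h
        linarith [mul_pos hl h, mul_nonpos_of_nonneg_of_nonpos hc.le hneg]
      nlinarith
    exact ⟨hre', pos_of_mul_pos_right (hline ▸ mul_pos hc hre') hl.le⟩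

variable {γ : ℝ} (hc : ConstraintC γ f) (hcd : CDenomNonzero f)
include hc hcd

lemma painleveP (hne : ∀ n, I + x n * x (n + 1) ≠ 0) : PainleveP γ x := by
  have pred_ne (n : ℕ) (hn : n ≠ 0) : I + x (n - 1) * x n ≠ 0 := by
    obtain ⟨k, rfl⟩ := Nat.exists_eq_succ_of_ne_zero hn
    exact hne k
  refine fun n ↦ ⟨hne n, pred_ne n, ?_⟩
  have hphase := C.sq_mul_of_diagonal (hdiag n)
  have hlr : ((g n n).re + (g (n + 2) n).re : ℂ) ≠ 0 := by
    rw [add_comm]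
    exact mod_cast C.re_add_ne_zero_horiz hcd (by simp)
  have hpred : n * ((x n ^ 2 + 1) * ((x (n - 1) + I * x n) / (I + x (n - 1) * x n))) =
      n * (2 * (g (n + 1) (n - 1)).re * x n /
        ((g (n + 1) (n - 1)).re + (g (n + 1) (n + 1)).re)) := by
    rcases n with _ | n
    · simp
    · refine congrArg _ (painleve_pred_term ?_ (hne n) hphase (hstep n))
      rw [add_comm]
      exact mod_cast C.re_add_ne_zero_vert hcd (by grind)
  rw [mul_assoc, mul_assoc, painleve_succ_term hlr (hne n) hphase (hstep n), hpred,
    ← C.diagonal_four_point hc hcd n]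
  push_cast
  ring

end Phases

section Angles

variable {w : ℂ} {γ : ℝ} (C : IsCircleFactor f g) (hc : ConstraintC γ f) (hcd : CDenomNonzero f)
include C hc hcd

lemma exists_painleve_angles (hpos : ∀ n m, Even (n + m) → 0 < (g n m).re) (hg : g 1 0 = 1)
    (hw : ‖w‖ = 1) (hre : 0 < w.re) (him : 0 < w.im)
    (hww : ∀ n, w ^ 2 = I * (g n (n + 1) * g (n + 1) n)) :
    ∃ a : ℕ → ℝ, (∀ n, a n ∈ Set.Ioo 0 (Real.pi / 2)) ∧ a 0 = arg w ∧
      (∀ n, f n (n + 1) - f n n = exp (2 * I * a n) * (f (n + 1) n - f n n)) ∧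
      PainleveP γ fun n ↦ exp (I * a n) := by
  have hdiag := C.diagonal_eq_diagPhase_sq_mul hww
  have hzero : diagPhase w g 0 = w := by rw [diagPhase, hg, div_one]
  have hquad := C.phase_re_im_pos hdiag C.diagPhase_step hpos (C.norm_diagPhase hw)
    (by rwa [hzero]) (by rwa [hzero])
  have hexp (n : ℕ) : exp (I * arg (diagPhase w g n)) = diagPhase w g n :=
    exp_I_mul_arg (C.norm_diagPhase hw n)
  refine ⟨fun n ↦ arg (diagPhase w g n),
    fun n ↦ arg_mem_Ioo_of_re_im_pos (hquad n).1 (hquad n).2, congrArg arg hzero, fun n ↦ ?_, ?_⟩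
  · rw [exp_two_mul_I_mul, hexp, hdiag n]
  · simp only [hexp]
    exact C.painleveP hdiag C.diagPhase_step hc hcd fun n ↦
      I_add_mul_ne_zero (hquad n).1 (hquad n).2 (hquad (n + 1)).1 (hquad (n + 1)).2

variable (hγ0 : 0 < γ) (hγ2 : γ < 2) (h0 : f 0 0 = 0)
include hγ0 hγ2 h0

lemma re_pos_of_diagonal (hdiag : ∀ n, 0 < (g n n).re) {n m : ℕ} (h : Even (n + m)) :
    0 < (g n m).re := by
  wlog hmn : m ≤ n generalizing n m
  · rw [C.eq_oddInv_swap hγ2 hc hcd h0, oddInv_of_even _ (by grind)]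
    exact this (by grind) (by lia)
  · obtain ⟨k, rfl⟩ : ∃ k, n = m + 2 * k := ⟨(n - m) / 2, by grind⟩
    exact C.re_pos_below_diagonal hγ0 hγ2 hc hcd hdiag k m

lemma re_pos_of_angles (hpos : 0 < (g 0 0).re) {a : ℕ → ℝ}
    (ha : ∀ n, a n ∈ Set.Ioo 0 (Real.pi / 2))
    (hf : ∀ n, f n (n + 1) - f n n = exp (2 * I * a n) * (f (n + 1) n - f n n)) {n m : ℕ}
    (h : Even (n + m)) : 0 < (g n m).re := by
  refine C.re_pos_of_diagonal hc hcd hγ0 hγ2 h0 (fun n ↦ ?_) h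
  induction n with
  | zero => exact hpos
  | succ n ih =>
    obtain ⟨hre, him⟩ := exp_I_mul_re_im_pos (ha n)
    refine C.re_succ_diagonal_pos (norm_exp_I_mul_ofReal (a n)) hre him ?_ ih
    rw [hf n, exp_two_mul_I_mul]

end Angles

end IsCircleFactor

end

/-- Proposition 4: the solution of (q), (c) is an immersion if and only if the
associated diagonal angles give a unitary solution of the discrete Painlevé
equation (P) staying in the open arc `(0, π/2)`. -/
theorem immersion_iff_painleve (γ : ℝ) (hγ0 : 0 < γ) (hγ2 : γ < 2)
    (α : ℝ) (hα0 : 0 < α) (hαπ : α < Real.pi)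
    (f : ℕ → ℕ → ℂ)
    (hq : CrossRatioEq f) (hqd : QDenomNonzero f)
    (hc : ConstraintC (γ : ℂ) f) (hcd : CDenomNonzero f)
    (h00 : f 0 0 = 0) (h10 : f 1 0 = 1)
    (h01 : f 0 1 = Complex.exp (Complex.I * α)) :
    IsImmersion f ↔
      ∃ a : ℕ → ℝ,
        (∀ n : ℕ, a n ∈ Set.Ioo 0 (Real.pi / 2)) ∧
        a 0 = α / 2 ∧
        (∀ n : ℕ, f n (n+1) - f n n =
          Complex.exp (2 * Complex.I * (a n)) * (f (n+1) n - f n n)) ∧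
        PainleveP (γ : ℂ) (fun n => Complex.exp (Complex.I * (a n))) := by
  set g := edgeFactor f
  set w := exp (I * ↑(α / 2))
  have F : IsEdgeFactor f g := isEdgeFactor_edgeFactor hq hqd
  have hg00 : g 0 0 = 1 := by simp [g, edgeFactor]
  have hg10 : g 1 0 = 1 := by simp [g, edgeFactor, h00, h10]
  have hw : w ^ 2 = I * g 0 1 := by
    have hvert := F.vert 0 0
    rw [h01, h00, sub_zero, hg00, mul_one] at hvert
    rw [← hvert, ← exp_two_mul_I_mul]
    push_cast
    ring_nf
  have hw1 : ‖w‖ = 1 := norm_exp_I_mul_ofReal _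
  have C := F.isCircleFactor hγ2 hc hcd h00 hg00 (by simp [hg10])
    (by simpa [hw1] using (congrArg norm hw).symm)
  have hpos : 0 < (g 0 0).re := by simp [hg00]
  have hww (n : ℕ) : w ^ 2 = I * (g n (n + 1) * g (n + 1) n) := by
    rw [F.mul_swap_of_odd hγ2 hc hcd h00 (by grind), hg10, one_mul, hw]
  obtain ⟨hre, him⟩ := exp_I_mul_re_im_pos (a := α / 2) ⟨by linarith, by linarith⟩
  have hdiag := C.diagonal_eq_diagPhase_sq_mul hww 0
  rw [diagPhase, hg10, div_one] at hdiag
  have harg : arg w = α / 2 := arg_exp_I_mul ⟨by linarith, by linarith⟩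
  rw [C.isImmersion_iff_re_pos hpos (C.re_succ_diagonal_pos hw1 hre him hdiag hpos), ← harg]
  exact ⟨fun h ↦ C.exists_painleve_angles hc hcd h hg10 hw1 hre him hww,
    fun ⟨a, ha, _, hf, _⟩ _ _ h ↦ C.re_pos_of_angles hc hcd hγ0 hγ2 h00 hpos ha hf h⟩

end
end

section
/- Let 0 < γ < 2. There exists a sequence of angles α_n ∈ (0, π/2), n ≥ 0, such that the sequence x_n = e^{iα_n} satisfies the discrete Painlevé equation (P) with parameter γ for all n ≥ 0; in particular, there exists a unitary solution of (P) all of whose terms lie in the closed arc A_I = {e^{iβ} : β ∈ [0, π/2]} and are distinct from 1 and i. -/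
/-!
On the unit circle, `x n = exp (I * α n)` turns (P) into the real recursion
`2 (n + 1) sin (α n) ρ (α n) (α (n + 1)) = γ + 2 n cos (α n) ρ (α (n - 1)) (α n)` with
`ρ α β = cos ((α - β) / 2 - π / 4) / cos ((α + β) / 2 - π / 4)`. Since `ρ α β` is a Möbius function
of `tan (β / 2)`, the next angle is twice the argument of an explicit complex number, depending
continuously on the two preceding angles in `[0, π / 2]`.

The solution is found by shooting from `α 0`. For `0 < γ < 2` an angle `0` is followed by a
negative one and an angle `π / 2` by a larger one, so an orbit that is clamped to `[0, π / 2]` stays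
forever at the endpoint through which it first tried to leave. Leaving below and leaving above are
disjoint nonempty open conditions on `α 0 ∈ [0, π / 2]`, and by connectedness some `α 0` satisfies
neither.
-/

open Complex

noncomputable section

open scoped Real

section Shooting

variable {X : Type*} [LinearOrder X] {l u : X}

/-- The orbit of the second-order recursion `x (n + 1) = g n (x (n - 1)) (x n)` started at `s`, with
every value projected back to `[l, u]`. The missing value `x (-1)` is taken to be `x 0`, in
agreement with `0 - 1 = 0` in `ℕ`. -/
def clampedOrbit (hlu : l ≤ u) (g : ℕ → Set.Icc l u → Set.Icc l u → X) (s : Set.Icc l u) :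
    ℕ → Set.Icc l u
  | 0 => s
  | 1 => Set.projIcc l u hlu (g 0 s s)
  | n + 2 => Set.projIcc l u hlu
      (g (n + 1) (clampedOrbit hlu g s n) (clampedOrbit hlu g s (n + 1)))

variable {hlu : l ≤ u} {g : ℕ → Set.Icc l u → Set.Icc l u → X} {s : Set.Icc l u}

lemma clampedOrbit_succ (n : ℕ) :
    clampedOrbit hlu g s (n + 1) =
      Set.projIcc l u hlu (g n (clampedOrbit hlu g s (n - 1)) (clampedOrbit hlu g s n)) := by
  cases n <;> simp [clampedOrbit]

lemma clampedOrbit_eq_of_le {e : Set.Icc l u} (he : ∀ n c, Set.projIcc l u hlu (g n c e) = e)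
    {m k : ℕ} (hm : clampedOrbit hlu g s m = e) (hmk : m ≤ k) : clampedOrbit hlu g s k = e := by
  induction k, hmk using Nat.le_induction with
  | base => exact hm
  | succ k _ ih => rw [clampedOrbit_succ, ih, he]

lemma continuous_clampedOrbit [TopologicalSpace X] [OrderTopology X]
    (hg : ∀ n, Continuous (Function.uncurry (g n))) (n : ℕ) :
    Continuous fun s => clampedOrbit hlu g s n := by
  induction n using Nat.strong_induction_on with
  | _ n ih =>
    cases n with
    | zero => exact continuous_id
    | succ n =>
      simp only [clampedOrbit_succ]
      exact continuous_projIcc.comp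
        ((hg n).comp ((ih (n - 1) (by omega)).prodMk (ih n n.lt_succ_self)))

lemma clampedOrbit_step_le_of_step_lt (hl : ∀ n c (a : Set.Icc l u), (a : X) = l → g n c a < l)
    (hu : ∀ n c (a : Set.Icc l u), (a : X) = u → u < g n c a) {m : ℕ}
    (hm : g m (clampedOrbit hlu g s (m - 1)) (clampedOrbit hlu g s m) < l) (k : ℕ) :
    g k (clampedOrbit hlu g s (k - 1)) (clampedOrbit hlu g s k) ≤ u := by
  by_contra! hk
  have stays_left : clampedOrbit hlu g s (max m k + 1) = ⟨l, Set.left_mem_Icc.2 hlu⟩ :=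
    clampedOrbit_eq_of_le (fun n c => Set.projIcc_of_le_left _ (hl n c _ rfl).le)
      (by rw [clampedOrbit_succ, Set.projIcc_of_le_left _ hm.le]) (m := m + 1) (by omega)
  have stays_right : clampedOrbit hlu g s (max m k + 1) = ⟨u, Set.right_mem_Icc.2 hlu⟩ :=
    clampedOrbit_eq_of_le (fun n c => Set.projIcc_of_right_le _ (hu n c _ rfl).le)
      (by rw [clampedOrbit_succ, Set.projIcc_of_right_le _ hk.le]) (m := k + 1) (by omega)
  have hlu_eq : l = u := congrArg Subtype.val (stays_left.symm.trans stays_right)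
  exact lt_asymm (hl 0 s ⟨l, Set.left_mem_Icc.2 hlu⟩ rfl)
    (hlu_eq ▸ hu 0 s ⟨l, Set.left_mem_Icc.2 hlu⟩ hlu_eq)

end Shooting

section ShootingExistence

variable {X : Type*} [ConditionallyCompleteLinearOrder X] [TopologicalSpace X] [OrderTopology X]
  [DenselyOrdered X] {l u : X} {g : ℕ → Set.Icc l u → Set.Icc l u → X}

lemma exists_clampedOrbit_step_mem_Icc (hlu : l ≤ u)
    (hg : ∀ n, Continuous (Function.uncurry (g n)))
    (hl : ∀ n c (a : Set.Icc l u), (a : X) = l → g n c a < l)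
    (hu : ∀ n c (a : Set.Icc l u), (a : X) = u → u < g n c a) :
    ∃ s, ∀ n, g n (clampedOrbit hlu g s (n - 1)) (clampedOrbit hlu g s n) ∈ Set.Icc l u := by
  let step (n : ℕ) (s : Set.Icc l u) : X :=
    g n (clampedOrbit hlu g s (n - 1)) (clampedOrbit hlu g s n)
  have continuous_step (n : ℕ) : Continuous (step n) :=
    (hg n).comp ((continuous_clampedOrbit hg (n - 1)).prodMk (continuous_clampedOrbit hg n))
  let exitsBelow : Set (Set.Icc l u) := ⋃ n, {s | step n s < l}
  let exitsAbove : Set (Set.Icc l u) := ⋃ n, {s | u < step n s}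
  have below_open : IsOpen exitsBelow :=
    isOpen_iUnion fun n => isOpen_lt (continuous_step n) continuous_const
  have above_open : IsOpen exitsAbove :=
    isOpen_iUnion fun n => isOpen_lt continuous_const (continuous_step n)
  have below_nonempty : (Set.univ ∩ exitsBelow).Nonempty :=
    ⟨⟨l, Set.left_mem_Icc.2 hlu⟩, trivial, Set.mem_iUnion.2 ⟨0, hl _ _ _ rfl⟩⟩
  have above_nonempty : (Set.univ ∩ exitsAbove).Nonempty :=
    ⟨⟨u, Set.right_mem_Icc.2 hlu⟩, trivial, Set.mem_iUnion.2 ⟨0, hu _ _ _ rfl⟩⟩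
  by_contra! always_exits
  have cover : Set.univ ⊆ exitsBelow ∪ exitsAbove := fun s _ => by
    obtain ⟨n, hn⟩ := always_exits s
    rcases lt_or_ge (step n s) l with h | h
    · exact .inl (Set.mem_iUnion.2 ⟨n, h⟩)
    · exact .inr (Set.mem_iUnion.2 ⟨n, not_le.1 fun h' => hn ⟨h, h'⟩⟩)
  have : PreconnectedSpace (Set.Icc l u) := Subtype.preconnectedSpace isPreconnected_Icc
  obtain ⟨s, -, hs_below, hs_above⟩ := isPreconnected_univ exitsBelow exitsAbove below_open
    above_open cover below_nonempty above_nonempty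
  obtain ⟨m, hm⟩ := Set.mem_iUnion.1 hs_below
  obtain ⟨k, hk⟩ := Set.mem_iUnion.1 hs_above
  exact hk.not_ge (clampedOrbit_step_le_of_step_lt hl hu hm k)

theorem exists_orbit_mem_Ioo (hlu : l ≤ u) (hg : ∀ n, Continuous (Function.uncurry (g n)))
    (hl : ∀ n c (a : Set.Icc l u), (a : X) = l → g n c a < l)
    (hu : ∀ n c (a : Set.Icc l u), (a : X) = u → u < g n c a) :
    ∃ x : ℕ → Set.Icc l u, (∀ n, (x n : X) ∈ Set.Ioo l u) ∧
      ∀ n, (x (n + 1) : X) = g n (x (n - 1)) (x n) := by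
  obtain ⟨s, hs⟩ := exists_clampedOrbit_step_mem_Icc hlu hg hl hu
  refine ⟨clampedOrbit hlu g s, fun n => ⟨?_, ?_⟩, fun n => ?_⟩
  · exact (clampedOrbit hlu g s n).2.1.lt_of_ne'
      fun h => ((hs n).1.trans_lt (hl _ _ _ h)).false
  · exact (clampedOrbit hlu g s n).2.2.lt_of_ne
      fun h => ((hu _ _ _ h).trans_le (hs n).2).false
  · rw [clampedOrbit_succ, Set.projIcc_of_mem _ (hs n)]

end ShootingExistence

section RealForm

/-- The function `ρ` of two angles that represents both quotients in (P) on the unit circle, where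
`x = exp (I * α)` and `y = exp (I * β)`: `(x + I * y) / (I + x * y) = ρ α β` and
`(y - I * x) / (I + x * y) = -I * ρ α β`. -/
def phaseRatio (α β : ℝ) : ℝ :=
  Real.cos ((α - β) / 2 - π / 4) / Real.cos ((α + β) / 2 - π / 4)

lemma exp_I_mul_add_exp_I_mul (a b : ℂ) :
    exp (I * a) + exp (I * b) = 2 * cos ((a - b) / 2) * exp (I * ((a + b) / 2)) := by
  rw [two_cos, add_mul, ← exp_add, ← exp_add]
  ring_nf

lemma exp_I_mul_add_I_mul_exp (α β : ℝ) :
    exp (I * α) + I * exp (I * β) =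
      2 * Real.cos ((α - β) / 2 - π / 4) * exp (I * ((α + β) / 2 + π / 4)) := by
  have h := exp_I_mul_add_exp_I_mul α (π / 2 + β)
  rw [mul_add, exp_add, mul_comm I (π / 2 : ℂ), exp_pi_div_two_mul_I] at h
  rw [h]
  push_cast
  ring_nf

lemma I_add_exp_mul_exp (α β : ℝ) :
    I + exp (I * α) * exp (I * β) =
      2 * Real.cos ((α + β) / 2 - π / 4) * exp (I * ((α + β) / 2 + π / 4)) := by
  have h := exp_I_mul_add_I_mul_exp (α + β) 0
  simpa [mul_add, exp_add, add_comm] using h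

lemma I_add_exp_mul_exp_ne_zero_iff {α β : ℝ} :
    I + exp (I * α) * exp (I * β) ≠ 0 ↔ Real.cos ((α + β) / 2 - π / 4) ≠ 0 := by
  rw [I_add_exp_mul_exp, mul_ne_zero_iff_right (exp_ne_zero _), mul_ne_zero_iff_left two_ne_zero,
    ofReal_ne_zero]

lemma exp_add_I_mul_exp_div (α β : ℝ) :
    (exp (I * α) + I * exp (I * β)) / (I + exp (I * α) * exp (I * β)) = phaseRatio α β := by
  rw [exp_I_mul_add_I_mul_exp, I_add_exp_mul_exp, mul_div_mul_right _ _ (exp_ne_zero _),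
    mul_div_mul_left _ _ two_ne_zero, phaseRatio, ofReal_div]

lemma exp_sub_I_mul_exp_div (α β : ℝ) :
    (exp (I * β) - I * exp (I * α)) / (I + exp (I * α) * exp (I * β)) =
      -I * phaseRatio α β := by
  rw [← exp_add_I_mul_exp_div, ← mul_div_assoc]
  congr 1
  linear_combination exp (I * β) * I_sq

lemma exp_I_mul_sq_sub_one (z : ℂ) : exp (I * z) ^ 2 - 1 = exp (I * z) * (2 * I * sin z) := by
  rw [mul_comm I, exp_mul_I]
  linear_combination sin_sq_add_cos_sq z - sin z ^ 2 * I_sq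

lemma exp_I_mul_sq_add_one (z : ℂ) : exp (I * z) ^ 2 + 1 = exp (I * z) * (2 * cos z) := by
  rw [mul_comm I, exp_mul_I]
  linear_combination sin z ^ 2 * I_sq - sin_sq_add_cos_sq z

/-- The right-hand side `γ + 2 n cos (α n) ρ (α (n - 1)) (α n)` of the real form of (P), as a
function of `c = α (n - 1)` and `a = α n`. -/
def painleveForcing (γ : ℝ) (n : ℕ) (c a : ℝ) : ℝ := γ + 2 * n * Real.cos a * phaseRatio c a

lemma exp_equation_iff_sin_mul_eq {γ α ρ σ : ℝ} {n : ℕ} :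
    ((n : ℂ) + 1) * (exp (I * α) ^ 2 - 1) * (-I * ρ) - n * (exp (I * α) ^ 2 + 1) * σ =
        γ * exp (I * α) ↔
      2 * (n + 1) * Real.sin α * ρ = γ + 2 * n * Real.cos α * σ := by
  have factored : ((n : ℂ) + 1) * (exp (I * α) ^ 2 - 1) * (-I * ρ) -
        n * (exp (I * α) ^ 2 + 1) * σ - γ * exp (I * α) =
      exp (I * α) *
        ((2 * (n + 1) * Real.sin α * ρ - (γ + 2 * n * Real.cos α * σ) : ℝ) : ℂ) := by
    rw [exp_I_mul_sq_sub_one, exp_I_mul_sq_add_one]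
    push_cast
    linear_combination -2 * (n + 1) * exp (I * α) * sin α * ρ * I_sq
  rw [← sub_eq_zero, factored, mul_eq_zero_iff_left (exp_ne_zero _), ofReal_eq_zero, sub_eq_zero]

theorem painleveP_exp_iff {γ : ℝ} {α : ℕ → ℝ} :
    PainleveP γ (fun n => exp (I * α n)) ↔
      ∀ n : ℕ, Real.cos ((α n + α (n + 1)) / 2 - π / 4) ≠ 0 ∧
        2 * (n + 1) * Real.sin (α n) * phaseRatio (α n) (α (n + 1)) =
          painleveForcing γ n (α (n - 1)) (α n) := by
  simp only [PainleveP, I_add_exp_mul_exp_ne_zero_iff, exp_add_I_mul_exp_div,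
    exp_sub_I_mul_exp_div, exp_equation_iff_sin_mul_eq, painleveForcing]
  refine ⟨fun h n => ⟨(h n).1, (h n).2.2⟩, fun h n => ⟨(h n).1, fun hn => ?_, (h n).2⟩⟩
  simpa [Nat.sub_add_cancel (Nat.pos_of_ne_zero hn)] using (h (n - 1)).1

lemma cos_half_add_sub_pi_div_four_pos {α β : ℝ} (hα : α ∈ Set.Icc 0 (π / 2))
    (hβ : β ∈ Set.Icc 0 (π / 2)) : 0 < Real.cos ((α + β) / 2 - π / 4) := by
  obtain ⟨hα₀, hα₁⟩ := hα
  obtain ⟨hβ₀, hβ₁⟩ := hβ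
  exact Real.cos_pos_of_mem_Ioo ⟨by linarith [Real.pi_pos], by linarith [Real.pi_pos]⟩

lemma phaseRatio_nonneg {α β : ℝ} (hα : α ∈ Set.Icc 0 (π / 2)) (hβ : β ∈ Set.Icc 0 (π / 2)) :
    0 ≤ phaseRatio α β := by
  refine div_nonneg ?_ (cos_half_add_sub_pi_div_four_pos hα hβ).le
  obtain ⟨hα₀, hα₁⟩ := hα
  obtain ⟨hβ₀, hβ₁⟩ := hβ
  exact Real.cos_nonneg_of_mem_Icc ⟨by linarith, by linarith⟩

lemma continuous_phaseRatio :
    Continuous fun p : Set.Icc 0 (π / 2) × Set.Icc 0 (π / 2) => phaseRatio p.1 p.2 :=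
  Continuous.div (by fun_prop) (by fun_prop)
    fun p => (cos_half_add_sub_pi_div_four_pos p.1.2 p.2.2).ne'

end RealForm

section NextAngle

/-- A complex number whose argument is half the angle `β` that solves `S * phaseRatio α β = P`.
With `w = π / 4 - α / 2` this equation reads
`(S + P) * sin w * sin (β / 2) = (S - P) * cos w * cos (β / 2)`. -/
def halfAngleVector (S P α : ℝ) : ℂ :=
  ⟨(S + P) * Real.sin (π / 4 - α / 2), (S - P) * Real.cos (π / 4 - α / 2)⟩

/-- The solution `β` of `S * phaseRatio α β = P`. Using `arg` instead of `arctan` of a quotient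
keeps it continuous up to `α = π / 2`, where the real part of `halfAngleVector S P α` vanishes. -/
def nextAngle (S P α : ℝ) : ℝ := 2 * arg (halfAngleVector S P α)

lemma re_mul_sin_arg (z : ℂ) : z.re * Real.sin (arg z) = z.im * Real.cos (arg z) := by
  linear_combination Real.cos (arg z) * norm_mul_sin_arg z - Real.sin (arg z) * norm_mul_cos_arg z

lemma mul_phaseRatio_nextAngle {S P α : ℝ}
    (h : Real.cos ((α + nextAngle S P α) / 2 - π / 4) ≠ 0) :
    S * phaseRatio α (nextAngle S P α) = P := by
  rw [phaseRatio, ← mul_div_assoc, div_eq_iff h]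
  let θ := arg (halfAngleVector S P α)
  have proportional := re_mul_sin_arg (halfAngleVector S P α)
  change (S + P) * Real.sin (π / 4 - α / 2) * Real.sin θ =
    (S - P) * Real.cos (π / 4 - α / 2) * Real.cos θ at proportional
  have hsub : (α - 2 * θ) / 2 - π / 4 = -((π / 4 - α / 2) + θ) := by ring
  have hadd : (α + 2 * θ) / 2 - π / 4 = -((π / 4 - α / 2) - θ) := by ring
  rw [nextAngle, hsub, hadd, Real.cos_neg, Real.cos_neg, Real.cos_add _ θ, Real.cos_sub _ θ]
  linear_combination -proportional

lemma halfAngleVector_mem_slitPlane {S P α : ℝ} (hα : α ∈ Set.Icc 0 (π / 2)) (hS : 0 ≤ S)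
    (hP : 0 < P) (hSP : α = π / 2 → P < S) : halfAngleVector S P α ∈ slitPlane := by
  rcases hα.2.eq_or_lt with rfl | hlt
  · right
    simpa [halfAngleVector, show π / 4 - π / 2 / 2 = 0 by ring, sub_eq_zero] using (hSP rfl).ne'
  · left
    exact mul_pos (by positivity)
      (Real.sin_pos_of_pos_of_lt_pi (by linarith) (by linarith [hα.1, Real.pi_pos]))

lemma nextAngle_zero_neg {P : ℝ} (hP : 0 < P) : nextAngle 0 P 0 < 0 := by
  refine mul_neg_of_pos_of_neg two_pos (arg_neg_iff.2 ?_)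
  simpa [halfAngleVector] using hP

lemma nextAngle_pi_div_two {S P : ℝ} (hSP : P < S) : nextAngle S P (π / 2) = π := by
  have h : arg (halfAngleVector S P (π / 2)) = π / 2 := by
    rw [arg_eq_pi_div_two_iff]
    simpa [halfAngleVector, show π / 4 - π / 2 / 2 = 0 by ring] using hSP
  rw [nextAngle, h]
  ring

end NextAngle

section PainleveStep

/-- The angle `α (n + 1)` determined by (P) from `c = α (n - 1)` and `a = α n`. -/
def painleveStep (γ : ℝ) (n : ℕ) (c a : ℝ) : ℝ :=
  nextAngle (2 * (n + 1) * Real.sin a) (painleveForcing γ n c a) a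

lemma painleveForcing_pos {γ : ℝ} (hγ : 0 < γ) (n : ℕ) {c a : ℝ} (hc : c ∈ Set.Icc 0 (π / 2))
    (ha : a ∈ Set.Icc 0 (π / 2)) : 0 < painleveForcing γ n c a := by
  have hcos : 0 ≤ Real.cos a := Real.cos_nonneg_of_mem_Icc ⟨by linarith [ha.1, Real.pi_pos], ha.2⟩
  have hratio := phaseRatio_nonneg hc ha
  unfold painleveForcing
  positivity

lemma painleveForcing_pi_div_two_lt {γ : ℝ} (hγ : γ < 2) (n : ℕ) (c : ℝ) :
    painleveForcing γ n c (π / 2) < 2 * (n + 1) * Real.sin (π / 2) := by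
  have : (0 : ℝ) ≤ n := n.cast_nonneg
  simp only [painleveForcing, Real.cos_pi_div_two, Real.sin_pi_div_two]
  linarith

lemma painleveStep_zero_neg {γ : ℝ} (hγ : 0 < γ) (n : ℕ) {c : ℝ} (hc : c ∈ Set.Icc 0 (π / 2)) :
    painleveStep γ n c 0 < 0 := by
  simpa [painleveStep] using
    nextAngle_zero_neg (painleveForcing_pos hγ n hc (Set.left_mem_Icc.2 Real.pi_div_two_pos.le))

lemma pi_div_two_lt_painleveStep {γ : ℝ} (hγ : γ < 2) (n : ℕ) (c : ℝ) :
    π / 2 < painleveStep γ n c (π / 2) := by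
  rw [painleveStep, nextAngle_pi_div_two (painleveForcing_pi_div_two_lt hγ n c)]
  exact half_lt_self Real.pi_pos

lemma continuous_painleveStep {γ : ℝ} (hγ0 : 0 < γ) (hγ2 : γ < 2) (n : ℕ) :
    Continuous (Function.uncurry
      fun c a : Set.Icc (0 : ℝ) (π / 2) => painleveStep γ n c a) := by
  have hforcing : Continuous
      fun p : Set.Icc 0 (π / 2) × Set.Icc 0 (π / 2) => painleveForcing γ n p.1 p.2 := by
    have := continuous_phaseRatio
    unfold painleveForcing
    fun_prop
  have hvector : Continuous fun p : Set.Icc 0 (π / 2) × Set.Icc 0 (π / 2) =>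
      halfAngleVector (2 * (n + 1) * Real.sin p.2) (painleveForcing γ n p.1 p.2) p.2 := by
    simp only [halfAngleVector, mk_eq_add_mul_I]
    fun_prop
  refine continuous_const.mul (continuous_iff_continuousAt.2 fun p => ?_)
  have hsin : 0 ≤ Real.sin p.2 :=
    Real.sin_nonneg_of_nonneg_of_le_pi p.2.2.1 (by linarith [p.2.2.2, Real.pi_pos])
  refine ContinuousAt.comp (continuousAt_arg ?_) hvector.continuousAt
  exact halfAngleVector_mem_slitPlane p.2.2 (by positivity) (painleveForcing_pos hγ0 n p.1.2 p.2.2)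
    fun h => by rw [h]; exact painleveForcing_pi_div_two_lt hγ2 n p.1

end PainleveStep

/-- Theorem 4 (existence): there is a unitary solution `x_n = e^{iα_n}` of the
discrete Painlevé equation (P) with all `α_n ∈ (0, π/2)`; in particular all its terms
lie in the closed arc `A_I` and differ from `1` and `i`. -/
theorem painleve_unitary_solution_exists (γ : ℝ) (hγ0 : 0 < γ) (hγ2 : γ < 2) :
    ∃ a : ℕ → ℝ,
      (∀ n : ℕ, a n ∈ Set.Ioo 0 (Real.pi / 2)) ∧
      PainleveP (γ : ℂ) (fun n => Complex.exp (Complex.I * (a n))) := by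
  obtain ⟨α, hα, hstep⟩ := exists_orbit_mem_Ioo (g := fun n c a => painleveStep γ n c a)
    Real.pi_div_two_pos.le (continuous_painleveStep hγ0 hγ2)
    (fun n c a ha => by rw [ha]; exact painleveStep_zero_neg hγ0 n c.2)
    (fun n c a ha => by rw [ha]; exact pi_div_two_lt_painleveStep hγ2 n c)
  refine ⟨fun n => α n, hα, painleveP_exp_iff.2 fun n => ?_⟩
  have hcos := (cos_half_add_sub_pi_div_four_pos (α n).2 (α (n + 1)).2).ne'
  refine ⟨hcos, ?_⟩
  rw [hstep n] at hcos ⊢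
  exact mul_phaseRatio_nextAngle hcos

end
end

section
/- Let 0 < γ < 2 and β ∈ [0, π/2]. Suppose (x_n), n ≥ 0, is a sequence of complex numbers satisfying the discrete Painlevé equation (P) with parameter γ for all n ≥ 0, with x_0 = e^{iβ}, and suppose every x_n lies in the closed arc A_I = {e^{iθ} : θ ∈ [0, π/2]}. Then β = γπ/4. -/
open Complex

noncomputable section

/-!
The proof rests on the Lax pair of (P). In the linear system attached to (P), with spectral
parameter `s`, a shift `n → n + 1` acts on the projective line by the Möbius map `laxMap (x n) s`,
and (P) says that these maps carry the Riccati equations in `s` indexed by `n` into one another.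
If all `x n` lie on the first quarter of the unit circle, then for `s` in that quarter the maps
`laxMap (x n) s` preserve the arc from `1` to `s` and halve the Riccati defect. Hence the truncated
compositions `laxMap (x 0) s ∘ ⋯ ∘ laxMap (x k) s`, applied to `1`, approach a solution of the
Riccati equation with index `0`, which is `s f' = (γ / 2) f`. They take the value `1` at `s = 1`
and the value `x 0` at `s = I`, so in the limit `x 0 = exp (I π γ / 4)`.
-/

open Filter Topology ComplexConjugate

/-! ### Arcs of the unit circle -/

/-- The closed arc of the unit circle from `1` to `s`, described as the part of the circle lying in
the convex cone spanned by `1` and `s`. The arc `A_I` is the case `s = I`. -/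
def arc (s : ℂ) : Set ℂ :=
  {z | ‖z‖ = 1 ∧ ∃ a b : ℝ, 0 ≤ a ∧ 0 ≤ b ∧ z = a + b * s}

theorem one_mem_arc (s : ℂ) : 1 ∈ arc s :=
  ⟨norm_one, 1, 0, zero_le_one, le_rfl, by simp⟩

theorem mem_arc_I_iff {z : ℂ} : z ∈ arc I ↔ ‖z‖ = 1 ∧ 0 ≤ z.re ∧ 0 ≤ z.im := by
  constructor
  · rintro ⟨hz, a, b, ha, hb, rfl⟩
    exact ⟨hz, by simpa using ha, by simpa using hb⟩
  · rintro ⟨hz, hre, him⟩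
    exact ⟨hz, z.re, z.im, hre, him, (re_add_im z).symm⟩

theorem I_mem_arc_I : I ∈ arc I := by
  simp [mem_arc_I_iff]

theorem exp_I_mul_mem_arc_I {θ : ℝ} (hθ : θ ∈ Set.Icc 0 (Real.pi / 2)) :
    exp (I * θ) ∈ arc I := by
  rw [mem_arc_I_iff, mul_comm, norm_exp_ofReal_mul_I, exp_ofReal_mul_I_re, exp_ofReal_mul_I_im]
  exact ⟨rfl, Real.cos_nonneg_of_mem_Icc ⟨by linarith [hθ.1, Real.pi_pos], hθ.2⟩,
    Real.sin_nonneg_of_mem_Icc ⟨hθ.1, by linarith [hθ.2, Real.pi_pos]⟩⟩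

theorem re_sq_add_im_sq_of_norm_eq_one {z : ℂ} (hz : ‖z‖ = 1) : z.re ^ 2 + z.im ^ 2 = 1 := by
  rw [← sq_norm_sub_sq_re z, hz]
  ring

theorem mul_conj_of_norm_eq_one {z : ℂ} (hz : ‖z‖ = 1) : z * conj z = 1 := by
  rw [mul_conj', hz, ofReal_one, one_pow]

theorem mul_re_sub_im_mul_I {z : ℂ} (hz : ‖z‖ = 1) : z * (z.re - z.im * I) = 1 := by
  have hconj : conj z = z.re - z.im * I := Complex.ext (by simp) (by simp)
  rw [← hconj, mul_conj_of_norm_eq_one hz]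

theorem one_le_norm_I_add_mul {y z : ℂ} (hy : y ∈ arc I) (hz : z ∈ arc I) :
    1 ≤ ‖I + y * z‖ := by
  obtain ⟨-, hyre, hyim⟩ := mem_arc_I_iff.1 hy
  obtain ⟨-, hzre, hzim⟩ := mem_arc_I_iff.1 hz
  calc (1 : ℝ) ≤ (I + y * z).im := by
        simp only [add_im, I_im, mul_im]
        linarith [mul_nonneg hyre hzim, mul_nonneg hyim hzre]
    _ ≤ |(I + y * z).im| := le_abs_self _
    _ ≤ ‖I + y * z‖ := abs_im_le_norm _

theorem I_add_mul_ne_zero_s13 {y z : ℂ} (hy : y ∈ arc I) (hz : z ∈ arc I) : I + y * z ≠ 0 :=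
  norm_pos_iff.1 (one_pos.trans_le (one_le_norm_I_add_mul hy hz))

theorem norm_one_add_sq_le_two {s : ℂ} (hs : ‖s‖ = 1) : ‖1 + s ^ 2‖ ≤ 2 := by
  calc ‖1 + s ^ 2‖ ≤ ‖(1 : ℂ)‖ + ‖s ^ 2‖ := norm_add_le 1 (s ^ 2)
    _ = 2 := by rw [norm_one, norm_pow, hs, one_pow, one_add_one_eq_two]

theorem one_add_sq_ne_zero_of_re_pos {s : ℂ} (hs : 0 < s.re) : 1 + s ^ 2 ≠ 0 := by
  intro h
  have hprod : (s - I) * (s + I) = 0 := by linear_combination h - I_sq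
  rcases mul_eq_zero.1 hprod with h | h <;> simpa [hs.ne'] using congrArg re h

/-! ### The coefficients of the Lax pair -/

/-- The quotient `(y + i z) / (i + y z)` of neighbouring terms, in which (P) is affine. -/
def stepRatio (y z : ℂ) : ℂ := (y + I * z) / (I + y * z)

/-- The quotient `(1 + i y z) / (i + y z)`, which relates `stepRatio y z` to `stepRatio z y`. -/
def stepCoratio (y z : ℂ) : ℂ := (1 + I * (y * z)) / (I + y * z)

theorem stepCoratio_comm (y z : ℂ) : stepCoratio y z = stepCoratio z y := by
  rw [stepCoratio, stepCoratio, mul_comm y z]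

theorem norm_add_I_mul_div_le_two {a b d : ℂ} (ha : ‖a‖ = 1) (hb : ‖b‖ = 1) (hd : 1 ≤ ‖d‖) :
    ‖(a + I * b) / d‖ ≤ 2 := by
  have hnum : ‖a + I * b‖ ≤ 2 := by
    simpa [ha, hb, one_add_one_eq_two] using norm_add_le a (I * b)
  rw [norm_div, div_le_iff₀ (by linarith)]
  linarith

theorem norm_stepRatio_le {y z : ℂ} (hy : y ∈ arc I) (hz : z ∈ arc I) : ‖stepRatio y z‖ ≤ 2 :=
  norm_add_I_mul_div_le_two hy.1 hz.1 (one_le_norm_I_add_mul hy hz)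

theorem norm_stepCoratio_le {y z : ℂ} (hy : y ∈ arc I) (hz : z ∈ arc I) :
    ‖stepCoratio y z‖ ≤ 2 :=
  norm_add_I_mul_div_le_two norm_one (by rw [norm_mul, hy.1, hz.1, one_mul])
    (one_le_norm_I_add_mul hy hz)

theorem re_mul_stepRatio_add_im_mul_stepRatio {y z : ℂ} (hz : ‖z‖ = 1) (h : I + y * z ≠ 0) :
    z.re * stepRatio y z + z.im * stepRatio z y = 1 := by
  have hconj := mul_re_sub_im_mul_I hz
  rw [stepRatio, stepRatio, mul_comm z y, mul_div_assoc', mul_div_assoc', ← add_div,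
    div_eq_one_iff_eq h]
  linear_combination I * hconj + y * re_add_im z + z * z.im * I_sq

theorem re_mul_stepRatio_sub_im_mul_stepRatio {y z : ℂ} (hz : ‖z‖ = 1) :
    z.re * stepRatio z y - z.im * stepRatio y z = stepCoratio y z := by
  have hconj := mul_re_sub_im_mul_I hz
  rw [stepRatio, stepRatio, stepCoratio, mul_comm z y, mul_div_assoc', mul_div_assoc', ← sub_div]
  congr 1
  linear_combination hconj + I * y * re_add_im z - y * z.im * I_sq

/-- The coefficient `n (x_{n-1} + i x_n) / (i + x_{n-1} x_n)` of the Lax pair, in which (P) is the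
affine recurrence `PainleveP.im_mul_laxP_succ`. At `n = 0` the factor `n` vanishes, so that the
truncated index `n - 1` is harmless. -/
def laxP (x : ℕ → ℂ) (n : ℕ) : ℂ := n * stepRatio (x (n - 1)) (x n)

/-- The coefficient of the Lax pair obtained from `laxP` by exchanging `x_{n-1}` and `x_n`. -/
def laxQ (x : ℕ → ℂ) (n : ℕ) : ℂ := n * stepRatio (x n) (x (n - 1))

/-- The coefficient `n (1 + i x_{n-1} x_n) / (i + x_{n-1} x_n)` of the Lax pair. -/
def laxR (x : ℕ → ℂ) (n : ℕ) : ℂ := n * stepCoratio (x (n - 1)) (x n)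

section Coefficients

variable {x : ℕ → ℂ}

theorem laxR_eq (hx : ∀ n, ‖x n‖ = 1) (n : ℕ) :
    laxR x n = (x n).re * laxQ x n - (x n).im * laxP x n := by
  rw [laxR, laxQ, laxP, ← re_mul_stepRatio_sub_im_mul_stepRatio (hx n)]
  ring

theorem laxR_succ_eq (hx : ∀ n, ‖x n‖ = 1) (n : ℕ) :
    laxR x (n + 1) = (x n).re * laxP x (n + 1) - (x n).im * laxQ x (n + 1) := by
  rw [laxR, laxQ, laxP, Nat.add_sub_cancel, stepCoratio_comm,
    ← re_mul_stepRatio_sub_im_mul_stepRatio (hx n)]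
  ring

theorem re_mul_laxP_add_im_mul_laxQ (hx : ∀ n, x n ∈ arc I) (n : ℕ) :
    (x n).re * laxP x n + (x n).im * laxQ x n = n := by
  have h := re_mul_stepRatio_add_im_mul_stepRatio (hx n).1
    (I_add_mul_ne_zero_s13 (hx (n - 1)) (hx n))
  rw [laxP, laxQ]
  linear_combination n * h

theorem im_mul_laxP_succ_add_re_mul_laxQ_succ (hx : ∀ n, x n ∈ arc I) (n : ℕ) :
    (x n).im * laxP x (n + 1) + (x n).re * laxQ x (n + 1) = n + 1 := by
  have h := re_mul_stepRatio_add_im_mul_stepRatio (hx n).1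
    (I_add_mul_ne_zero_s13 (hx (n + 1)) (hx n))
  rw [laxP, laxQ, Nat.add_sub_cancel]
  push_cast
  linear_combination (n + 1) * h

theorem norm_laxP_le (hx : ∀ n, x n ∈ arc I) (n : ℕ) : ‖laxP x n‖ ≤ 2 * n := by
  rw [laxP, norm_mul, norm_natCast, mul_comm]
  gcongr
  exact norm_stepRatio_le (hx _) (hx _)

theorem norm_laxQ_le (hx : ∀ n, x n ∈ arc I) (n : ℕ) : ‖laxQ x n‖ ≤ 2 * n := by
  rw [laxQ, norm_mul, norm_natCast, mul_comm]
  gcongr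
  exact norm_stepRatio_le (hx _) (hx _)

theorem norm_laxR_le (hx : ∀ n, x n ∈ arc I) (n : ℕ) : ‖laxR x n‖ ≤ 2 * n := by
  rw [laxR, norm_mul, norm_natCast, mul_comm]
  gcongr
  exact norm_stepCoratio_le (hx _) (hx _)

theorem PainleveP.im_mul_laxP_succ {γ : ℂ} (hP : PainleveP γ x) (hx : ∀ n, ‖x n‖ = 1) (n : ℕ) :
    (x n).im * laxP x (n + 1) = (x n).re * laxP x n + γ / 2 := by
  have hx0 : x n ≠ 0 := norm_ne_zero_iff.1 (by rw [hx n]; exact one_ne_zero)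
  have hconj := mul_re_sub_im_mul_I (hx n)
  have hsub : x n ^ 2 - 1 = 2 * I * (x n).im * x n := by
    linear_combination hconj - x n * re_add_im (x n)
  have hadd : x n ^ 2 + 1 = 2 * (x n).re * x n := by
    linear_combination -hconj - x n * re_add_im (x n)
  have hstep : (x (n + 1) - I * x n) / (I + x n * x (n + 1)) =
      -I * stepRatio (x n) (x (n + 1)) := by
    rw [stepRatio, mul_div_assoc']
    congr 1
    linear_combination x (n + 1) * I_sq
  have h := (hP n).2.2
  rw [hsub, hadd, hstep, ← stepRatio] at h
  apply mul_left_cancel₀ hx0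
  rw [laxP, laxP, Nat.add_sub_cancel]
  push_cast
  linear_combination h / 2 +
    (n + 1) * (x n).im * x n * stepRatio (x n) (x (n + 1)) * I_sq

theorem PainleveP.re_mul_laxQ_succ {γ : ℂ} (hP : PainleveP γ x) (hx : ∀ n, x n ∈ arc I) (n : ℕ) :
    (x n).re * laxQ x (n + 1) = (x n).im * laxQ x n + 1 - γ / 2 := by
  linear_combination im_mul_laxP_succ_add_re_mul_laxQ_succ hx n -
    re_mul_laxP_add_im_mul_laxQ hx n - hP.im_mul_laxP_succ (fun n => (hx n).1) n

theorem PainleveP.norm_le_four {γ : ℂ} (hP : PainleveP γ x) (hx : ∀ n, x n ∈ arc I) :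
    ‖γ‖ ≤ 4 := by
  have hγ : γ = 2 * ((x 0).im * laxP x 1) := by
    rw [hP.im_mul_laxP_succ (fun n => (hx n).1) 0]
    simp only [laxP, Nat.cast_zero, zero_mul, mul_zero, zero_add]
    ring
  have him : |(x 0).im| ≤ 1 := (hx 0).1 ▸ abs_im_le_norm (x 0)
  have hp : ‖laxP x 1‖ ≤ 2 := by simpa using norm_laxP_le hx 1
  rw [hγ, norm_mul, norm_mul, norm_real, Real.norm_eq_abs, norm_ofNat]
  nlinarith [norm_nonneg (laxP x 1)]

end Coefficients

/-! ### The Möbius maps of the Lax pair -/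

/-- The denominator of `laxMap u s Z`. -/
def laxDen (u s Z : ℂ) : ℂ := Z + u.im + s * u.re

/-- The Möbius map of the variable `Z` by which the Lax pair shifts the index from `n + 1` to `n`,
where `u = x n` and `s` is the spectral parameter. Its determinant is `u.re * u.im * (1 + s ^ 2)`
for `u` on the unit circle. -/
def laxMap (u s Z : ℂ) : ℂ := ((u.re + s * u.im) * Z + s) / laxDen u s Z

section LaxMap

variable {u s Z : ℂ}

theorem two_le_norm_laxDen_sq (hu : u ∈ arc I) (hs : s ∈ arc I) (hZ : Z ∈ arc s) :
    2 ≤ ‖laxDen u s Z‖ ^ 2 := by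
  obtain ⟨hu1, hc, hS⟩ := mem_arc_I_iff.1 hu
  obtain ⟨hs1, hre, -⟩ := mem_arc_I_iff.1 hs
  obtain ⟨hZ1, a, b, ha, hb, hab⟩ := hZ
  have hu2 := re_sq_add_im_sq_of_norm_eq_one hu1
  have hs2 := re_sq_add_im_sq_of_norm_eq_one hs1
  have hZ2 := re_sq_add_im_sq_of_norm_eq_one hZ1
  have hZre : Z.re = a + b * s.re := by simp [hab]
  have hZim : Z.im = b * s.im := by simp [hab]
  have hexpand : ‖laxDen u s Z‖ ^ 2 =
      2 + 2 * (a * u.im + a * u.re * s.re + b * u.im * s.re + b * u.re + u.im * u.re * s.re) := by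
    rw [Complex.sq_norm, normSq_apply]
    simp only [laxDen, add_re, add_im, mul_re, mul_im, ofReal_re, ofReal_im]
    linear_combination hZ2 + hu2 + (u.re ^ 2 + 2 * b * u.re) * hs2 +
      2 * (u.im + s.re * u.re) * hZre + 2 * s.im * u.re * hZim
  have hcross : 0 ≤
      a * u.im + a * u.re * s.re + b * u.im * s.re + b * u.re + u.im * u.re * s.re := by
    positivity
  linarith

theorem laxDen_ne_zero (hu : u ∈ arc I) (hs : s ∈ arc I) (hZ : Z ∈ arc s) : laxDen u s Z ≠ 0 := by
  intro h
  have := two_le_norm_laxDen_sq hu hs hZ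
  norm_num [h] at this

theorem laxMap_one (h : laxDen u 1 1 ≠ 0) : laxMap u 1 1 = 1 := by
  rw [laxMap, div_eq_one_iff_eq h, laxDen]
  ring

theorem laxMap_I (hu : ‖u‖ = 1) (h : laxDen u I Z ≠ 0) : laxMap u I Z = u := by
  have hconj := mul_re_sub_im_mul_I hu
  rw [laxMap, div_eq_iff h, laxDen]
  linear_combination Z * re_add_im u - I * hconj - u * u.im * I_sq

theorem laxMap_eq_mul_conj_div (hs : ‖s‖ = 1) (hZ : ‖Z‖ = 1) :
    laxMap u s Z = s * Z * conj (laxDen u s Z) / laxDen u s Z := by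
  rw [laxMap]
  congr 1
  simp only [laxDen, map_add, map_mul, conj_ofReal]
  linear_combination -s * mul_conj_of_norm_eq_one hZ - Z * u.re * mul_conj_of_norm_eq_one hs

theorem norm_laxMap (hs : ‖s‖ = 1) (hZ : ‖Z‖ = 1) (h : laxDen u s Z ≠ 0) :
    ‖laxMap u s Z‖ = 1 := by
  rw [laxMap_eq_mul_conj_div hs hZ, norm_div, norm_mul, norm_mul, norm_conj, hs, hZ, one_mul,
    one_mul, div_self (norm_ne_zero_iff.2 h)]

theorem laxMap_add_mul_eq (hu : ‖u‖ = 1) (hs : ‖s‖ = 1) {a b : ℝ} (hZ : ‖(a : ℂ) + b * s‖ = 1)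
    (hD : laxDen u s (a + b * s) ≠ 0) :
    laxMap u s (a + b * s) =
      (2 * u.re * (1 + b * u.re + a * u.im + a * u.re * s.re) +
        2 * u.im * (1 + b * u.re + a * u.im + b * u.im * s.re) * s) /
          (‖laxDen u s (a + b * s)‖ : ℂ) ^ 2 := by
  have hu2 : (u.re : ℂ) ^ 2 + u.im ^ 2 = 1 := by
    exact_mod_cast re_sq_add_im_sq_of_norm_eq_one hu
  have hsre : (s.re : ℂ) = (s + conj s) / 2 := re_eq_add_conj s
  have hsconj := mul_conj_of_norm_eq_one hs
  have hZconj := mul_conj_of_norm_eq_one hZ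
  simp only [map_add, map_mul, conj_ofReal] at hZconj
  rw [laxMap, ← mul_conj', ← mul_div_mul_right _ _ ((map_ne_zero conj).2 hD), hsre]
  congr 1
  simp only [laxDen, map_add, map_mul, conj_ofReal]
  linear_combination (u.re + s * u.im) * hZconj - (a * s + b) * hu2 +
    (u.re * u.im * (a + b * s) + u.re + b * u.re ^ 2 + b - b * u.im ^ 2) * hsconj

theorem laxMap_mem_arc (hu : u ∈ arc I) (hs : s ∈ arc I) (hZ : Z ∈ arc s) :
    laxMap u s Z ∈ arc s := by
  have hD := laxDen_ne_zero hu hs hZ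
  refine ⟨norm_laxMap hs.1 hZ.1 hD, ?_⟩
  obtain ⟨hu1, hc, hS⟩ := mem_arc_I_iff.1 hu
  obtain ⟨hs1, hre, -⟩ := mem_arc_I_iff.1 hs
  obtain ⟨hZ1, a, b, ha, hb, rfl⟩ := hZ
  refine ⟨2 * u.re * (1 + b * u.re + a * u.im + a * u.re * s.re) / ‖laxDen u s (a + b * s)‖ ^ 2,
    2 * u.im * (1 + b * u.re + a * u.im + b * u.im * s.re) / ‖laxDen u s (a + b * s)‖ ^ 2,
    by positivity, by positivity, ?_⟩
  rw [laxMap_add_mul_eq hu1 hs1 hZ1 hD]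
  push_cast
  ring

theorem hasDerivAt_laxMap {f : ℂ → ℂ} {W : ℂ} (hf : HasDerivAt f W s)
    (hD : laxDen u s (f s) ≠ 0) :
    HasDerivAt (fun s => laxMap u s (f s))
      (((u.im * f s + (u.re + s * u.im) * W + 1) * laxDen u s (f s) -
        ((u.re + s * u.im) * f s + s) * (W + u.re)) / laxDen u s (f s) ^ 2) s := by
  have hnum : HasDerivAt (fun s : ℂ => (u.re + s * u.im) * f s + s)
      (u.im * f s + (u.re + s * u.im) * W + 1) s := by
    simpa using! ((((hasDerivAt_id s).mul_const (u.im : ℂ)).const_add (u.re : ℂ)).fun_mul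
      hf).fun_add (hasDerivAt_id s)
  have hden : HasDerivAt (fun s : ℂ => laxDen u s (f s)) (W + u.re) s := by
    simpa [laxDen] using!
      (hf.add_const (u.im : ℂ)).fun_add ((hasDerivAt_id s).mul_const (u.re : ℂ))
  exact hnum.div hden hD

end LaxMap

/-! ### The Riccati equations -/

/-- The defect of `f` at `s` in the `n`-th Riccati equation
`(1 + s²) s f' = s (p s - q) + (γ / 2 (1 + s²) + 2 r s) f + (p - q s) f²` of the Lax pair, where
`p`, `q`, `r` are the values at `n` of `laxP`, `laxQ`, `laxR`. -/
def riccatiDefect (γ : ℂ) (x : ℕ → ℂ) (n : ℕ) (f : ℂ → ℂ) (s : ℂ) : ℂ :=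
  (1 + s ^ 2) * s * deriv f s -
    (s * (laxP x n * s - laxQ x n) + (γ / 2 * (1 + s ^ 2) + 2 * laxR x n * s) * f s +
      (laxP x n - laxQ x n * s) * f s ^ 2)

theorem riccatiDefect_zero (γ : ℂ) (x : ℕ → ℂ) (f : ℂ → ℂ) (s : ℂ) :
    riccatiDefect γ x 0 f s = (1 + s ^ 2) * (s * deriv f s - γ / 2 * f s) := by
  simp only [riccatiDefect, laxP, laxQ, laxR, Nat.cast_zero, zero_mul]
  ring

/-- The compatibility of the Lax pair with denominators cleared: `c` and `S` are the coordinates of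
`x n`, `Z` and `W` the values of `f` and `f'` at `s`, and `α = γ / 2`. -/
theorem riccati_gauge_identity {c S p q r p' q' r' α : ℂ} (h : c ^ 2 + S ^ 2 = 1)
    (hp : S * p' = c * p + α) (hq : c * q' = S * q + 1 - α)
    (hr : r = c * q - S * p) (hr' : r' = c * p' - S * q') (s Z W : ℂ) :
    (1 + s ^ 2) * s *
        ((S * Z + (c + s * S) * W + 1) * (Z + S + s * c) - ((c + s * S) * Z + s) * (W + c)) -
      (s * (p * s - q) * (Z + S + s * c) ^ 2 +
        (α * (1 + s ^ 2) + 2 * r * s) * ((c + s * S) * Z + s) * (Z + S + s * c) +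
        (p - q * s) * ((c + s * S) * Z + s) ^ 2) =
    c * S * (1 + s ^ 2) * ((1 + s ^ 2) * s * W -
      (s * (p' * s - q') + (α * (1 + s ^ 2) + 2 * r' * s) * Z + (p' - q' * s) * Z ^ 2)) := by
  subst hr hr'
  linear_combination
    c * (1 + s ^ 2) * (s ^ 2 + 2 * c * s * Z + Z ^ 2) * hp -
    S * s * (1 + s ^ 2) * (1 + 2 * S * Z + Z ^ 2) * hq +
    (s * W * (1 + s ^ 2) * s + s ^ 2 * (p - q * s) + s * (p * s - q) * Z ^ 2 +
      s * ((1 + s ^ 2) * (2 * (p * c - q * S) + α - 1) - 2 * (c * q - S * p) * s) * Z) * h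

section Contraction

variable {γ : ℂ} {x : ℕ → ℂ} {f : ℂ → ℂ} {s : ℂ}

theorem riccatiDefect_laxMap (hP : PainleveP γ x) (hx : ∀ n, x n ∈ arc I) (n : ℕ)
    (hf : DifferentiableAt ℂ f s) (hD : laxDen (x n) s (f s) ≠ 0) :
    riccatiDefect γ x n (fun s => laxMap (x n) s (f s)) s =
      (x n).re * (x n).im * (1 + s ^ 2) / laxDen (x n) s (f s) ^ 2 *
        riccatiDefect γ x (n + 1) f s := by
  have hnorm : ∀ n, ‖x n‖ = 1 := fun n => (hx n).1
  have hxn : ((x n).re : ℂ) ^ 2 + (x n).im ^ 2 = 1 := by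
    exact_mod_cast re_sq_add_im_sq_of_norm_eq_one (hnorm n)
  have hgauge := riccati_gauge_identity hxn (hP.im_mul_laxP_succ hnorm n)
    (hP.re_mul_laxQ_succ hx n) (laxR_eq hnorm n) (laxR_succ_eq hnorm n) s (f s) (deriv f s)
  rw [riccatiDefect, (hasDerivAt_laxMap hf.hasDerivAt hD).deriv, laxMap,
    div_mul_eq_mul_div _ _ (riccatiDefect γ x (n + 1) f s), riccatiDefect, ← hgauge]
  simp only [laxDen] at hD ⊢
  field_simp

theorem norm_riccatiDefect_laxMap_le (hP : PainleveP γ x) (hx : ∀ n, x n ∈ arc I) (n : ℕ)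
    (hs : s ∈ arc I) (hf : DifferentiableAt ℂ f s) (hfs : f s ∈ arc s) :
    ‖riccatiDefect γ x n (fun s => laxMap (x n) s (f s)) s‖ ≤
      ‖1 + s ^ 2‖ / 4 * ‖riccatiDefect γ x (n + 1) f s‖ := by
  obtain ⟨hu1, hc, hS⟩ := mem_arc_I_iff.1 (hx n)
  have hden := two_le_norm_laxDen_sq (hx n) hs hfs
  have hcS : (x n).re * (x n).im ≤ 1 / 2 := by
    nlinarith [re_sq_add_im_sq_of_norm_eq_one hu1, sq_nonneg ((x n).re - (x n).im)]
  have hfactor : ‖(x n).re * (x n).im * (1 + s ^ 2) / laxDen (x n) s (f s) ^ 2‖ ≤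
      ‖1 + s ^ 2‖ / 4 := by
    rw [norm_div, norm_pow, norm_mul, ← ofReal_mul, Complex.norm_of_nonneg (mul_nonneg hc hS)]
    calc (x n).re * (x n).im * ‖1 + s ^ 2‖ / ‖laxDen (x n) s (f s)‖ ^ 2
        ≤ 1 / 2 * ‖1 + s ^ 2‖ / 2 := by gcongr
      _ = ‖1 + s ^ 2‖ / 4 := by ring
  rw [riccatiDefect_laxMap hP hx n hf (laxDen_ne_zero (hx n) hs hfs), norm_mul]
  gcongr

end Contraction

/-! ### Approximate solutions -/

/-- The composition of the `k` maps `laxMap (x m) s, …, laxMap (x (m + k - 1)) s` applied to `1`,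
an approximate solution of the `m`-th Riccati equation. -/
def approximant (x : ℕ → ℂ) : ℕ → ℕ → ℂ → ℂ
  | 0, _, _ => 1
  | k + 1, m, s => laxMap (x m) s (approximant x k (m + 1) s)

section Approximant

variable {γ : ℂ} {x : ℕ → ℂ} {s : ℂ}

theorem approximant_mem_arc (hx : ∀ n, x n ∈ arc I) (hs : s ∈ arc I) (k m : ℕ) :
    approximant x k m s ∈ arc s := by
  induction k generalizing m with
  | zero => exact one_mem_arc s
  | succ k ih => exact laxMap_mem_arc (hx m) hs (ih (m + 1))

theorem differentiableAt_approximant (hx : ∀ n, x n ∈ arc I) (hs : s ∈ arc I) (k m : ℕ) :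
    DifferentiableAt ℂ (approximant x k m) s := by
  induction k generalizing m with
  | zero => exact differentiableAt_const 1
  | succ k ih =>
    exact (hasDerivAt_laxMap (ih (m + 1)).hasDerivAt (laxDen_ne_zero (hx m) hs
      (approximant_mem_arc hx hs k (m + 1)))).differentiableAt

theorem approximant_one (hx : ∀ n, x n ∈ arc I) (k m : ℕ) : approximant x k m 1 = 1 := by
  induction k generalizing m with
  | zero => rfl
  | succ k ih =>
    rw [approximant, ih, laxMap_one (laxDen_ne_zero (hx m) (one_mem_arc I) (one_mem_arc 1))]

theorem approximant_succ_I (hx : ∀ n, x n ∈ arc I) (k m : ℕ) :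
    approximant x (k + 1) m I = x m :=
  laxMap_I (hx m).1 (laxDen_ne_zero (hx m) I_mem_arc_I
    (approximant_mem_arc hx I_mem_arc_I k (m + 1)))

theorem norm_riccatiDefect_one_le (hx : ∀ n, x n ∈ arc I) (hs : ‖s‖ = 1) (m : ℕ) :
    ‖riccatiDefect γ x m (fun _ => 1) s‖ ≤ 12 * m + ‖γ‖ := by
  have hp := norm_laxP_le hx m
  have hq := norm_laxQ_le hx m
  have hr := norm_laxR_le hx m
  have hconst : ‖s * (laxP x m * s - laxQ x m)‖ ≤ 4 * m := by
    have := norm_sub_le (laxP x m * s) (laxQ x m)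
    simp only [norm_mul, hs] at this ⊢
    linarith
  have hγ : ‖γ / 2 * (1 + s ^ 2)‖ ≤ ‖γ‖ := by
    rw [norm_mul, norm_div, norm_ofNat]
    nlinarith [norm_one_add_sq_le_two hs, norm_nonneg γ]
  have hlinear : ‖γ / 2 * (1 + s ^ 2) + 2 * laxR x m * s‖ ≤ ‖γ‖ + 4 * m := by
    have hmul : ‖2 * laxR x m * s‖ = 2 * ‖laxR x m‖ := by
      rw [norm_mul, norm_mul, norm_ofNat, hs, mul_one]
    linarith [norm_add_le (γ / 2 * (1 + s ^ 2)) (2 * laxR x m * s)]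
  have hquad : ‖laxP x m - laxQ x m * s‖ ≤ 4 * m := by
    have := norm_sub_le (laxP x m) (laxQ x m * s)
    simp only [norm_mul, hs] at this
    linarith
  simp only [riccatiDefect, deriv_const, mul_zero, zero_sub, mul_one, one_pow, norm_neg]
  linarith [norm_add₃_le (a := s * (laxP x m * s - laxQ x m))
    (b := γ / 2 * (1 + s ^ 2) + 2 * laxR x m * s) (c := laxP x m - laxQ x m * s)]

theorem norm_riccatiDefect_approximant_le (hP : PainleveP γ x) (hx : ∀ n, x n ∈ arc I)
    (hs : s ∈ arc I) (k m : ℕ) :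
    ‖riccatiDefect γ x m (approximant x k m) s‖ ≤ (12 * (m + k) + ‖γ‖) / 2 ^ k := by
  induction k generalizing m with
  | zero => simpa using! norm_riccatiDefect_one_le hx hs.1 m
  | succ k ih =>
    have hdiff := differentiableAt_approximant hx hs k (m + 1)
    have hmem := approximant_mem_arc hx hs k (m + 1)
    have hs2 := norm_one_add_sq_le_two hs.1
    calc ‖riccatiDefect γ x m (approximant x (k + 1) m) s‖
        ≤ ‖1 + s ^ 2‖ / 4 * ‖riccatiDefect γ x (m + 1) (approximant x k (m + 1)) s‖ :=
          norm_riccatiDefect_laxMap_le hP hx m hs hdiff hmem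
      _ ≤ 2 / 4 * ((12 * ((m + 1 : ℕ) + k) + ‖γ‖) / 2 ^ k) := by
          gcongr
          exact ih (m + 1)
      _ = (12 * (m + (k + 1 : ℕ)) + ‖γ‖) / 2 ^ (k + 1) := by
          push_cast
          field_simp
          ring

theorem norm_mul_deriv_approximant_sub_le (hP : PainleveP γ x) (hx : ∀ n, x n ∈ arc I)
    (hs : s ∈ arc I) (hre : 0 < s.re) (k : ℕ) :
    ‖s * deriv (approximant x (k + 1) 0) s - γ / 2 * approximant x (k + 1) 0 s‖ ≤
      (12 * (1 + k) + ‖γ‖) / 2 ^ k / 4 := by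
  have hpos : 0 < ‖1 + s ^ 2‖ := norm_pos_iff.2 (one_add_sq_ne_zero_of_re_pos hre)
  have hdefect : ‖1 + s ^ 2‖ *
      ‖s * deriv (approximant x (k + 1) 0) s - γ / 2 * approximant x (k + 1) 0 s‖ ≤
        ‖1 + s ^ 2‖ * (‖riccatiDefect γ x 1 (approximant x k 1) s‖ / 4) := by
    rw [← norm_mul, ← riccatiDefect_zero γ x, ← mul_div_assoc, mul_div_right_comm]
    exact norm_riccatiDefect_laxMap_le hP hx 0 hs (differentiableAt_approximant hx hs k 1)
      (approximant_mem_arc hx hs k 1)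
  calc ‖s * deriv (approximant x (k + 1) 0) s - γ / 2 * approximant x (k + 1) 0 s‖
      ≤ ‖riccatiDefect γ x 1 (approximant x k 1) s‖ / 4 := le_of_mul_le_mul_left hdefect hpos
    _ ≤ (12 * (1 + k) + ‖γ‖) / 2 ^ k / 4 := by
        gcongr
        simpa using norm_riccatiDefect_approximant_le hP hx hs k 1

end Approximant

/-! ### Comparison with the exponential -/

theorem norm_mul_exp_sub_le {f : ℂ → ℂ} {α : ℂ} {ε φ : ℝ} (hφ : 0 ≤ φ)
    (hf : ∀ t ∈ Set.Icc 0 φ, DifferentiableAt ℂ f (exp (I * t)))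
    (hε : ∀ t ∈ Set.Ico 0 φ, ‖exp (I * t) * deriv f (exp (I * t)) - α * f (exp (I * t))‖ ≤ ε) :
    ‖f (exp (I * φ)) * exp (-(I * α * φ)) - f 1‖ ≤ ε * Real.exp (‖α‖ * φ) * φ := by
  let H : ℝ → ℂ := fun t => f (exp (I * t)) * exp (-(I * α * t))
  have hH : ∀ t ∈ Set.Icc 0 φ, HasDerivAt H
      (I * (exp (I * t) * deriv f (exp (I * t)) - α * f (exp (I * t))) * exp (-(I * α * t))) t := by
    intro t ht
    have hcircle : HasDerivAt (fun t : ℝ => exp (I * t)) (exp (I * t) * I) t := by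
      simpa using ((hasDerivAt_id t).ofReal_comp.const_mul I).cexp
    have hexp : HasDerivAt (fun t : ℝ => exp (-(I * α * t)))
        (exp (-(I * α * t)) * (-(I * α))) t := by
      simpa using ((hasDerivAt_id t).ofReal_comp.const_mul (I * α)).neg.cexp
    refine (((hf t ht).hasDerivAt.comp t hcircle).mul hexp).congr_deriv ?_
    simp only [Function.comp]
    ring
  have hbound : ∀ t ∈ Set.Ico 0 φ,
      ‖I * (exp (I * t) * deriv f (exp (I * t)) - α * f (exp (I * t))) * exp (-(I * α * t))‖ ≤
        ε * Real.exp (‖α‖ * φ) := by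
    intro t ht
    have hexp : ‖exp (-(I * α * t))‖ ≤ Real.exp (‖α‖ * φ) := by
      refine (norm_exp_le_exp_norm _).trans (Real.exp_le_exp.2 ?_)
      rw [norm_neg, norm_mul, norm_mul, norm_I, one_mul, Complex.norm_of_nonneg ht.1]
      exact mul_le_mul_of_nonneg_left ht.2.le (norm_nonneg α)
    rw [norm_mul, norm_mul, norm_I, one_mul]
    exact mul_le_mul (hε t ht) hexp (norm_nonneg _) ((norm_nonneg _).trans (hε t ht))
  simpa [H] using norm_image_sub_le_of_norm_deriv_le_segment'
    (fun t ht => (hH t ht).hasDerivWithinAt) hbound φ ⟨hφ, le_rfl⟩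

section Limit

variable {γ : ℂ} {x : ℕ → ℂ}

theorem PainleveP.norm_apply_zero_mul_exp_sub_one_le (hP : PainleveP γ x)
    (hx : ∀ n, x n ∈ arc I) (k : ℕ) :
    ‖x 0 * exp (-(I * (γ / 2) * (Real.pi / 2 : ℝ))) - 1‖ ≤
      (12 * (1 + k) + ‖γ‖) / 2 ^ k / 4 * Real.exp (‖γ / 2‖ * (Real.pi / 2)) * (Real.pi / 2) := by
  have hdiff : ∀ t ∈ Set.Icc 0 (Real.pi / 2),
      DifferentiableAt ℂ (approximant x (k + 1) 0) (exp (I * t)) := fun t ht =>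
    differentiableAt_approximant hx (exp_I_mul_mem_arc_I ht) (k + 1) 0
  have hdefect : ∀ t ∈ Set.Ico 0 (Real.pi / 2),
      ‖exp (I * t) * deriv (approximant x (k + 1) 0) (exp (I * t)) -
        γ / 2 * approximant x (k + 1) 0 (exp (I * t))‖ ≤ (12 * (1 + k) + ‖γ‖) / 2 ^ k / 4 := by
    intro t ht
    refine norm_mul_deriv_approximant_sub_le hP hx
      (exp_I_mul_mem_arc_I (Set.Ico_subset_Icc_self ht)) ?_ k
    rw [mul_comm, exp_ofReal_mul_I_re]
    exact Real.cos_pos_of_mem_Ioo ⟨by linarith [ht.1, Real.pi_pos], ht.2⟩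
  have hI : exp (I * (Real.pi / 2 : ℝ)) = I := by
    rw [mul_comm]
    push_cast
    exact exp_pi_div_two_mul_I
  simpa only [hI, approximant_succ_I hx, approximant_one hx] using
    norm_mul_exp_sub_le Real.pi_div_two_pos.le hdiff hdefect

theorem PainleveP.apply_zero_eq_exp (hP : PainleveP γ x) (hx : ∀ n, x n ∈ arc I) :
    x 0 = exp (I * (γ * Real.pi / 4)) := by
  have hlim : Tendsto (fun k : ℕ => (12 * (1 + (k : ℝ)) + ‖γ‖) / 2 ^ k / 4 *
      Real.exp (‖γ / 2‖ * (Real.pi / 2)) * (Real.pi / 2)) atTop (𝓝 0) := by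
    have hlin : Tendsto (fun k : ℕ => (k : ℝ) ^ 1 / 2 ^ k) atTop (𝓝 0) :=
      tendsto_pow_const_div_const_pow_of_one_lt 1 one_lt_two
    have hconst : Tendsto (fun k : ℕ => (k : ℝ) ^ 0 / 2 ^ k) atTop (𝓝 0) :=
      tendsto_pow_const_div_const_pow_of_one_lt 0 one_lt_two
    have := (((hlin.const_mul 12).add (hconst.const_mul (12 + ‖γ‖))).div_const 4).mul_const
      (Real.exp (‖γ / 2‖ * (Real.pi / 2)) * (Real.pi / 2))
    simp only [mul_zero, add_zero, zero_div, zero_mul] at this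
    exact this.congr fun k => by ring
  have hzero : x 0 * exp (-(I * (γ / 2) * (Real.pi / 2 : ℝ))) - 1 = 0 :=
    norm_le_zero_iff.1 (ge_of_tendsto' hlim (hP.norm_apply_zero_mul_exp_sub_one_le hx))
  rw [exp_neg, sub_eq_zero, mul_inv_eq_one₀ (exp_ne_zero _)] at hzero
  rw [hzero]
  congr 1
  push_cast
  ring

end Limit

theorem eq_of_exp_I_mul_eq {z w : ℂ} (h : exp (I * z) = exp (I * w))
    (hlt : ‖z - w‖ < 2 * Real.pi) : z = w := by
  obtain ⟨n, hn⟩ := exp_eq_exp_iff_exists_int.1 h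
  have hzw : z - w = n * (2 * Real.pi) := by
    apply mul_left_cancel₀ I_ne_zero
    linear_combination hn
  have hn0 : n = 0 := by
    rw [hzw, norm_mul, norm_intCast, norm_mul, norm_ofNat,
      Complex.norm_of_nonneg Real.pi_pos.le, mul_lt_iff_lt_one_left Real.two_pi_pos] at hlt
    exact Int.abs_lt_one_iff.1 (by exact_mod_cast hlt)
  rwa [hn0, Int.cast_zero, zero_mul, sub_eq_zero] at hzw

theorem painleve_separatrix_unique_general (γ : ℂ) (β : ℝ) (hβ : β ∈ Set.Icc 0 (Real.pi / 2))
    (x : ℕ → ℂ) (hP : PainleveP γ x) (hx0 : x 0 = exp (I * β))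
    (harc : ∀ n : ℕ, ∃ θ : ℝ, θ ∈ Set.Icc 0 (Real.pi / 2) ∧ x n = exp (I * θ)) :
    (β : ℂ) = γ * Real.pi / 4 := by
  have hx : ∀ n, x n ∈ arc I := fun n => by
    obtain ⟨θ, hθ, hxn⟩ := harc n
    exact hxn ▸ exp_I_mul_mem_arc_I hθ
  have hγ : ‖γ * Real.pi / 4‖ ≤ Real.pi := by
    rw [norm_div, norm_mul, Complex.norm_of_nonneg Real.pi_pos.le, norm_ofNat]
    nlinarith [hP.norm_le_four hx, Real.pi_pos]
  have hlt : ‖(β : ℂ) - γ * Real.pi / 4‖ < 2 * Real.pi :=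
    calc ‖(β : ℂ) - γ * Real.pi / 4‖ ≤ β + Real.pi :=
          norm_sub_le_of_le (Complex.norm_of_nonneg hβ.1).le hγ
      _ < 2 * Real.pi := by linarith [hβ.2, Real.pi_pos]
  exact eq_of_exp_I_mul_eq (hx0.symm.trans (hP.apply_zero_eq_exp hx)) hlt

/-- If a solution of the discrete Painlevé equation (P) starting at `x_0 = e^{iβ}`
stays in the closed arc `A_I = {e^{iθ} : θ ∈ [0, π/2]}`, then `β = γπ/4`. -/
theorem painleve_separatrix_unique (γ : ℝ) (hγ0 : 0 < γ) (hγ2 : γ < 2)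
    (β : ℝ) (hβ : β ∈ Set.Icc 0 (Real.pi / 2))
    (x : ℕ → ℂ) (hP : PainleveP (γ : ℂ) x)
    (hx0 : x 0 = Complex.exp (Complex.I * β))
    (harc : ∀ n : ℕ, ∃ θ : ℝ, θ ∈ Set.Icc 0 (Real.pi / 2) ∧
      x n = Complex.exp (Complex.I * θ)) :
    β = γ * Real.pi / 4 := by
  exact_mod_cast painleve_separatrix_unique_general γ β hβ x hP hx0 harc

end
end

section
/- Let 0 < γ < 2. If (x_n), n ≥ 0, is a sequence of complex numbers with |x_n| = 1 for all n, satisfying the discrete Painlevé equation (P) with parameter γ for all n ≥ 0 and with x_0 = e^{iγπ/4}, then for every n ≥ 0 one has x_n = e^{iα_n} with α_n ∈ (0, π/2); i.e. the unitary solution starting at e^{iγπ/4} stays in the open arc {e^{iθ} : 0 < θ < π/2} for all n. -/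
open Complex

noncomputable section

/-! Put `c = γ / 2` and let `L_N` be integration against `t⁻ᶜ / (1 + t²)ᴺ` on `(0, ∞)`. Starting
from `(1, 0)`, the Lax matrices of (P) with parameters `x 0, …, x n` produce a pair of real
polynomials `(A, B)` with `B(i) = x n A(i)`. The initial value `e^{iγπ/4}` is the one for which
`A` is orthogonal to constants for `L_1`, and the equation propagates this: at stage `n`, both `A`
and `X B` are orthogonal polynomials for `L_{n+1}`. Indeed, after multiplication by `A` or `X B`
the functional `L_{n+2}` kills the multiples of `X² + 1`, so on low degrees it factors through
`g ↦ g(i)` and is encoded by one complex number. Integration by parts evaluates `L_{n+2}(A B)` and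
`L_{n+2}(X B²)` through leading coefficients, and (P) says precisely that the quotient of the two
complex numbers is the next parameter `y = x (n + 1)`.

The zeros of `A` then lie in `(0, ∞)`, so the constant and leading coefficients of `A` have the
sign pattern `(-1)ⁿ⁺¹`; comparing consecutive stages gives `Re y · Im y > 0`. Positivity of the
weight gives `Re (y · conj (x n)) > 0`, so if `x n` is in the open first quadrant, then `y` cannot
be in the third. -/
namespace PainleveP

open MeasureTheory ProbabilityTheory Set Filter Polynomial
open scoped ComplexConjugate

section Moments

lemma integral_rpow_mul_one_sub_rpow {a b : ℝ} (ha : 0 < a) (hb : 0 < b) :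
    ∫ x in Ioo (0 : ℝ) 1, x ^ (a - 1) * (1 - x) ^ (b - 1) = beta a b := by
  rw [beta_eq_betaIntegralReal a b ha hb, Complex.betaIntegral,
    intervalIntegral.integral_of_le zero_le_one, integral_Ioc_eq_integral_Ioo,
    ← ofReal_re (∫ x in Ioo (0 : ℝ) 1, x ^ (a - 1) * (1 - x) ^ (b - 1)), ← integral_complex_ofReal]
  refine congrArg re (setIntegral_congr_fun measurableSet_Ioo fun x hx => ?_)
  have hx1 : 0 ≤ 1 - x := sub_nonneg.2 hx.2.le
  simp only [ofReal_mul, ofReal_cpow hx.1.le, ofReal_cpow hx1, ofReal_sub, ofReal_one]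

lemma bijOn_sq_div_one_add_sq : BijOn (fun t : ℝ => t ^ 2 / (1 + t ^ 2)) (Ioi 0) (Ioo 0 1) := by
  refine ⟨fun t (ht : 0 < t) => ⟨by positivity, ?_⟩, fun s (hs : 0 < s) t (ht : 0 < t) hst => ?_,
    fun y hy => ?_⟩
  · rw [div_lt_one (by positivity)]
    linarith
  · rw [div_eq_div_iff (by positivity) (by positivity)] at hst
    exact (pow_left_inj₀ hs.le ht.le two_ne_zero).1 (by linarith)
  · have hy1 : 0 < 1 - y := sub_pos.2 hy.2
    have hquot : 0 < y / (1 - y) := div_pos hy.1 hy1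
    refine ⟨√(y / (1 - y)), Real.sqrt_pos.2 hquot, ?_⟩
    simp only [Real.sq_sqrt hquot.le]
    field_simp
    ring

lemma hasDerivAt_sq_div_one_add_sq (t : ℝ) :
    HasDerivAt (fun t : ℝ => t ^ 2 / (1 + t ^ 2)) (2 * t / (1 + t ^ 2) ^ 2) t := by
  have hsq : HasDerivAt (fun t : ℝ => t ^ 2) (2 * t) t := by simpa using hasDerivAt_pow 2 t
  exact (hsq.fun_div (hsq.const_add 1) (by positivity)).congr_deriv (by ring)

lemma integral_rpow_div_one_add_sq_rpow {a b : ℝ} (ha : 0 < a) (hb : 0 < b) :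
    ∫ t in Ioi (0 : ℝ), t ^ (2 * a - 1) / (1 + t ^ 2) ^ (a + b) = beta a b / 2 := by
  have hsubst := integral_image_eq_integral_abs_deriv_smul measurableSet_Ioi
    (fun t _ => (hasDerivAt_sq_div_one_add_sq t).hasDerivWithinAt) bijOn_sq_div_one_add_sq.injOn
    (fun x => x ^ (a - 1) * (1 - x) ^ (b - 1))
  rw [bijOn_sq_div_one_add_sq.image_eq, integral_rpow_mul_one_sub_rpow ha hb] at hsubst
  rw [hsubst, eq_div_iff two_ne_zero, ← integral_mul_const]
  refine setIntegral_congr_fun measurableSet_Ioi fun t (ht : 0 < t) => ?_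
  have hq : 0 < 1 + t ^ 2 := by positivity
  have hsub : 1 - t ^ 2 / (1 + t ^ 2) = (1 + t ^ 2)⁻¹ := by field_simp; ring
  have hnum : t ^ (2 * a - 1) = (t ^ 2) ^ (a - 1) * t := by
    rw [← Real.rpow_natCast, ← Real.rpow_mul ht.le, ← Real.rpow_add_one ht.ne']
    congr 1
    push_cast
    ring
  have hden : (1 + t ^ 2) ^ (a + b) =
      (1 + t ^ 2) ^ (a - 1) * (1 + t ^ 2) ^ (b - 1) * (1 + t ^ 2) ^ 2 := by
    rw [← Real.rpow_add hq, ← Real.rpow_add_natCast hq.ne']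
    congr 1
    push_cast
    ring
  simp only [smul_eq_mul, abs_of_pos (show 0 < 2 * t / (1 + t ^ 2) ^ 2 by positivity), hsub,
    Real.div_rpow (sq_nonneg t) hq.le, Real.inv_rpow hq.le, hnum, hden]
  field_simp

/-- The Mellin transform at `s` of `t ↦ (1 + t²)⁻ᴺ`. It converges for `0 < s < 2 * N` and has the
junk value `0` otherwise. -/
def mellinMoment (N : ℕ) (s : ℝ) : ℝ := ∫ t in Ioi (0 : ℝ), t ^ (s - 1) / (1 + t ^ 2) ^ N

variable {N : ℕ} {s : ℝ}

lemma mellinMoment_eq_beta (hs : 0 < s) (hsN : s < 2 * N) :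
    mellinMoment N s = beta (s / 2) (N - s / 2) / 2 := by
  rw [← integral_rpow_div_one_add_sq_rpow (by linarith) (by linarith), mellinMoment]
  simp only [mul_div_cancel₀ s two_ne_zero, add_sub_cancel, Real.rpow_natCast]

lemma integrableOn_rpow_div_one_add_sq_pow (hs : 0 < s) (hsN : s < 2 * N) :
    IntegrableOn (fun t : ℝ => t ^ (s - 1) / (1 + t ^ 2) ^ N) (Ioi 0) := by
  refine Integrable.of_integral_ne_zero ((mellinMoment_eq_beta hs hsN).trans_ne ?_)
  exact (half_pos (beta_pos (by linarith) (by linarith))).ne'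

lemma mul_mellinMoment (hs : 0 < s) (hsN : s < 2 * N) :
    s * mellinMoment N s = 2 * N * mellinMoment (N + 1) (s + 2) := by
  have hN : (N : ℝ) ≠ 0 := by linarith
  rw [mellinMoment_eq_beta hs hsN, mellinMoment_eq_beta (by linarith) (by push_cast; linarith),
    beta, beta, show (s + 2) / 2 = s / 2 + 1 by ring,
    show ((N + 1 : ℕ) : ℝ) - (s / 2 + 1) = N - s / 2 by push_cast; ring,
    show s / 2 + 1 + (N - s / 2) = N + 1 by ring, add_sub_cancel, Real.Gamma_add_one hN,
    Real.Gamma_add_one (by linarith)]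
  field_simp

lemma mellinMoment_add_two (hs : 0 < s) (hsN : s < 2 * N) :
    mellinMoment (N + 1) (s + 2) + mellinMoment (N + 1) s = mellinMoment N s := by
  have hN : ((N + 1 : ℕ) : ℝ) = N + 1 := Nat.cast_succ N
  rw [mellinMoment, mellinMoment, ← integral_add
    (integrableOn_rpow_div_one_add_sq_pow (by linarith) (by linarith))
    (integrableOn_rpow_div_one_add_sq_pow hs (by linarith)), mellinMoment]
  refine setIntegral_congr_fun measurableSet_Ioi fun t (ht : 0 < t) => ?_
  have hpow : t ^ (s + 2 - 1) = t ^ (s - 1) * t ^ 2 := by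
    rw [← Real.rpow_add_natCast ht.ne']
    congr 1
    push_cast
    ring
  simp only [hpow]
  field_simp
  ring

lemma mellinMoment_one (hs : 0 < s) (hs2 : s < 2) :
    mellinMoment 1 s = Real.pi / (2 * Real.sin (Real.pi * s / 2)) := by
  rw [mellinMoment_eq_beta hs (by simpa using hs2), beta, Nat.cast_one,
    Real.Gamma_mul_Gamma_one_sub, add_sub_cancel, Real.Gamma_one, div_one, mul_div_assoc, div_div,
    mul_comm 2]

end Moments

section PolynomialFunctionals

lemma linearMap_apply_eq_of_natDegree_lt {R M : Type*} [Semiring R] [AddCommMonoid M] [Module R M]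
    {φ ψ : R[X] →ₗ[R] M} {m : ℕ} (h : ∀ k < m, φ (X ^ k) = ψ (X ^ k)) {p : R[X]}
    (hp : p.natDegree < m) : φ p = ψ p := by
  rw [p.as_sum_range' m hp, map_sum, map_sum]
  refine Finset.sum_congr rfl fun k hk => ?_
  rw [← smul_X_eq_monomial, map_smul, map_smul, h k (Finset.mem_range.1 hk)]

/-- `p` is orthogonal, with respect to the functional `φ`, to all polynomials of degree below `m`.
Since `natDegree 0 = 0`, the condition is void for `m = 0`. -/
def OrthBelow {R : Type*} [CommSemiring R] (φ : R[X] →ₗ[R] R) (m : ℕ) (p : R[X]) : Prop :=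
  ∀ g : R[X], g.natDegree < m → φ (p * g) = 0

lemma OrthBelow.apply_mul_eq_coeff_mul {R : Type*} [CommSemiring R] {φ : R[X] →ₗ[R] R} {m : ℕ}
    {p : R[X]} (hp : OrthBelow φ m p) {g : R[X]} (hg : g.natDegree ≤ m) :
    φ (p * g) = g.coeff m * φ (p * X ^ m) := by
  refine linearMap_apply_eq_of_natDegree_lt (φ := φ ∘ₗ LinearMap.mulLeft R p)
    (ψ := LinearMap.mulRight R (φ (p * X ^ m)) ∘ₗ lcoeff R m) (fun k hk => ?_)
    (Nat.lt_succ_of_le hg)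
  rcases (Nat.lt_succ_iff.1 hk).eq_or_lt with rfl | hkm
  · simp
  · simpa [coeff_X_pow, hkm.ne'] using hp (X ^ k) ((natDegree_X_pow_le k).trans_lt hkm)

/-- `φ` is strictly positive on the nonzero polynomials of degree below `m` that are nonnegative on
`(0, ∞)`, as is integration against a positive weight on `(0, ∞)` with `m` finite moments. -/
def PosBelow (φ : ℝ[X] →ₗ[ℝ] ℝ) (m : ℕ) : Prop :=
  ∀ p : ℝ[X], p.natDegree < m → p ≠ 0 → (∀ t > 0, 0 ≤ p.eval t) → 0 < φ p

lemma eval_mul_leadingCoeff_pos {p : ℝ[X]} {a : ℝ} (h : ∀ t ≥ a, p.eval t ≠ 0) :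
    0 < p.eval a * p.leadingCoeff := by
  have hp : p ≠ 0 := fun hp => h a le_rfl (by rw [hp, eval_zero])
  have hlead : p.leadingCoeff ≠ 0 := leadingCoeff_ne_zero.2 hp
  rcases Nat.eq_zero_or_pos p.natDegree with hdeg | hdeg
  · obtain ⟨c, rfl⟩ := natDegree_eq_zero.1 hdeg
    rw [leadingCoeff_C] at hlead
    simpa using hlead
  by_contra! hneg
  set q := C p.leadingCoeff * p with hq
  have hqa : q.eval a ≤ 0 := by rwa [hq, eval_mul, eval_C, mul_comm]
  have hqdeg : 0 < q.degree := by rwa [hq, degree_C_mul hlead, ← natDegree_pos_iff_degree_pos]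
  have hqlead : 0 ≤ q.leadingCoeff := by
    rw [hq, leadingCoeff_C_mul_of_isUnit hlead.isUnit]
    exact mul_self_nonneg _
  have hqtop := q.tendsto_atTop_of_leadingCoeff_nonneg hqdeg hqlead
  obtain ⟨b, hqb, hab⟩ := ((hqtop.eventually_ge_atTop 0).and (eventually_ge_atTop a)).exists
  obtain ⟨t, ht, hqt⟩ := intermediate_value_Icc hab q.continuousOn ⟨hqa, hqb⟩
  simp only [hq, eval_mul, eval_C] at hqt
  exact h t ht.1 ((mul_eq_zero.1 hqt).resolve_left hlead)

variable {φ : ℝ[X] →ₗ[ℝ] ℝ} {m : ℕ} {p : ℝ[X]}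

namespace OrthBelow

lemma natDegree_eq (hφ : PosBelow φ (2 * m)) (hp : OrthBelow φ m p) (hdeg : p.natDegree ≤ m)
    (h0 : p ≠ 0) : p.natDegree = m := by
  refine hdeg.eq_or_lt.resolve_right fun hlt => ?_
  refine (hφ (p * p) (natDegree_mul_le.trans_lt (by omega)) (mul_ne_zero h0 h0) fun t _ => ?_).ne'
    (hp p hlt)
  rw [eval_mul]
  exact mul_self_nonneg _

lemma eval_ne_zero (hφ : PosBelow φ (2 * m)) (hp : OrthBelow φ m p) (hdeg : p.natDegree ≤ m)
    (h0 : p ≠ 0) {ξ : ℝ} (hξ : ξ ≤ 0) : p.eval ξ ≠ 0 := by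
  intro hroot
  obtain ⟨q, rfl⟩ := dvd_iff_isRoot.2 hroot
  have hq : q ≠ 0 := right_ne_zero_of_mul h0
  rw [natDegree_mul (X_sub_C_ne_zero ξ) hq, natDegree_X_sub_C] at hdeg
  refine (hφ ((X - C ξ) * q * q) ?_ (mul_ne_zero h0 hq) fun t ht => ?_).ne' (hp q (by omega))
  · rw [natDegree_mul h0 hq, natDegree_mul (X_sub_C_ne_zero ξ) hq, natDegree_X_sub_C]
    omega
  · rw [eval_mul, eval_mul, mul_assoc, eval_sub, eval_X, eval_C]
    exact mul_nonneg (by linarith) (mul_self_nonneg _)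

lemma eval_zero_mul_coeff_pos (hφ : PosBelow φ (2 * m)) (hp : OrthBelow φ m p)
    (hdeg : p.natDegree ≤ m) (h0 : p ≠ 0) : 0 < p.eval 0 * ((-1) ^ m * p.coeff m) := by
  have hroot : ∀ t ≥ 0, (p.comp (-X)).eval t ≠ 0 := fun t ht => by
    simpa [eval_comp] using hp.eval_ne_zero hφ hdeg h0 (neg_nonpos.2 ht)
  have hpos := eval_mul_leadingCoeff_pos hroot
  rwa [eval_comp, eval_neg, eval_X, neg_zero, comp_neg_X_leadingCoeff_eq, leadingCoeff,
    hp.natDegree_eq hφ hdeg h0] at hpos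

end OrthBelow

/-- The values of `g ↦ φ (q * g)` at `1` and `X` as one complex number: if this functional kills the
multiples of `X ^ 2 + 1`, it sends `g` to the real inner product of that number with `g(i)`. -/
def valueAtI (φ : ℝ[X] →ₗ[ℝ] ℝ) (q : ℝ[X]) : ℂ := ⟨φ q, φ (q * X)⟩

variable {q : ℝ[X]}

lemma apply_mul_eq_re_of_natDegree_le_succ
    (h : ∀ g : ℝ[X], g.natDegree < m → φ (q * ((X ^ 2 + 1) * g)) = 0) {g : ℝ[X]}
    (hg : g.natDegree ≤ m + 1) : φ (q * g) = (conj (valueAtI φ q) * aeval I g).re := by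
  refine linearMap_apply_eq_of_natDegree_lt (φ := φ ∘ₗ LinearMap.mulLeft ℝ q)
    (ψ := reLm ∘ₗ LinearMap.mulLeft ℝ (conj (valueAtI φ q)) ∘ₗ (aeval I).toLinearMap)
    (fun k => ?_) (Nat.lt_succ_of_le hg)
  simp only [LinearMap.comp_apply, LinearMap.mulLeft_apply, AlgHom.toLinearMap_apply, map_pow,
    aeval_X, reLm_coe]
  induction k using Nat.twoStepInduction with
  | zero => intro; simp [valueAtI]
  | one => intro; simp [valueAtI]
  | more k ih _ =>
    intro hk
    have hXk : φ (q * X ^ (k + 2)) = -φ (q * X ^ k) := by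
      rw [eq_neg_iff_add_eq_zero, ← map_add, ← h (X ^ k) (by rw [natDegree_X_pow]; omega)]
      congr 1
      ring
    rw [hXk, ih (by omega), pow_add, I_sq, mul_neg_one, mul_neg, neg_re]

lemma apply_mul_eq_re_of_natDegree_le_add_two
    (h : ∀ g : ℝ[X], g.natDegree < m → φ (q * ((X ^ 2 + 1) * g)) = 0) {g : ℝ[X]}
    (hg : g.natDegree ≤ m + 2) :
    φ (q * g) = g.coeff (m + 2) * φ (q * ((X ^ 2 + 1) * X ^ m)) +
      (conj (valueAtI φ q) * aeval I g).re := by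
  refine linearMap_apply_eq_of_natDegree_lt (φ := φ ∘ₗ LinearMap.mulLeft ℝ q)
    (ψ := LinearMap.mulRight ℝ (φ (q * ((X ^ 2 + 1) * X ^ m))) ∘ₗ lcoeff ℝ (m + 2) +
      reLm ∘ₗ LinearMap.mulLeft ℝ (conj (valueAtI φ q)) ∘ₗ (aeval I).toLinearMap)
    (fun k hk => ?_) (Nat.lt_succ_of_le hg)
  simp only [LinearMap.add_apply, LinearMap.comp_apply, LinearMap.mulLeft_apply,
    LinearMap.mulRight_apply, lcoeff_apply, AlgHom.toLinearMap_apply, map_pow, aeval_X, reLm_coe,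
    coeff_X_pow]
  rcases (Nat.lt_succ_iff.1 hk).eq_or_lt with rfl | hk
  · have hX : φ (q * X ^ (m + 2)) = φ (q * ((X ^ 2 + 1) * X ^ m)) - φ (q * X ^ m) := by
      rw [← map_sub]
      congr 1
      ring
    rw [hX, apply_mul_eq_re_of_natDegree_le_succ h ((natDegree_X_pow_le m).trans m.le_succ),
      if_pos rfl, one_mul, map_pow, aeval_X, pow_add, I_sq, mul_neg_one, mul_neg, neg_re,
      sub_eq_add_neg]
  · rw [apply_mul_eq_re_of_natDegree_le_succ h ((natDegree_X_pow_le k).trans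
      (Nat.lt_succ_iff.1 hk)), if_neg hk.ne', zero_mul, zero_add, map_pow, aeval_X]

end PolynomialFunctionals

section MomentFunctional

/-- Integration against the weight `t⁻ᶜ / (1 + t²)ᴺ` on `(0, ∞)`, extended linearly to all
polynomials by its values on monomials. For `0 < c < 1` it is the integral in degrees below `2 *
N`, while the values on higher monomials come from divergent integrals and carry no meaning. -/
def momentFunctional (c : ℝ) (N : ℕ) : ℝ[X] →ₗ[ℝ] ℝ :=
  (basisMonomials ℝ).constr ℝ fun k => mellinMoment N (k + 1 - c)

lemma momentFunctional_X_pow (c : ℝ) (N k : ℕ) :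
    momentFunctional c N (X ^ k) = mellinMoment N (k + 1 - c) := by
  simpa [momentFunctional, X_pow_eq_monomial] using (basisMonomials ℝ).constr_basis ℝ
    (fun k : ℕ => mellinMoment N (k + 1 - c)) k

variable {c : ℝ} {N : ℕ} {p : ℝ[X]}

lemma momentFunctional_sq_add_one_mul (hc0 : 0 < c) (hc1 : c < 1) (hp : p.natDegree < 2 * N) :
    momentFunctional c (N + 1) ((X ^ 2 + 1) * p) = momentFunctional c N p := by
  rw [← LinearMap.mulLeft_apply (R := ℝ), ← LinearMap.comp_apply]
  refine linearMap_apply_eq_of_natDegree_lt (fun k hk => ?_) hp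
  have hk' : (k : ℝ) + 1 ≤ 2 * N := by exact_mod_cast hk
  rw [LinearMap.comp_apply, LinearMap.mulLeft_apply, add_mul, one_mul, ← pow_add, map_add]
  simp only [momentFunctional_X_pow]
  rw [← mellinMoment_add_two (N := N) (s := k + 1 - c) (by linarith [k.cast_nonneg (α := ℝ)])
    (by linarith)]
  congr 2
  push_cast
  ring

lemma momentFunctional_X_mul_derivative (hc0 : 0 < c) (hc1 : c < 1) (hp : p.natDegree < 2 * N) :
    momentFunctional c N (X * derivative p) =
      (2 * N - 1 + c) * momentFunctional c N p - 2 * N * momentFunctional c (N + 1) p := by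
  refine linearMap_apply_eq_of_natDegree_lt
    (φ := momentFunctional c N ∘ₗ LinearMap.mulLeft ℝ X ∘ₗ derivative)
    (ψ := (2 * N - 1 + c) • momentFunctional c N - (2 * N : ℝ) • momentFunctional c (N + 1))
    (fun k hk => ?_) hp
  have hk0 : (0 : ℝ) ≤ k := k.cast_nonneg
  have hk' : (k : ℝ) + 1 ≤ 2 * N := by exact_mod_cast hk
  have heuler : X * derivative (X ^ k : ℝ[X]) = (k : ℝ) • X ^ k := by
    rcases k with _ | k
    · simp
    · rw [derivative_X_pow, smul_eq_C_mul, Nat.add_sub_cancel]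
      ring
  have hparts := mul_mellinMoment (N := N) (s := k + 1 - c) (by linarith) (by linarith)
  have hrec := mellinMoment_add_two (N := N) (s := k + 1 - c) (by linarith) (by linarith)
  simp only [LinearMap.comp_apply, LinearMap.mulLeft_apply, heuler, map_smul, LinearMap.sub_apply,
    LinearMap.smul_apply, momentFunctional_X_pow, smul_eq_mul]
  linear_combination hparts + 2 * N * hrec

lemma eval_mul_rpow_div_eq_sum (hp : p.natDegree < 2 * N) {t : ℝ} (ht : 0 < t) :
    p.eval t * (t ^ (-c) / (1 + t ^ 2) ^ N) =
      ∑ k ∈ Finset.range (2 * N), p.coeff k * (t ^ ((k : ℝ) + 1 - c - 1) / (1 + t ^ 2) ^ N) := by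
  rw [eval_eq_sum_range' hp, Finset.sum_mul]
  refine Finset.sum_congr rfl fun k _ => ?_
  rw [show (k : ℝ) + 1 - c - 1 = -c + k by ring, Real.rpow_add_natCast ht.ne']
  ring

lemma integrableOn_eval_mul_and_momentFunctional_eq_integral (hc0 : 0 < c) (hc1 : c < 1)
    (hp : p.natDegree < 2 * N) :
    IntegrableOn (fun t => p.eval t * (t ^ (-c) / (1 + t ^ 2) ^ N)) (Ioi 0) ∧
      momentFunctional c N p = ∫ t in Ioi (0 : ℝ), p.eval t * (t ^ (-c) / (1 + t ^ 2) ^ N) := by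
  have hterm : ∀ k ∈ Finset.range (2 * N), IntegrableOn
      (fun t : ℝ => p.coeff k * (t ^ ((k : ℝ) + 1 - c - 1) / (1 + t ^ 2) ^ N)) (Ioi 0) :=
    fun k hk => by
      have hkN : (k : ℝ) + 1 ≤ 2 * N := by exact_mod_cast Finset.mem_range.1 hk
      exact (integrableOn_rpow_div_one_add_sq_pow (by linarith [k.cast_nonneg (α := ℝ)])
        (by linarith)).const_mul _
  have hsum : EqOn (fun t => p.eval t * (t ^ (-c) / (1 + t ^ 2) ^ N)) _ (Ioi 0) :=
    fun t ht => eval_mul_rpow_div_eq_sum hp ht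
  refine ⟨(integrableOn_congr_fun hsum measurableSet_Ioi).2 (integrable_finsetSum _ hterm), ?_⟩
  rw [setIntegral_congr_fun measurableSet_Ioi hsum, integral_finsetSum _ hterm]
  conv_lhs => rw [p.as_sum_range' _ hp, map_sum]
  refine Finset.sum_congr rfl fun k _ => ?_
  rw [integral_const_mul, ← smul_X_eq_monomial, map_smul, momentFunctional_X_pow, smul_eq_mul,
    mellinMoment]

lemma posBelow_momentFunctional (hc0 : 0 < c) (hc1 : c < 1) (N : ℕ) :
    PosBelow (momentFunctional c N) (2 * N) := by
  intro p hp h0 hnonneg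
  obtain ⟨hint, heq⟩ := integrableOn_eval_mul_and_momentFunctional_eq_integral hc0 hc1 hp
  have hweight : ∀ t : ℝ, 0 < t → 0 < t ^ (-c) / (1 + t ^ 2) ^ N := fun t ht => by positivity
  have hae : 0 ≤ᵐ[volume.restrict (Ioi 0)] fun t => p.eval t * (t ^ (-c) / (1 + t ^ 2) ^ N) := by
    filter_upwards [ae_restrict_mem measurableSet_Ioi] with t ht
    exact mul_nonneg (hnonneg t ht) (hweight t ht).le
  rw [heq, setIntegral_pos_iff_support_of_nonneg_ae hae hint]
  have hsupp : Ioi 0 \ {t | p.IsRoot t} ⊆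
      Function.support (fun t => p.eval t * (t ^ (-c) / (1 + t ^ 2) ^ N)) ∩ Ioi 0 :=
    fun t ht => ⟨mul_ne_zero ht.2 (hweight t ht.1).ne', ht.1⟩
  refine lt_of_lt_of_le ?_ (measure_mono hsupp)
  rw [measure_sdiff_null ((finite_setOfPred_isRoot h0).measure_zero _), Real.volume_Ioi]
  exact ENNReal.zero_lt_top

lemma OrthBelow.momentFunctional_succ_apply_sq_add_one_mul {m : ℕ} (hc0 : 0 < c) (hc1 : c < 1)
    (hp : OrthBelow (momentFunctional c N) m p) (hdeg : p.natDegree + m ≤ 2 * N) {g : ℝ[X]}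
    (hg : g.natDegree < m) : momentFunctional c (N + 1) (p * ((X ^ 2 + 1) * g)) = 0 := by
  rw [mul_left_comm, momentFunctional_sq_add_one_mul hc0 hc1
    (natDegree_mul_le.trans_lt (by omega)), hp g hg]

end MomentFunctional

section OrthPairs

lemma natDegree_X_mul_derivative_le {R : Type*} [Semiring R] (p : R[X]) :
    (X * derivative p).natDegree ≤ p.natDegree := by
  by_cases hp : p.natDegree = 0
  · rw [derivative_of_natDegree_zero hp, mul_zero, natDegree_zero]
    exact Nat.zero_le _
  · exact natDegree_mul_le.trans (by
      have := natDegree_derivative_lt hp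
      have := natDegree_X_le (R := R)
      omega)

lemma coeff_X_mul_derivative {R : Type*} [CommSemiring R] (p : R[X]) (n : ℕ) :
    (X * derivative p).coeff n = n * p.coeff n := by
  rcases n with _ | n
  · simp
  · rw [coeff_X_mul, coeff_derivative, mul_comm]
    push_cast
    rfl

/-- The conditions satisfied by the pair of polynomials that the Lax steps with parameters
`x 0, …, x n` produce: `p.1` and `X * p.2` are orthogonal polynomials of formal degree `n + 1` for
one and the same weight `t⁻ᶜ / (1 + t²)ⁿ⁺¹`, where `X * p.2` is only required to be orthogonal to
degrees below `n`. -/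
structure IsOrthPair (c : ℝ) (n : ℕ) (p : ℝ[X] × ℝ[X]) : Prop where
  natDegree_fst_le : p.1.natDegree ≤ n + 1
  natDegree_snd_le : p.2.natDegree ≤ n
  orthBelow_fst : OrthBelow (momentFunctional c (n + 1)) (n + 1) p.1
  orthBelow_X_mul_snd : OrthBelow (momentFunctional c (n + 1)) n (X * p.2)
  fst_ne_zero : p.1 ≠ 0

namespace IsOrthPair

variable {c : ℝ} {n : ℕ} {p : ℝ[X] × ℝ[X]} {g : ℝ[X]}

lemma natDegree_X_mul_snd_le (hp : IsOrthPair c n p) : (X * p.2).natDegree ≤ n + 1 :=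
  natDegree_mul_le.trans (by have := hp.natDegree_snd_le; have := natDegree_X_le (R := ℝ); omega)

lemma momentFunctional_fst_mul (hp : IsOrthPair c n p) (hc0 : 0 < c) (hc1 : c < 1)
    (hg : g.natDegree ≤ n + 2) : momentFunctional c (n + 2) (p.1 * g) =
      (conj (valueAtI (momentFunctional c (n + 2)) p.1) * aeval I g).re :=
  apply_mul_eq_re_of_natDegree_le_succ (m := n + 1)
    (fun _ hh => hp.orthBelow_fst.momentFunctional_succ_apply_sq_add_one_mul hc0 hc1
      (by have := hp.natDegree_fst_le; omega) hh) hg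

lemma momentFunctional_X_mul_snd_mul (hp : IsOrthPair c n p) (hc0 : 0 < c) (hc1 : c < 1)
    (hg : g.natDegree ≤ n + 1) : momentFunctional c (n + 2) (X * p.2 * g) =
      (conj (valueAtI (momentFunctional c (n + 2)) (X * p.2)) * aeval I g).re :=
  apply_mul_eq_re_of_natDegree_le_succ (m := n)
    (fun _ hh => hp.orthBelow_X_mul_snd.momentFunctional_succ_apply_sq_add_one_mul hc0 hc1
      (by have := hp.natDegree_X_mul_snd_le; omega) hh) hg

lemma momentFunctional_X_mul_snd_mul_of_le_add_two (hp : IsOrthPair c n p) (hc0 : 0 < c)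
    (hc1 : c < 1) (hg : g.natDegree ≤ n + 2) : momentFunctional c (n + 2) (X * p.2 * g) =
      g.coeff (n + 2) * momentFunctional c (n + 1) (X * p.2 * X ^ n) +
        (conj (valueAtI (momentFunctional c (n + 2)) (X * p.2)) * aeval I g).re := by
  have hXB := hp.natDegree_X_mul_snd_le
  have hlower : momentFunctional c (n + 2) (X * p.2 * ((X ^ 2 + 1) * X ^ n)) =
      momentFunctional c (n + 1) (X * p.2 * X ^ n) := by
    rw [mul_left_comm, momentFunctional_sq_add_one_mul hc0 hc1
      (natDegree_mul_le.trans_lt (by rw [natDegree_X_pow]; omega))]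
  rw [← hlower]
  exact apply_mul_eq_re_of_natDegree_le_add_two
    (fun _ hh => hp.orthBelow_X_mul_snd.momentFunctional_succ_apply_sq_add_one_mul hc0 hc1
      (by omega) hh) hg

lemma two_mul_momentFunctional_fst_mul_snd (hp : IsOrthPair c n p) (hc0 : 0 < c) (hc1 : c < 1) :
    2 * momentFunctional c (n + 2) (p.1 * p.2) =
      -(p.1.coeff (n + 1) * momentFunctional c (n + 1) (X * p.2 * X ^ n)) := by
  have hA := hp.natDegree_fst_le
  have hB := hp.natDegree_snd_le
  have hparts := momentFunctional_X_mul_derivative (N := n + 1) (p := p.1 * p.2) hc0 hc1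
    (natDegree_mul_le.trans_lt (by omega))
  have hsplit : X * derivative (p.1 * p.2) =
      X * p.2 * derivative p.1 + p.1 * (X * derivative p.2) := by
    rw [derivative_mul]
    ring
  rw [hsplit, map_add, hp.orthBelow_fst p.2 (by omega),
    hp.orthBelow_fst _ ((natDegree_X_mul_derivative_le _).trans_lt (by omega)),
    hp.orthBelow_X_mul_snd.apply_mul_eq_coeff_mul ((natDegree_derivative_le _).trans (by omega)),
    coeff_derivative] at hparts
  push_cast at hparts
  have hn : (n : ℝ) + 1 ≠ 0 := n.cast_add_one_ne_zero
  refine mul_left_cancel₀ hn ?_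
  linear_combination hparts

lemma two_mul_momentFunctional_X_mul_snd_mul_snd (hp : IsOrthPair c n p) (hc0 : 0 < c)
    (hc1 : c < 1) : 2 * (n + 1) * momentFunctional c (n + 2) (X * p.2 * p.2) =
      c * p.2.coeff n * momentFunctional c (n + 1) (X * p.2 * X ^ n) := by
  have hB := hp.natDegree_snd_le
  have hXB := hp.natDegree_X_mul_snd_le
  have hparts := momentFunctional_X_mul_derivative (N := n + 1) (p := X * p.2 * p.2) hc0 hc1
    (natDegree_mul_le.trans_lt (by omega))
  have hsplit : X * derivative (X * p.2 * p.2) =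
      X * p.2 * p.2 + (2 : ℝ) • (X * p.2 * (X * derivative p.2)) := by
    simp only [derivative_mul, derivative_X, two_smul]
    ring
  rw [hsplit, map_add, map_smul, hp.orthBelow_X_mul_snd.apply_mul_eq_coeff_mul hB,
    hp.orthBelow_X_mul_snd.apply_mul_eq_coeff_mul ((natDegree_X_mul_derivative_le _).trans hB),
    coeff_X_mul_derivative, smul_eq_mul] at hparts
  push_cast at hparts
  linear_combination hparts

lemma conj_valueAtI_mul_aeval_fst (hp : IsOrthPair c n p) (hc0 : 0 < c) (hc1 : c < 1) :
    conj (valueAtI (momentFunctional c (n + 2)) (X * p.2)) * aeval I p.1 =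
      -I * conj (conj (valueAtI (momentFunctional c (n + 2)) p.1) * aeval I p.2) := by
  have hA := hp.natDegree_fst_le
  have hB := hp.natDegree_snd_le
  have hXB := hp.natDegree_X_mul_snd_le
  have hXA : (X * p.1).natDegree ≤ n + 2 :=
    natDegree_mul_le.trans (by have := natDegree_X_le (R := ℝ); omega)
  have hre := hp.momentFunctional_X_mul_snd_mul hc0 hc1 hA
  rw [mul_comm (X * p.2), hp.momentFunctional_fst_mul hc0 hc1 (by omega)] at hre
  have hzero : momentFunctional c (n + 2) ((X ^ 2 + 1) * (p.1 * p.2)) = 0 := by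
    rw [momentFunctional_sq_add_one_mul hc0 hc1 (natDegree_mul_le.trans_lt (by omega)),
      hp.orthBelow_fst _ (by omega)]
  have hsplit : (X ^ 2 + 1) * (p.1 * p.2) = X * p.2 * (X * p.1) + p.1 * p.2 := by ring
  have hJB := hp.two_mul_momentFunctional_fst_mul_snd hc0 hc1
  rw [hsplit, map_add, hp.momentFunctional_X_mul_snd_mul_of_le_add_two hc0 hc1 hXA,
    coeff_X_mul] at hzero
  have him := hp.momentFunctional_fst_mul hc0 hc1 (hB.trans (by omega : n ≤ n + 2))
  simp only [map_mul, aeval_X, mul_left_comm _ I] at hre hzero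
  set kα := conj (valueAtI (momentFunctional c (n + 2)) (X * p.2)) * aeval I p.1
  set jβ := conj (valueAtI (momentFunctional c (n + 2)) p.1) * aeval I p.2
  rw [I_mul_re] at hre
  rw [I_mul_re] at hzero
  apply Complex.ext
  · simp [← hre]
  · simp only [neg_mul, neg_im, I_mul_im, conj_re]
    linarith

lemma momentFunctional_X_mul_snd_mul_snd_eq (hp : IsOrthPair c n p) (hc0 : 0 < c) (hc1 : c < 1)
    {D : ℝ} (hD : (n + 1) * p.1.coeff (n + 1) * D = -c * p.2.coeff n) :
    momentFunctional c (n + 2) (X * p.2 * p.2) = D * momentFunctional c (n + 2) (p.1 * p.2) := by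
  have hn : 2 * ((n : ℝ) + 1) ≠ 0 := mul_ne_zero two_ne_zero n.cast_add_one_ne_zero
  refine mul_left_cancel₀ hn ?_
  linear_combination hp.two_mul_momentFunctional_X_mul_snd_mul_snd hc0 hc1
    - ((n : ℝ) + 1) * D * hp.two_mul_momentFunctional_fst_mul_snd hc0 hc1
    + momentFunctional c (n + 1) (X * p.2 * X ^ n) * hD

lemma momentFunctional_fst_mul_fst_pos (hp : IsOrthPair c n p) (hc0 : 0 < c) (hc1 : c < 1) :
    0 < momentFunctional c (n + 2) (p.1 * p.1) := by
  have hA := hp.natDegree_fst_le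
  refine posBelow_momentFunctional hc0 hc1 _ _ (natDegree_mul_le.trans_lt (by omega))
    (mul_ne_zero hp.fst_ne_zero hp.fst_ne_zero) fun t _ => ?_
  rw [eval_mul]
  exact mul_self_nonneg _

lemma momentFunctional_X_mul_snd_mul_snd_pos (hp : IsOrthPair c n p) (hc0 : 0 < c) (hc1 : c < 1)
    (hB : p.2 ≠ 0) : 0 < momentFunctional c (n + 2) (X * p.2 * p.2) := by
  have hXB := hp.natDegree_X_mul_snd_le
  have := hp.natDegree_snd_le
  refine posBelow_momentFunctional hc0 hc1 _ _ (natDegree_mul_le.trans_lt (by omega))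
    (mul_ne_zero (mul_ne_zero X_ne_zero hB) hB) fun t ht => ?_
  rw [mul_assoc, eval_mul, eval_mul, eval_X]
  exact mul_nonneg ht.le (mul_self_nonneg _)

lemma eval_zero_fst_mul_coeff_pos (hp : IsOrthPair c n p) (hc0 : 0 < c) (hc1 : c < 1) :
    0 < p.1.eval 0 * ((-1) ^ (n + 1) * p.1.coeff (n + 1)) :=
  hp.orthBelow_fst.eval_zero_mul_coeff_pos (posBelow_momentFunctional hc0 hc1 _)
    hp.natDegree_fst_le hp.fst_ne_zero

end IsOrthPair

end OrthPairs

section LaxStep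

/-- One step of the Lax pair: multiplication of the pair of polynomials by the Lax matrix with
parameter `z`. -/
def laxStep (z : ℂ) (p : ℝ[X] × ℝ[X]) : ℝ[X] × ℝ[X] :=
  ((C z.re - C z.im * X) * p.1 - X * p.2, p.1 + (C z.im - C z.re * X) * p.2)

/-- The pair of polynomials obtained from `(1, 0)` by the Lax steps with parameters
`x 0, …, x (n - 1)`. -/
def laxPair (x : ℕ → ℂ) : ℕ → ℝ[X] × ℝ[X]
  | 0 => (1, 0)
  | n + 1 => laxStep (x n) (laxPair x n)

lemma mul_conj_eq_one_of_norm_eq_one {z : ℂ} (hz : ‖z‖ = 1) : z * conj z = 1 := by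
  rw [mul_conj, normSq_eq_norm_sq, hz, one_pow, ofReal_one]

variable {c : ℝ} {n : ℕ} {p : ℝ[X] × ℝ[X]} {x y z : ℂ}

lemma aeval_I_C_re_sub_C_im_mul_X (z : ℂ) : aeval I (C z.re - C z.im * X) = conj z := by
  apply Complex.ext <;> simp

lemma aeval_I_C_im_sub_C_re_mul_X (z : ℂ) : aeval I (C z.im - C z.re * X) = -I * z := by
  apply Complex.ext <;> simp

lemma natDegree_C_sub_C_mul_X_mul_le {R : Type*} [Ring R] (a b : R) (q : R[X]) :
    ((C a - C b * X) * q).natDegree ≤ q.natDegree + 1 := by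
  have hlin : (C a - C b * X).natDegree ≤ 1 := by compute_degree
  exact natDegree_mul_le.trans (by omega)

lemma coeff_fst_laxStep (z : ℂ) (hp₁ : p.1.natDegree ≤ n + 1) (hp₂ : p.2.natDegree ≤ n) :
    (laxStep z p).1.coeff (n + 2) = -z.im * p.1.coeff (n + 1) := by
  have h₁ : p.1.coeff (n + 2) = 0 := coeff_eq_zero_of_natDegree_lt (by omega)
  have h₂ : p.2.coeff (n + 1) = 0 := coeff_eq_zero_of_natDegree_lt (by omega)
  simp [laxStep, sub_mul, mul_assoc, coeff_X_mul, h₁, h₂]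

lemma coeff_snd_laxStep (z : ℂ) (hp₂ : p.2.natDegree ≤ n) :
    (laxStep z p).2.coeff (n + 1) = p.1.coeff (n + 1) - z.re * p.2.coeff n := by
  have h₂ : p.2.coeff (n + 1) = 0 := coeff_eq_zero_of_natDegree_lt (by omega)
  simp only [laxStep, sub_mul, mul_assoc, coeff_add, coeff_sub, coeff_C_mul, coeff_X_mul, h₂]
  ring

lemma eval_zero_fst_laxStep (z : ℂ) (p : ℝ[X] × ℝ[X]) :
    (laxStep z p).1.eval 0 = z.re * p.1.eval 0 := by
  simp [laxStep]

lemma natDegree_fst_laxStep_le (z : ℂ) (hp₁ : p.1.natDegree ≤ n + 1) (hp₂ : p.2.natDegree ≤ n) :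
    (laxStep z p).1.natDegree ≤ n + 2 := by
  have h₁ := natDegree_C_sub_C_mul_X_mul_le z.re z.im p.1
  have h₂ := natDegree_mul_le (p := X) (q := p.2)
  rw [natDegree_X] at h₂
  exact (natDegree_sub_le _ _).trans (max_le (by omega) (by omega))

lemma natDegree_snd_laxStep_le (z : ℂ) (hp₁ : p.1.natDegree ≤ n + 1) (hp₂ : p.2.natDegree ≤ n) :
    (laxStep z p).2.natDegree ≤ n + 1 :=
  natDegree_add_le_of_degree_le hp₁
    ((natDegree_C_sub_C_mul_X_mul_le z.im z.re p.2).trans (by omega))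

lemma aeval_I_snd_laxStep (hz : ‖z‖ = 1) (p : ℝ[X] × ℝ[X]) :
    aeval I (laxStep z p).2 = z * aeval I (laxStep z p).1 := by
  rw [laxStep, map_add, map_mul, aeval_I_C_im_sub_C_re_mul_X, map_sub, map_mul,
    aeval_I_C_re_sub_C_im_mul_X, map_mul, aeval_X]
  linear_combination -(aeval I p.1) * mul_conj_eq_one_of_norm_eq_one hz

lemma orthBelow_fst_laxStep (hp : IsOrthPair c n p) (hc0 : 0 < c) (hc1 : c < 1)
    (hval : valueAtI (momentFunctional c (n + 2)) (X * p.2) =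
      y * valueAtI (momentFunctional c (n + 2)) p.1) :
    OrthBelow (momentFunctional c (n + 2)) (n + 2) (laxStep y p).1 := by
  intro g hg
  have hsplit : (laxStep y p).1 * g = p.1 * ((C y.re - C y.im * X) * g) - X * p.2 * g := by
    simp only [laxStep]
    ring
  have hdeg := natDegree_C_sub_C_mul_X_mul_le y.re y.im g
  rw [hsplit, map_sub, hp.momentFunctional_fst_mul hc0 hc1 (by omega),
    hp.momentFunctional_X_mul_snd_mul hc0 hc1 (by omega), hval, map_mul (aeval I),
    aeval_I_C_re_sub_C_im_mul_X, map_mul conj, mul_left_comm, mul_assoc, sub_self]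

lemma orthBelow_X_mul_snd_laxStep (hp : IsOrthPair c n p) (hc0 : 0 < c) (hc1 : c < 1)
    (hy : ‖y‖ = 1) (hval : valueAtI (momentFunctional c (n + 2)) (X * p.2) =
      y * valueAtI (momentFunctional c (n + 2)) p.1) :
    OrthBelow (momentFunctional c (n + 2)) (n + 1) (X * (laxStep y p).2) := by
  intro g hg
  have hsplit : X * (laxStep y p).2 * g =
      p.1 * (X * g) + X * p.2 * ((C y.im - C y.re * X) * g) := by
    simp only [laxStep]
    ring
  have hdeg := natDegree_C_sub_C_mul_X_mul_le y.im y.re g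
  have hXg : (X * g).natDegree ≤ n + 2 :=
    natDegree_mul_le.trans (by have := natDegree_X_le (R := ℝ); omega)
  rw [hsplit, map_add, hp.momentFunctional_fst_mul hc0 hc1 hXg,
    hp.momentFunctional_X_mul_snd_mul hc0 hc1 (by omega), hval, map_mul (aeval I),
    map_mul (aeval I), aeval_X, aeval_I_C_im_sub_C_re_mul_X, map_mul conj, ← add_re, ← zero_re]
  congr 1
  linear_combination -I * conj (valueAtI (momentFunctional c (n + 2)) p.1) * aeval I g *
    mul_conj_eq_one_of_norm_eq_one hy

lemma fst_laxStep_ne_zero (hp : IsOrthPair c n p) (hc0 : 0 < c) (hc1 : c < 1) (hy : y ≠ 0) :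
    (laxStep y p).1 ≠ 0 := by
  intro h0
  have hre := eval_zero_fst_laxStep y p
  have him := coeff_fst_laxStep y hp.natDegree_fst_le hp.natDegree_snd_le
  rw [h0, eval_zero, zero_eq_mul] at hre
  rw [h0, coeff_zero, zero_eq_mul, neg_eq_zero] at him
  have hpos := hp.eval_zero_fst_mul_coeff_pos hc0 hc1
  exact hy (Complex.ext (hre.resolve_right (left_ne_zero_of_mul hpos.ne'))
    (him.resolve_right (right_ne_zero_of_mul (right_ne_zero_of_mul hpos.ne'))))

lemma isOrthPair_laxStep (hp : IsOrthPair c n p) (hc0 : 0 < c) (hc1 : c < 1) (hy : ‖y‖ = 1)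
    (hval : valueAtI (momentFunctional c (n + 2)) (X * p.2) =
      y * valueAtI (momentFunctional c (n + 2)) p.1) :
    IsOrthPair c (n + 1) (laxStep y p) where
  natDegree_fst_le := natDegree_fst_laxStep_le y hp.natDegree_fst_le hp.natDegree_snd_le
  natDegree_snd_le := natDegree_snd_laxStep_le y hp.natDegree_fst_le hp.natDegree_snd_le
  orthBelow_fst := orthBelow_fst_laxStep hp hc0 hc1 hval
  orthBelow_X_mul_snd := orthBelow_X_mul_snd_laxStep hp hc0 hc1 hy hval
  fst_ne_zero := fst_laxStep_ne_zero hp hc0 hc1 (norm_ne_zero_iff.1 (hy.trans_ne one_ne_zero))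

lemma re_mul_im_pos_of_isOrthPair_laxStep (hp : IsOrthPair c n p)
    (hp' : IsOrthPair c (n + 1) (laxStep y p)) (hc0 : 0 < c) (hc1 : c < 1) :
    0 < y.re * y.im := by
  have hpos := hp.eval_zero_fst_mul_coeff_pos hc0 hc1
  have hpos' := hp'.eval_zero_fst_mul_coeff_pos hc0 hc1
  rw [eval_zero_fst_laxStep, coeff_fst_laxStep y hp.natDegree_fst_le hp.natDegree_snd_le] at hpos'
  exact pos_of_mul_pos_left (hpos'.trans_eq (by ring)) hpos.le

end LaxStep

section PainleveRatio

/-- Both fractions in the discrete Painlevé equation are values of this ratio, up to a factor `-I`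
for the first: `(y - I x) / (I + x y) = -I (x + I y) / (I + x y)`. It is real on the unit circle. -/
def painleveRatio (x y : ℂ) : ℂ := (x + I * y) / (I + x * y)

variable {x y z : ℂ}

lemma conj_painleveRatio (hx : ‖x‖ = 1) (hy : ‖y‖ = 1) :
    conj (painleveRatio x y) = painleveRatio x y := by
  have hxy : I * (x * y) ≠ 0 := mul_ne_zero I_ne_zero
    (mul_ne_zero (norm_ne_zero_iff.1 (hx.trans_ne one_ne_zero))
      (norm_ne_zero_iff.1 (hy.trans_ne one_ne_zero)))
  have hx' := mul_conj_eq_one_of_norm_eq_one hx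
  have hy' := mul_conj_eq_one_of_norm_eq_one hy
  rw [painleveRatio, map_div₀, ← mul_div_mul_left _ _ hxy]
  simp only [map_add, map_mul, conj_I]
  congr 1
  · linear_combination I * y * hx' + x * hy' - x * (y * conj y) * I_sq
  · linear_combination I * (x * conj x) * hy' + I * hx' - x * y * I_sq

lemma ofReal_re_painleveRatio (hx : ‖x‖ = 1) (hy : ‖y‖ = 1) :
    ((painleveRatio x y).re : ℂ) = painleveRatio x y :=
  conj_eq_iff_re.1 (conj_painleveRatio hx hy)

lemma sq_sub_one_eq_of_norm_eq_one (hz : ‖z‖ = 1) : z ^ 2 - 1 = 2 * I * z.im * z := by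
  have hsub := sub_conj z
  push_cast at hsub
  linear_combination mul_conj_eq_one_of_norm_eq_one hz + z * hsub

lemma sq_add_one_eq_of_norm_eq_one (hz : ‖z‖ = 1) : z ^ 2 + 1 = 2 * z.re * z := by
  have hadd := add_conj z
  push_cast at hadd
  linear_combination -mul_conj_eq_one_of_norm_eq_one hz + z * hadd

-- For an orthogonal pair `(A, B)`, the lemma is applied to `q = conj (valueAtI φ A) * A(i)`.
lemma mul_conj_eq_I_mul {q : ℂ} (hx : ‖x‖ = 1) (hx0 : 0 < x.re) (hne : I + x * y ≠ 0) {D : ℝ}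
    (hD : painleveRatio x y = D) (hq : -q.im = D * (x * q).re) : y * conj q = I * x * q := by
  have hxx := mul_conj_eq_one_of_norm_eq_one hx
  have hy : y * (I - D * x) = I * D - x := by
    rw [painleveRatio, div_eq_iff hne] at hD
    linear_combination hD
  have hne' : I - D * x ≠ 0 := fun h => by
    have hDx : D * x.re = 0 := by simpa using congrArg re h
    rw [(mul_eq_zero.1 hDx).resolve_right hx0.ne', ofReal_zero, zero_mul, sub_zero] at h
    exact I_ne_zero h
  have hreal : I * (q - conj q) = D * (x * q + conj x * conj q) := by
    have hsub := sub_conj q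
    have hadd := add_conj (x * q)
    rw [map_mul] at hadd
    have hq' : (-q.im : ℂ) = D * ((x * q).re : ℂ) := by exact_mod_cast hq
    rw [hsub, hadd]
    push_cast
    linear_combination 2 * q.im * I_sq + 2 * hq'
  refine mul_right_cancel₀ hne' ?_
  linear_combination conj q * hy - I * x * hreal - D * I * conj q * hxx - x * conj q * I_sq

lemma re_mul_conj_pos_of_mul_conj_eq_I_mul {q : ℂ} (hx : ‖x‖ = 1) (hre : 0 < q.re) (him : q.im < 0)
    (hq : y * conj q = I * x * q) : 0 < (y * conj x).re := by
  have hsq : y * conj x * normSq q = I * q * q := by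
    rw [normSq_eq_conj_mul_self]
    linear_combination conj x * q * hq + I * q ^ 2 *
      mul_conj_eq_one_of_norm_eq_one hx
  have hre_sq : (y * conj x).re * normSq q = 2 * (q.re * -q.im) := by
    rw [← re_mul_ofReal, hsq]
    simp only [mul_re, mul_im, I_re, I_im]
    ring
  refine pos_of_mul_pos_left ?_ (normSq_nonneg q)
  rw [hre_sq]
  exact mul_pos two_pos (mul_pos hre (neg_pos.2 him))

end PainleveRatio

section Recurrence

variable {γ : ℝ} {x : ℕ → ℂ}

lemma im_mul_painleveRatio_eq (hP : PainleveP γ x) (hunit : ∀ n, ‖x n‖ = 1) (n : ℕ) :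
    ((n : ℝ) + 1) * (x n).im * (painleveRatio (x n) (x (n + 1))).re =
      n * (x n).re * (painleveRatio (x (n - 1)) (x n)).re + γ / 2 := by
  have hne : x n ≠ 0 := norm_ne_zero_iff.1 ((hunit n).trans_ne one_ne_zero)
  have hfst : (x (n + 1) - I * x n) / (I + x n * x (n + 1)) =
      -I * painleveRatio (x n) (x (n + 1)) := by
    rw [painleveRatio, ← mul_div_assoc]
    congr 1
    linear_combination x (n + 1) * I_sq
  have heq := (hP n).2.2
  rw [sq_sub_one_eq_of_norm_eq_one (hunit n), sq_add_one_eq_of_norm_eq_one (hunit n), hfst,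
    ← painleveRatio,
    ← ofReal_re_painleveRatio (hunit n) (hunit (n + 1)),
    ← ofReal_re_painleveRatio (hunit (n - 1)) (hunit n)] at heq
  have hcancel := mul_right_cancel₀ (mul_ne_zero two_ne_zero hne) (show
    (((n : ℝ) + 1) * (x n).im * (painleveRatio (x n) (x (n + 1))).re : ℂ) * (2 * x n) =
      (n * (x n).re * (painleveRatio (x (n - 1)) (x n)).re + γ / 2) * (2 * x n) by
    push_cast
    linear_combination heq + 2 * (n + 1) * (x n).im * x n *
      (painleveRatio (x n) (x (n + 1))).re * I_sq)
  exact_mod_cast hcancel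

lemma natDegree_laxPair_succ_le (x : ℕ → ℂ) (n : ℕ) :
    (laxPair x (n + 1)).1.natDegree ≤ n + 1 ∧ (laxPair x (n + 1)).2.natDegree ≤ n := by
  induction n with
  | zero =>
    have hlin := natDegree_C_sub_C_mul_X_mul_le (x 0).re (x 0).im 1
    rw [natDegree_one] at hlin
    rw [laxPair, laxPair, laxStep, mul_zero, mul_zero, sub_zero, add_zero]
    exact ⟨hlin, natDegree_one.le⟩
  | succ n ih =>
    exact ⟨natDegree_fst_laxStep_le _ ih.1 ih.2, natDegree_snd_laxStep_le _ ih.1 ih.2⟩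

lemma coeff_laxPair_mul_painleveRatio (hP : PainleveP γ x) (hunit : ∀ n, ‖x n‖ = 1) (n : ℕ) :
    (n + 1) * (laxPair x (n + 1)).1.coeff (n + 1) * (painleveRatio (x n) (x (n + 1))).re =
      -(γ / 2) * (laxPair x (n + 1)).2.coeff n := by
  have hrec := im_mul_painleveRatio_eq hP hunit
  induction n with
  | zero =>
    have h0 := hrec 0
    have hA : (laxPair x 1).1.coeff 1 = -(x 0).im := by simp [laxPair, laxStep]
    have hB : (laxPair x 1).2.coeff 0 = 1 := by simp [laxPair, laxStep]
    rw [hA, hB]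
    push_cast at h0 ⊢
    linear_combination -h0
  | succ n ih =>
    obtain ⟨hA, hB⟩ := natDegree_laxPair_succ_le x n
    rw [laxPair, coeff_fst_laxStep _ hA hB, coeff_snd_laxStep _ hB]
    have hn := hrec (n + 1)
    rw [Nat.add_sub_cancel] at hn
    push_cast at hn ⊢
    linear_combination -(laxPair x (n + 1)).1.coeff (n + 1) * hn - (x (n + 1)).re * ih

end Recurrence

section Separatrix

variable {c : ℝ} {n : ℕ} {p : ℝ[X] × ℝ[X]} {x y : ℂ}

lemma IsOrthPair.valueAtI_X_mul_snd_and_re_pos (hp : IsOrthPair c n p) (hc0 : 0 < c) (hc1 : c < 1)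
    (hx : ‖x‖ = 1) (hx0 : 0 < x.re) (hI : aeval I p.2 = x * aeval I p.1) (hy : ‖y‖ = 1)
    (hne : I + x * y ≠ 0)
    (hR : (n + 1) * p.1.coeff (n + 1) * (painleveRatio x y).re = -c * p.2.coeff n) :
    valueAtI (momentFunctional c (n + 2)) (X * p.2) =
      y * valueAtI (momentFunctional c (n + 2)) p.1 ∧ 0 < (y * conj x).re := by
  have hA := hp.natDegree_fst_le
  have hB := hp.natDegree_snd_le
  have hxx := mul_conj_eq_one_of_norm_eq_one hx
  have hcross := hp.conj_valueAtI_mul_aeval_fst hc0 hc1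
  have hJA := hp.momentFunctional_fst_mul_fst_pos hc0 hc1
  have hKB := hp.momentFunctional_X_mul_snd_mul_snd_eq hc0 hc1 hR
  have hKB_pos := hp.momentFunctional_X_mul_snd_mul_snd_pos hc0 hc1
  rw [hp.momentFunctional_fst_mul hc0 hc1 (by omega)] at hJA hKB
  rw [hp.momentFunctional_X_mul_snd_mul hc0 hc1 (by omega)] at hKB hKB_pos
  set j := valueAtI (momentFunctional c (n + 2)) p.1
  set k := valueAtI (momentFunctional c (n + 2)) (X * p.2)
  set α := aeval I p.1
  set q := conj j * α with hq
  have hα : α ≠ 0 := fun hα => by simp [hq, hα] at hJA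
  have hp₂ : p.2 ≠ 0 := fun h0 => mul_ne_zero (left_ne_zero_of_mul_eq_one hxx) hα
    (by rw [← hI, h0, map_zero])
  have hkβ : conj k * aeval I p.2 = -I * conj q := by
    rw [hI, mul_left_comm, hcross, hI, mul_left_comm (conj j), ← hq, map_mul]
    linear_combination -I * conj q * hxx
  have hjβ : conj j * aeval I p.2 = x * q := by rw [hI, mul_left_comm]
  have hq_im : (conj k * aeval I p.2).re = -q.im := by rw [hkβ]; simp
  have hyq := mul_conj_eq_I_mul hx hx0 hne (ofReal_re_painleveRatio hx hy).symm
    (by rw [← hq_im, hKB, hjβ])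
  refine ⟨mul_right_cancel₀ (star_ne_zero.2 hα) ?_,
    re_mul_conj_pos_of_mul_conj_eq_I_mul hx hJA (by linarith [hKB_pos hp₂]) hyq⟩
  calc k * conj α = conj (conj k * α) := by rw [map_mul, conj_conj]
    _ = I * x * q := by rw [hcross, hjβ, map_mul, map_neg, conj_I, conj_conj, neg_neg, mul_assoc]
    _ = y * j * conj α := by rw [← hyq, hq, map_mul, conj_conj, mul_assoc]

lemma IsOrthPair.laxStep_and_re_pos_and_im_pos (hp : IsOrthPair c n p) (hc0 : 0 < c) (hc1 : c < 1)
    (hx : ‖x‖ = 1) (hx_re : 0 < x.re) (hx_im : 0 < x.im) (hI : aeval I p.2 = x * aeval I p.1)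
    (hy : ‖y‖ = 1) (hne : I + x * y ≠ 0)
    (hR : (n + 1) * p.1.coeff (n + 1) * (painleveRatio x y).re = -c * p.2.coeff n) :
    IsOrthPair c (n + 1) (laxStep y p) ∧ 0 < y.re ∧ 0 < y.im := by
  obtain ⟨hval, hpos⟩ := hp.valueAtI_X_mul_snd_and_re_pos hc0 hc1 hx hx_re hI hy hne hR
  have hp' := isOrthPair_laxStep hp hc0 hc1 hy hval
  have hmul := re_mul_im_pos_of_isOrthPair_laxStep hp hp' hc0 hc1
  refine ⟨hp', ?_⟩
  simp only [mul_re, conj_re, conj_im, mul_neg, sub_neg_eq_add] at hpos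
  refine (mul_pos_iff.1 hmul).resolve_right fun ⟨hre, him⟩ => ?_
  have := mul_neg_of_neg_of_pos hre hx_re
  have := mul_neg_of_neg_of_pos him hx_im
  linarith

lemma cos_pi_mul_div_two_pos (hc0 : 0 < c) (hc1 : c < 1) : 0 < Real.cos (Real.pi * c / 2) :=
  Real.cos_pos_of_mem_Ioo ⟨by nlinarith [Real.pi_pos], by nlinarith [Real.pi_pos]⟩

lemma sin_pi_mul_div_two_pos (hc0 : 0 < c) (hc1 : c < 1) : 0 < Real.sin (Real.pi * c / 2) :=
  Real.sin_pos_of_pos_of_lt_pi (by positivity) (by nlinarith [Real.pi_pos])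

lemma momentFunctional_one_fst_laxPair_one (hc0 : 0 < c) (hc1 : c < 1) {x : ℕ → ℂ}
    (hre : (x 0).re = Real.cos (Real.pi * c / 2)) (him : (x 0).im = Real.sin (Real.pi * c / 2)) :
    momentFunctional c 1 (laxPair x 1).1 = 0 := by
  have hA : (laxPair x 1).1 = (x 0).re • X ^ 0 - (x 0).im • X ^ 1 := by
    rw [laxPair, laxPair, laxStep, smul_eq_C_mul, smul_eq_C_mul]
    ring
  have hsin : Real.sin (Real.pi * (1 - c) / 2) = Real.cos (Real.pi * c / 2) := by
    rw [← Real.sin_pi_div_two_sub]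
    ring_nf
  have hsin' : Real.sin (Real.pi * (2 - c) / 2) = Real.sin (Real.pi * c / 2) := by
    rw [← Real.sin_pi_sub]
    ring_nf
  have hsin_ne := (sin_pi_mul_div_two_pos hc0 hc1).ne'
  have hcos_ne := (cos_pi_mul_div_two_pos hc0 hc1).ne'
  have hM₀ := mellinMoment_one (s := (0 : ℕ) + 1 - c)
    (by push_cast; linarith) (by push_cast; linarith)
  have hM₁ := mellinMoment_one (s := (1 : ℕ) + 1 - c)
    (by push_cast; linarith) (by push_cast; linarith)
  rw [hA, map_sub, map_smul, map_smul, momentFunctional_X_pow, momentFunctional_X_pow, hre, him,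
    hM₀, hM₁, Nat.cast_zero, Nat.cast_one, zero_add, one_add_one_eq_two, hsin, hsin', smul_eq_mul,
    smul_eq_mul]
  field_simp
  ring

lemma isOrthPair_laxPair_one (hc0 : 0 < c) (hc1 : c < 1) {x : ℕ → ℂ}
    (hre : (x 0).re = Real.cos (Real.pi * c / 2)) (him : (x 0).im = Real.sin (Real.pi * c / 2)) :
    IsOrthPair c 0 (laxPair x 1) where
  natDegree_fst_le := (natDegree_laxPair_succ_le x 0).1
  natDegree_snd_le := (natDegree_laxPair_succ_le x 0).2
  orthBelow_fst := fun g hg => by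
    rw [eq_C_of_natDegree_eq_zero (Nat.lt_one_iff.1 hg), mul_comm, ← smul_eq_C_mul, map_smul,
      momentFunctional_one_fst_laxPair_one hc0 hc1 hre him, smul_zero]
  orthBelow_X_mul_snd := fun _ hg => (Nat.not_lt_zero _ hg).elim
  fst_ne_zero := fun h0 => by
    have heval := eval_zero_fst_laxStep (x 0) (laxPair x 0)
    rw [← laxPair, h0, eval_zero, laxPair, eval_one, mul_one] at heval
    exact (cos_pi_mul_div_two_pos hc0 hc1).ne (heval.trans hre)

lemma isOrthPair_laxPair_and_re_pos_and_im_pos {γ : ℝ} (hγ0 : 0 < γ) (hγ2 : γ < 2) {x : ℕ → ℂ}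
    (hunit : ∀ n, ‖x n‖ = 1) (hP : PainleveP γ x) (hx0 : x 0 = exp (I * (γ * Real.pi / 4)))
    (n : ℕ) : IsOrthPair (γ / 2) n (laxPair x (n + 1)) ∧ 0 < (x n).re ∧ 0 < (x n).im := by
  have hc0 : 0 < γ / 2 := by linarith
  have hc1 : γ / 2 < 1 := by linarith
  induction n with
  | zero =>
    have hexp : x 0 = exp ((Real.pi * (γ / 2) / 2 : ℝ) * I) := by
      rw [hx0]
      push_cast
      ring_nf
    have hre : (x 0).re = Real.cos (Real.pi * (γ / 2) / 2) := by rw [hexp, exp_ofReal_mul_I_re]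
    have him : (x 0).im = Real.sin (Real.pi * (γ / 2) / 2) := by rw [hexp, exp_ofReal_mul_I_im]
    exact ⟨isOrthPair_laxPair_one hc0 hc1 hre him, hre ▸ cos_pi_mul_div_two_pos hc0 hc1,
      him ▸ sin_pi_mul_div_two_pos hc0 hc1⟩
  | succ n ih =>
    obtain ⟨hp, hre, him⟩ := ih
    exact hp.laxStep_and_re_pos_and_im_pos hc0 hc1 (hunit n) hre him
      (aeval_I_snd_laxStep (hunit n) _) (hunit (n + 1)) (hP n).1
      (coeff_laxPair_mul_painleveRatio hP hunit n)

lemma exists_eq_exp_of_re_pos_of_im_pos (hx : ‖x‖ = 1) (hre : 0 < x.re) (him : 0 < x.im) :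
    ∃ θ : ℝ, θ ∈ Ioo 0 (Real.pi / 2) ∧ x = exp (I * θ) := by
  refine ⟨arg x, ⟨(arg_nonneg_iff.2 him.le).lt_of_ne fun h => ?_,
    (abs_lt.1 (abs_arg_lt_pi_div_two_iff.2 (Or.inl hre))).2⟩, ?_⟩
  · exact him.ne' (arg_eq_zero_iff.1 h.symm).2
  · have hpolar := norm_mul_exp_arg_mul_I x
    rw [hx, ofReal_one, one_mul, mul_comm] at hpolar
    exact hpolar.symm

end Separatrix

end PainleveP

/-- The unitary solution of the discrete Painlevé equation (P) with
`x_0 = e^{iγπ/4}` stays in the open arc `{e^{iθ} : 0 < θ < π/2}`. -/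
theorem painleve_separatrix_stays_in_arc (γ : ℝ) (hγ0 : 0 < γ) (hγ2 : γ < 2)
    (x : ℕ → ℂ) (hunit : ∀ n : ℕ, ‖x n‖ = 1)
    (hP : PainleveP (γ : ℂ) x)
    (hx0 : x 0 = Complex.exp (Complex.I * (γ * Real.pi / 4))) :
    ∀ n : ℕ, ∃ θ : ℝ, θ ∈ Set.Ioo 0 (Real.pi / 2) ∧
      x n = Complex.exp (Complex.I * θ) := by
  intro n
  obtain ⟨-, hre, him⟩ :=
    PainleveP.isOrthPair_laxPair_and_re_pos_and_im_pos hγ0 hγ2 hunit hP hx0 n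
  exact PainleveP.exists_eq_exp_of_re_pos_of_im_pos (hunit n) hre him

end
end

section
/- Let γ ∈ ℝ and let R : ℤ + iℤ → ℝ be nowhere zero. If R satisfies equation (square) with parameter γ at every z ∈ V_l and equation (Ri) at every z ∈ V_int, then the function R̃(z) = 1/R(z) satisfies equation (square) with parameter 2 − γ at every z ∈ V_l and equation (Ri) at every z ∈ V_int. -/
noncomputable section

/-- Equation (square) with parameter `γ` at `z = N + iM` (the lattice `ℤ + iℤ` is
indexed by pairs `(N, M)`). -/
def SquareEq (γ : ℝ) (R : ℤ → ℤ → ℝ) (N M : ℤ) : Prop :=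
  R N M * R (N+1) M * (-2*(M : ℝ) - γ) +
  R (N+1) M * R (N+1) (M+1) * (2*((N : ℝ)+1) - γ) +
  R (N+1) (M+1) * R N (M+1) * (2*((M : ℝ)+1) - γ) +
  R N (M+1) * R N M * (-2*(N : ℝ) - γ) = 0

/-- Equation (Ri) at `z = N + iM`. -/
def RiEq (R : ℤ → ℤ → ℝ) (N M : ℤ) : Prop :=
  ((N + M : ℤ) : ℝ) * (R N M ^ 2 - R (N+1) M * R N (M-1)) * (R N (M+1) + R (N+1) M) +
  ((M - N : ℤ) : ℝ) * (R N M ^ 2 - R N (M+1) * R (N+1) M) * (R (N+1) M + R N (M-1)) = 0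

/-- Membership `N + iM ∈ V_l = V ∪ {-k + i(k-1) : k ∈ ℕ}`. -/
def memVl (N M : ℤ) : Prop := |N| ≤ M ∨ (N ≤ -1 ∧ M = -N - 1)

/-!
Both equations are dualised pointwise. Dividing (square) by the product of its four values moves
each coefficient to the inverses on the opposite edge of the square, and replacing `γ` by `2 - γ`
turns each coefficient into minus the opposite one. In (Ri) each of the two summands is multiplied
by the same factor `-1 / (R(z)² R(z+1)² R(z-i) R(z+i))` when `R` is replaced by `1 / R`.
-/

section Duality

/-- The left-hand side of equation (square) with parameter `γ` at `z = N + iM`, for a function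
with values in an arbitrary commutative ring. -/
def squareLHS {A : Type*} [CommRing A] (γ : A) (R : ℤ → ℤ → A) (N M : ℤ) : A :=
  R N M * R (N + 1) M * (-2 * (M : A) - γ) +
  R (N + 1) M * R (N + 1) (M + 1) * (2 * ((N : A) + 1) - γ) +
  R (N + 1) (M + 1) * R N (M + 1) * (2 * ((M : A) + 1) - γ) +
  R N (M + 1) * R N M * (-2 * (N : A) - γ)

/-- The left-hand side of equation (Ri) at `z = N + iM`, for a function with values in an
arbitrary commutative ring. -/
def riLHS {A : Type*} [CommRing A] (R : ℤ → ℤ → A) (N M : ℤ) : A :=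
  ((N + M : ℤ) : A) * (R N M ^ 2 - R (N + 1) M * R N (M - 1)) * (R N (M + 1) + R (N + 1) M) +
  ((M - N : ℤ) : A) * (R N M ^ 2 - R N (M + 1) * R (N + 1) M) * (R (N + 1) M + R N (M - 1))

variable {K : Type*} [Field K]

theorem inv_mul_inv_cyclic_sum {a b c d : K} (ha : a ≠ 0) (hb : b ≠ 0) (hc : c ≠ 0) (hd : d ≠ 0)
    (p q r s : K) :
    a⁻¹ * b⁻¹ * p + b⁻¹ * c⁻¹ * q + c⁻¹ * d⁻¹ * r + d⁻¹ * a⁻¹ * s =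
      (a * b * r + b * c * s + c * d * p + d * a * q) / (a * b * c * d) := by
  field_simp
  ring

theorem inv_sq_sub_inv_mul_inv_mul_inv_add_inv {a b c d : K}
    (ha : a ≠ 0) (hb : b ≠ 0) (hc : c ≠ 0) (hd : d ≠ 0) :
    (a⁻¹ ^ 2 - b⁻¹ * c⁻¹) * (d⁻¹ + b⁻¹) =
      -((a ^ 2 - b * c) * (d + b)) / (a ^ 2 * b ^ 2 * c * d) := by
  field_simp
  ring

theorem squareLHS_inv (γ : K) {R : ℤ → ℤ → K} {N M : ℤ} (h₀₀ : R N M ≠ 0)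
    (h₁₀ : R (N + 1) M ≠ 0) (h₁₁ : R (N + 1) (M + 1) ≠ 0) (h₀₁ : R N (M + 1) ≠ 0) :
    squareLHS (2 - γ) R⁻¹ N M =
      -squareLHS γ R N M / (R N M * R (N + 1) M * R (N + 1) (M + 1) * R N (M + 1)) := by
  simp only [squareLHS, Pi.inv_apply]
  rw [inv_mul_inv_cyclic_sum h₀₀ h₁₀ h₁₁ h₀₁]
  ring

theorem riLHS_inv {R : ℤ → ℤ → K} {N M : ℤ} (h : R N M ≠ 0) (h_right : R (N + 1) M ≠ 0)
    (h_below : R N (M - 1) ≠ 0) (h_above : R N (M + 1) ≠ 0) :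
    riLHS R⁻¹ N M =
      -riLHS R N M / (R N M ^ 2 * R (N + 1) M ^ 2 * R N (M - 1) * R N (M + 1)) := by
  have first_term := inv_sq_sub_inv_mul_inv_mul_inv_add_inv h h_right h_below h_above
  have second_term := inv_sq_sub_inv_mul_inv_mul_inv_add_inv h h_right h_above h_below
  simp only [riLHS, Pi.inv_apply]
  linear_combination ((N + M : ℤ) : K) * first_term + ((M - N : ℤ) : K) * second_term

theorem dual_radius_function_general (γ : K) {R : ℤ → ℤ → K} (hR : ∀ N M : ℤ, R N M ≠ 0)
    (N M : ℤ) :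
    (squareLHS (2 - γ) R⁻¹ N M = 0 ↔ squareLHS γ R N M = 0) ∧
    (riLHS R⁻¹ N M = 0 ↔ riLHS R N M = 0) := by
  constructor
  · simp [squareLHS_inv γ, hR]
  · simp [riLHS_inv, hR]

end Duality

/-- Duality: if `R` solves (square) with parameter `γ` on `V_l` and (Ri) on `V_int`,
then `R̃ = 1/R` solves (square) with parameter `2 - γ` on `V_l` and (Ri) on `V_int`. -/
theorem dual_radius_function (γ : ℝ) (R : ℤ → ℤ → ℝ)
    (hR : ∀ N M : ℤ, R N M ≠ 0)
    (hsq : ∀ N M : ℤ, memVl N M → SquareEq γ R N M)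
    (hRi : ∀ N M : ℤ, |N| < M → RiEq R N M) :
    (∀ N M : ℤ, memVl N M → SquareEq (2 - γ) (fun N' M' => 1 / R N' M') N M) ∧
    (∀ N M : ℤ, |N| < M → RiEq (fun N' M' => 1 / R N' M') N M) := by
  simp only [one_div]
  exact ⟨fun N M h => (dual_radius_function_general γ hR N M).1.2 (hsq N M h),
    fun N M h => (dual_radius_function_general γ hR N M).2.2 (hRi N M h)⟩

end
end
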